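/- Let j ≥ 2 be an integer and let s ∈ ℝ satisfy −j + 1/2 ≤ s ≤ −j/2. There exists a constant C > 0 depending only on j and s (in particular independent of λ) such that for every λ ≥ 1 and all nonnegative measurable f₁, f₂ : Ż_λ × ℝ → [0,∞], the function g(k,τ) := |k|·⟨σ⟩^{−1}·(f₁∗f₂)(k,τ) on Ż_λ × ℝ satisfies: the Z^s norm of g is at most C times the product of the Z^s norms of f₁ and f₂. -/

import Mathlib

/-!
# The bilinear estimate in `Z^s` for the higher-order KdV equation

The three regions in the definition of the `X^s` norm carry the weights
`⟨k⟩^s ⟨σ⟩^{1-p}`, `⟨k⟩^{(1-2j)s-1} ⟨σ⟩^{s+1}` and `⟨k⟩^{-r} ⟨σ⟩^r`, with `p = 1/(2j)` and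
`r = s/j + 1`. Two neighbouring weights are comparable where their regions meet, so that the norm is
equivalent to a single weighted `L²` norm. In the variables `x = log ⟨k⟩`, `y = log ⟨σ⟩` the logarithm
of that weight is the piecewise linear function `om` (`XSn_le`, `le_XSn`).

If `k = k₁ + k₂` then `σ = σ₁ + σ₂ + (k₁ⁿ + k₂ⁿ - kⁿ)` with `n = 2j + 1`, and the last bracket has size
`|k_min| |k_max|^{2j}` (`res_bounds`). Hence one of the three modulations is at least of that size
(`wave_triple`). After taking logarithms everything becomes a system of linear inequalities, and a case
analysis (low–high or high–high interaction; largest modulation on the output or on an input) shows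
that the weighted integrand of the convolution is dominated by one of a few model expressions
(`alt_X`, `alt_Y`, `Alt.dom`). These are

* kernels containing two of the three modulations, whose square integrability reduces, after
  integration in `τ`, to counting lattice points near a level set of the polynomial
  `z ↦ zⁿ + (k - z)ⁿ` (`count_sum`);
* kernels `min(1,|k|)^{-p} ⟨k⟩^{-3/4}` in one of the input frequencies, square summable over the lattice
  (`theta_sum`), pairing an `L²` factor with an `L²_k L¹_τ` factor;
* the same functions of the frequency times `⟨σ⟩^{-1/2-p/4}`.

Both lattice sums are bounded uniformly in `λ ≥ 1`. Cauchy–Schwarz in the form of `bil_out`, `bil_in`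
and `bil_mixed` then bounds the sum `HH` of these expressions in `L²` (`HH_bound`), which is the `X^s`
part of the estimate.

For the `Y^s` part, the output is bounded by `rho · HH + TT` (`Y_bound`). The function `rho` of the
modulation is uniformly in `L²_τ`, so the first term is controlled by Cauchy–Schwarz in `τ`
(`Y2_rho`). The term `TT` arises at very large output modulation, where `⟨σ⟩^{-1}` alone pays for the
interaction; it is bounded by the `Y^s` norms of the inputs (`Y2_TT`).

All norms of nonnegative functions take values in `[0,∞]`, so that no integrability has to be checked;
weights are written as exponentials `E t = e^t` of their logarithms.
-/

open MeasureTheory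
open scoped ENNReal

noncomputable section

/-- Japanese bracket `⟨x⟩ = (1+x²)^{1/2}`. -/
def jap (x : ℝ) : ℝ := Real.sqrt (1 + x ^ 2)

/-- Modulation `σ = τ − k^{2j+1}` at the frequency `k = m/λ ∈ Ż_λ`. -/
def sigL (j : ℕ) (lam : ℝ) (m : ℤ) (τ : ℝ) : ℝ := τ - ((m : ℝ) / lam) ^ (2 * j + 1)

/-- Convolution on `Ż_λ × ℝ` (frequencies indexed by `m ∈ ℤ∖{0}`, `k = m/λ`):
`(f∗g)(k,τ) = (1/λ)Σ_{k₁≠0, k−k₁≠0} ∫ f(k₁,τ₁) g(k−k₁,τ−τ₁) dτ₁`. -/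
def convL (lam : ℝ) (f g : ℤ → ℝ → ℝ≥0∞) (m : ℤ) (τ : ℝ) : ℝ≥0∞ :=
  ENNReal.ofReal (1 / lam) *
    ∑' m₁ : ℤ, if m₁ ≠ 0 ∧ m - m₁ ≠ 0 then ∫⁻ τ₁, f m₁ τ₁ * g (m - m₁) (τ - τ₁) else 0

/-- `L²_λ` norm: `((1/λ) Σ_k ∫ f(k,τ)² dτ)^{1/2}`. -/
def L2L (lam : ℝ) (f : ℤ → ℝ → ℝ≥0∞) : ℝ≥0∞ :=
  (ENNReal.ofReal (1 / lam) * ∑' m : ℤ, ∫⁻ τ, (f m τ) ^ 2) ^ (1 / 2 : ℝ)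

/-- `X^{s,b}` norm: the `L²_λ` norm of `⟨k⟩^s ⟨σ⟩^b f(k,τ)`. -/
def Xn (j : ℕ) (lam s b : ℝ) (f : ℤ → ℝ → ℝ≥0∞) : ℝ≥0∞ :=
  L2L lam (fun m τ =>
    ENNReal.ofReal (jap ((m : ℝ) / lam) ^ s * jap (sigL j lam m τ) ^ b) * f m τ)

/-- `Y^s` norm: `((1/λ) Σ_k ⟨k⟩^{2s} (∫ f(k,τ) dτ)²)^{1/2}`. -/
def Yn (lam s : ℝ) (f : ℤ → ℝ → ℝ≥0∞) : ℝ≥0∞ :=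
  (ENNReal.ofReal (1 / lam) *
    ∑' m : ℤ, ENNReal.ofReal (jap ((m : ℝ) / lam) ^ (2 * s)) * (∫⁻ τ, f m τ) ^ 2) ^
    (1 / 2 : ℝ)

/-- `D₁ = {(k,τ): |k| ≥ 1, |σ| ≤ (2(2j+1)/3)|k|^{2j}}`. -/
def D1 (j : ℕ) (lam : ℝ) : Set (ℤ × ℝ) :=
  {p | 1 ≤ |(p.1 : ℝ) / lam| ∧
    |sigL j lam p.1 p.2| ≤ 2 * (2 * (j : ℝ) + 1) / 3 * |(p.1 : ℝ) / lam| ^ (2 * j)}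

/-- `D₂ = {(k,τ): |k| ≥ 1, (2(2j+1)/3)|k|^{2j} < |σ| ≤ 2(2j+1)|k|^{2j+1}}`. -/
def D2 (j : ℕ) (lam : ℝ) : Set (ℤ × ℝ) :=
  {p | 1 ≤ |(p.1 : ℝ) / lam| ∧
    2 * (2 * (j : ℝ) + 1) / 3 * |(p.1 : ℝ) / lam| ^ (2 * j) < |sigL j lam p.1 p.2| ∧
    |sigL j lam p.1 p.2| ≤ 2 * (2 * (j : ℝ) + 1) * |(p.1 : ℝ) / lam| ^ (2 * j + 1)}

/-- `D₃ = {(k,τ): |k| ≥ 1, |σ| > 2(2j+1)|k|^{2j+1}}`. -/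
def D3 (j : ℕ) (lam : ℝ) : Set (ℤ × ℝ) :=
  {p | 1 ≤ |(p.1 : ℝ) / lam| ∧
    2 * (2 * (j : ℝ) + 1) * |(p.1 : ℝ) / lam| ^ (2 * j + 1) < |sigL j lam p.1 p.2|}

/-- `D₄ = {(k,τ): 1/λ ≤ |k| ≤ 1, |σ| > 2(2j+1)|k|^{2j+1}}`. -/
def D4 (j : ℕ) (lam : ℝ) : Set (ℤ × ℝ) :=
  {p | 1 / lam ≤ |(p.1 : ℝ) / lam| ∧ |(p.1 : ℝ) / lam| ≤ 1 ∧
    2 * (2 * (j : ℝ) + 1) * |(p.1 : ℝ) / lam| ^ (2 * j + 1) < |sigL j lam p.1 p.2|}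

/-- `D₅ = {(k,τ): 1/λ ≤ |k| ≤ 1, |σ| ≤ 2(2j+1)|k|^{2j+1}}`. -/
def D5 (j : ℕ) (lam : ℝ) : Set (ℤ × ℝ) :=
  {p | 1 / lam ≤ |(p.1 : ℝ) / lam| ∧ |(p.1 : ℝ) / lam| ≤ 1 ∧
    |sigL j lam p.1 p.2| ≤ 2 * (2 * (j : ℝ) + 1) * |(p.1 : ℝ) / lam| ^ (2 * j + 1)}

/-- Restriction `1_D f` of `f` to a region `D`. -/
def restr (D : Set (ℤ × ℝ)) (f : ℤ → ℝ → ℝ≥0∞) : ℤ → ℝ → ℝ≥0∞ :=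
  fun m τ => Set.indicator D (fun p => f p.1 p.2) (m, τ)

/-- `X^s` norm: `‖1_{D₁∪D₅}f‖_{X^{s,(2j−1)/(2j)}} + ‖1_{D₂}f‖_{X^{(1−2j)s−1,s+1}}
  + ‖1_{D₃∪D₄}f‖_{X^{−s/j−1,s/j+1}}`. -/
def XSn (j : ℕ) (lam s : ℝ) (f : ℤ → ℝ → ℝ≥0∞) : ℝ≥0∞ :=
  Xn j lam s ((2 * (j : ℝ) - 1) / (2 * (j : ℝ))) (restr (D1 j lam ∪ D5 j lam) f)
  + Xn j lam ((1 - 2 * (j : ℝ)) * s - 1) (s + 1) (restr (D2 j lam) f)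
  + Xn j lam (-s / (j : ℝ) - 1) (s / (j : ℝ) + 1) (restr (D3 j lam ∪ D4 j lam) f)

/-- `Z^s` norm: `X^s` norm plus `Y^s` norm. -/
def Zn (j : ℕ) (lam s : ℝ) (f : ℤ → ℝ → ℝ≥0∞) : ℝ≥0∞ :=
  XSn j lam s f + Yn lam s f

/-! ### The glued weight in logarithmic variables -/

/-- Admissible parameters: `J` is the integer `j` as a real number, `p = 1/(2j)` and
`r = s/j + 1`. -/
structure Par (J p s r : ℝ) : Prop where
  hJ : 2 ≤ J
  hp : 2 * J * p = 1
  hr : r = 2 * p * s + 1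
  h1 : -J + 1 / 2 ≤ s
  h2 : s ≤ -J / 2

lemma Par.p_pos {J p s r : ℝ} (P : Par J p s r) : 0 < p := by
  have := P.hJ; have := P.hp
  by_contra h
  nlinarith

lemma Par.p_le {J p s r : ℝ} (P : Par J p s r) : p ≤ 1 / 4 := by
  have := P.hJ; have := P.hp; have := P.p_pos
  nlinarith

lemma Par.r_ge {J p s r : ℝ} (P : Par J p s r) : p ≤ r := by
  have := P.hJ; have := P.hp; have := P.p_pos; have := P.hr; have := P.h1
  nlinarith

lemma Par.r_le {J p s r : ℝ} (P : Par J p s r) : r ≤ 1 / 2 := by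
  have := P.hJ; have := P.hp; have := P.p_pos; have := P.hr; have := P.h2
  nlinarith

lemma Par.Jr {J p s r : ℝ} (P : Par J p s r) : 2 * J * r = 2 * s + 2 * J := by
  have := P.hp; have := P.hr
  subst r
  linear_combination (2 * s) * this

lemma Par.s_le {J p s r : ℝ} (P : Par J p s r) : s ≤ -1 := by
  have := P.hJ; have := P.h2; linarith

lemma Par.s_r {J p s r : ℝ} (P : Par J p s r) : s + 1 - r ≤ 0 := by
  have := P.s_le; have := P.r_ge; have := P.p_pos; linarith

/-- Logarithm of the weight of the `X^s` norm at `⟨k⟩ = eˣ`, `⟨σ⟩ = eʸ`; the three regimes of the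
norm are glued into one piecewise linear function. -/
def om (J p s r x y : ℝ) : ℝ :=
  min (s * x + (1 - p) * y) (max (((1 - 2 * J) * s - 1) * x + (s + 1) * y) (-r * x + r * y))

/-- Below the line `y = 2Jx`, up to `c`, the first weight is a lower bound for the glued one. -/
lemma om_low {J p s r : ℝ} (P : Par J p s r) {c x y : ℝ} (hc : 0 ≤ c)
    (h : y ≤ 2 * J * x + c) : s * x + (1 - p) * y - J * c ≤ om J p s r x y := by
  have hJ := P.hJ; have hp := P.p_pos; have := P.h1; have := P.s_le
  have hpJ := P.hp; have := P.p_le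
  refine le_min ?_ (le_max_of_le_left ?_)
  · nlinarith
  · have e1 : (-p - s) * (y - 2 * J * x) ≤ (-p - s) * c := by
      apply mul_le_mul_of_nonneg_left <;> linarith
    have e2 : (-p - s) * c ≤ J * c := by
      apply mul_le_mul_of_nonneg_right <;> linarith
    have e3 : 2 * J * p * x = x := by rw [hpJ]; ring
    linarith

/-- Above the line `y = 2Jx`, up to `c`, the second weight is a lower bound for the glued one. -/
lemma om_high2 {J p s r : ℝ} (P : Par J p s r) {c x y : ℝ} (hc : 0 ≤ c)
    (h : 2 * J * x - c ≤ y) :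
    ((1 - 2 * J) * s - 1) * x + (s + 1) * y - J * c ≤ om J p s r x y := by
  have hJ := P.hJ; have hp := P.p_pos; have := P.h1; have := P.s_le
  have hpJ := P.hp; have := P.p_le
  refine le_min ?_ (le_max_of_le_left ?_)
  · have e1 : (-p - s) * (2 * J * x - y) ≤ (-p - s) * c := by
      apply mul_le_mul_of_nonneg_left <;> linarith
    have e2 : (-p - s) * c ≤ J * c := by
      apply mul_le_mul_of_nonneg_right <;> linarith
    have e3 : 2 * J * p * x = x := by rw [hpJ]; ring
    linarith
  · nlinarith

/-- Above the line `y = 2Jx`, up to `c`, the third weight is a lower bound for the glued one. -/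
lemma om_high3 {J p s r : ℝ} (P : Par J p s r) {c x y : ℝ} (hc : 0 ≤ c) (hx : 0 ≤ x)
    (h : 2 * J * x - c ≤ y) : -r * x + r * y - J * c ≤ om J p s r x y := by
  have hJ := P.hJ; have hp := P.p_pos; have := P.h1; have := P.s_le
  have hpJ := P.hp; have := P.p_le; have := P.r_le; have hr := P.r_ge; have hJr := P.Jr
  refine le_min ?_ (le_max_of_le_right ?_)
  · have e1 : (1 - p - r) * (2 * J * x - y) ≤ (1 - p - r) * c := by
      apply mul_le_mul_of_nonneg_left <;> linarith
    have e2 : (1 - p - r) * c ≤ J * c := by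
      apply mul_le_mul_of_nonneg_right <;> linarith
    have e3 : 2 * J * p * x = x := by rw [hpJ]; ring
    have e4 : 2 * J * r * x = (2 * s + 2 * J) * x := by rw [hJr]
    have e5 : 0 ≤ (r - 1 - s) * x := mul_nonneg (by linarith [P.s_r]) hx
    linarith
  · nlinarith

/-- For modulations at least of size `⟨k⟩^{2j}` the weight is at least `⟨k⟩^{2s+2j}`, its value at
`⟨σ⟩ = ⟨k⟩^{2j}`. -/
lemma om_high {J p s r : ℝ} (P : Par J p s r) {c x y : ℝ} (hc : 0 ≤ c) (hx : 0 ≤ x)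
    (h : 2 * J * x - c ≤ y) : (2 * s + 2 * J) * x - J * c ≤ om J p s r x y := by
  have := P.s_le; have hJr := P.Jr; have := P.r_ge; have := P.p_pos
  rcases le_total y ((2 * J + 1) * x) with h' | h'
  · refine le_trans ?_ (om_high2 P hc h)
    have : 0 ≤ (-s - 1) * ((2 * J + 1) * x - y) := mul_nonneg (by linarith) (by linarith)
    linarith
  · refine le_trans ?_ (om_high3 P hc hx h)
    have : 0 ≤ r * (y - (2 * J + 1) * x) := mul_nonneg (by linarith) (by linarith)
    have e4 : 2 * J * r * x = (2 * s + 2 * J) * x := by rw [hJr]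
    linarith

/-- Any modulation: the weight is bounded below at bounded frequency. -/
lemma om_small {J p s r : ℝ} (P : Par J p s r) {c x y : ℝ} (hc : 0 ≤ c) (hx : 0 ≤ x) (hxc : x ≤ c)
    (hy : 0 ≤ y) : r * y - J * c ≤ om J p s r x y := by
  have hJ := P.hJ; have hp := P.p_pos; have := P.h1; have := P.s_le
  have := P.p_le; have := P.r_le; have hr := P.r_ge
  refine le_min ?_ (le_max_of_le_right ?_)
  · have e1 : -s * x ≤ J * c := mul_le_mul (by linarith) hxc hx (by linarith)
    have e2 : 0 ≤ (1 - p - r) * y := mul_nonneg (by linarith) hy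
    linarith
  · have e1 : r * x ≤ J * c := mul_le_mul (by linarith) hxc hx (by linarith)
    linarith

/-- The left-hand side is the logarithm of `|k| ⟨σ⟩^{-1}` times the output weight; here it is bounded
through the first weight. -/
lemma out1 {J p s r : ℝ} {x u y : ℝ} :
    x - u - y + om J p s r x y ≤ (1 + s) * x - u - p * y := by
  have := min_le_left (s * x + (1 - p) * y)
    (max (((1 - 2 * J) * s - 1) * x + (s + 1) * y) (-r * x + r * y))
  unfold om; linarith

/-- Bound of the quantity of `out1` through the second and third weights. -/
lemma out2 {J p s r : ℝ} {x u y : ℝ} :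
    x - u - y + om J p s r x y ≤
      max (-u + (1 - 2 * J) * s * x + s * y) (-u + (1 - r) * x + (r - 1) * y) := by
  have := min_le_right (s * x + (1 - p) * y)
    (max (((1 - 2 * J) * s - 1) * x + (s + 1) * y) (-r * x + r * y))
  unfold om
  rcases max_cases (((1 - 2 * J) * s - 1) * x + (s + 1) * y) (-r * x + r * y) with ⟨h, -⟩ | ⟨h, -⟩
  · apply le_max_of_le_left; linarith
  · apply le_max_of_le_right; linarith

/-- `⟨σ⟩^{1/2}` times the output weight never exceeds `⟨k⟩^{s+j}`, up to a small power. -/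
lemma out3 {J p s r : ℝ} (P : Par J p s r) {x u y : ℝ} (hx : 0 ≤ x) (hy : 0 ≤ y) :
    x - u - y + om J p s r x y + (1 / 2 + p / 4) * y ≤ (s + J) * x - u + p / 2 * y := by
  have hJ := P.hJ; have hp := P.p_pos; have := P.h1; have hs := P.s_le
  have hpJ := P.hp; have hp4 := P.p_le; have := P.r_le; have hr := P.r_ge; have hJr := P.Jr
  have e3 : 2 * J * p * x = x := by rw [hpJ]; ring
  have e4 : 2 * J * r * x = (2 * s + 2 * J) * x := by rw [hJr]
  have e5 : 0 ≤ (r - 1 - s) * x := mul_nonneg (by linarith [P.s_r]) hx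
  have e6 := mul_nonneg hp.le hy
  rcases le_total y (2 * J * x) with h' | h'
  · have := out1 (J := J) (p := p) (s := s) (r := r) (x := x) (u := u) (y := y)
    have : 0 ≤ (1 / 2 - p) * (2 * J * x - y) := mul_nonneg (by linarith) (by linarith)
    linarith
  · have h2 := out2 (J := J) (p := p) (s := s) (r := r) (x := x) (u := u) (y := y)
    have f1 : 0 ≤ (-s - 1 / 2) * (y - 2 * J * x) := mul_nonneg (by linarith) (by linarith)
    have f2 : 0 ≤ (1 / 2 - r) * (y - 2 * J * x) := mul_nonneg (by linarith) (by linarith)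
    rcases le_max_iff.1 h2 with h | h <;> linarith

/-- The admissible ways to dominate the (logarithm of the) output weight `W`. The first three are
kernel estimates, the middle four pair an `L²` factor with an `L²_k L¹_τ` one, and the last two pair
two `L²` factors against a decaying function of the output modulation. The quantity
`p * u - 3 / 4 * x` is the logarithm of a function of `k` that is square summable over the lattice. -/
def Alt (J p s r C W u y x₁ u₁ y₁ x₂ u₂ y₂ : ℝ) : Prop :=
  W ≤ C + (om J p s r x₁ y₁ + om J p s r x₂ y₂ - 3 / 4 * y₁ - 3 / 4 * y₂ - p * u) ∨
  W ≤ C + (om J p s r x₁ y₁ + om J p s r x₂ y₂ - p * y - 3 / 4 * y₂ - p * u₁) ∨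
  W ≤ C + (om J p s r x₁ y₁ + om J p s r x₂ y₂ - p * y - 3 / 4 * y₁ - p * u₂) ∨
  W ≤ C + (om J p s r x₁ y₁ + s * x₂ + (p * u₁ - 3 / 4 * x₁)) ∨
  W ≤ C + (om J p s r x₁ y₁ + s * x₂ + (p * u₂ - 3 / 4 * x₂)) ∨
  W ≤ C + (s * x₁ + om J p s r x₂ y₂ + (p * u₁ - 3 / 4 * x₁)) ∨
  W ≤ C + (s * x₁ + om J p s r x₂ y₂ + (p * u₂ - 3 / 4 * x₂)) ∨
  W ≤ C + (om J p s r x₁ y₁ + om J p s r x₂ y₂ - (1 / 2 + p / 4) * y + (p * u₁ - 3 / 4 * x₁)) ∨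
  W ≤ C + (om J p s r x₁ y₁ + om J p s r x₂ y₂ - (1 / 2 + p / 4) * y + (p * u₂ - 3 / 4 * x₂))

/-- Exchange of the two inputs. -/
lemma Alt.symm {J p s r C W u y x₁ u₁ y₁ x₂ u₂ y₂ : ℝ}
    (h : Alt J p s r C W u y x₁ u₁ y₁ x₂ u₂ y₂) : Alt J p s r C W u y x₂ u₂ y₂ x₁ u₁ y₁ := by
  rcases h with h | h | h | h | h | h | h | h | h
  · left; linarith
  · right; right; left; linarith
  · right; left; linarith
  · right; right; right; right; right; right; left; linarith
  · right; right; right; right; right; left; linarith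
  · right; right; right; right; left; linarith
  · right; right; right; left; linarith
  · right; right; right; right; right; right; right; right; linarith
  · right; right; right; right; right; right; right; left; linarith

section
variable {J p s r C W u y x₁ u₁ y₁ x₂ u₂ y₂ : ℝ}
lemma Alt.t1 (h : W ≤ C + (om J p s r x₁ y₁ + om J p s r x₂ y₂ - 3 / 4 * y₁ - 3 / 4 * y₂ - p * u)) :
    Alt J p s r C W u y x₁ u₁ y₁ x₂ u₂ y₂ := Or.inl h
lemma Alt.t2 (h : W ≤ C + (om J p s r x₁ y₁ + om J p s r x₂ y₂ - p * y - 3 / 4 * y₂ - p * u₁)) :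
    Alt J p s r C W u y x₁ u₁ y₁ x₂ u₂ y₂ := Or.inr (Or.inl h)
lemma Alt.t3 (h : W ≤ C + (om J p s r x₁ y₁ + om J p s r x₂ y₂ - p * y - 3 / 4 * y₁ - p * u₂)) :
    Alt J p s r C W u y x₁ u₁ y₁ x₂ u₂ y₂ := Or.inr (Or.inr (Or.inl h))
lemma Alt.t4 (h : W ≤ C + (om J p s r x₁ y₁ + s * x₂ + (p * u₂ - 3 / 4 * x₂))) :
    Alt J p s r C W u y x₁ u₁ y₁ x₂ u₂ y₂ := Or.inr (Or.inr (Or.inr (Or.inr (Or.inl h))))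
lemma Alt.t5 (h : W ≤ C + (s * x₁ + om J p s r x₂ y₂ + (p * u₂ - 3 / 4 * x₂))) :
    Alt J p s r C W u y x₁ u₁ y₁ x₂ u₂ y₂ :=
  Or.inr (Or.inr (Or.inr (Or.inr (Or.inr (Or.inr (Or.inl h))))))
lemma Alt.t6 (h : W ≤ C + (om J p s r x₁ y₁ + om J p s r x₂ y₂ - (1 / 2 + p / 4) * y
      + (p * u₂ - 3 / 4 * x₂))) :
    Alt J p s r C W u y x₁ u₁ y₁ x₂ u₂ y₂ :=
  Or.inr (Or.inr (Or.inr (Or.inr (Or.inr (Or.inr (Or.inr (Or.inr h)))))))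
end

/-! ### Case analysis: domination of the output weight -/

/-- Product bound used to absorb lower-order constants. -/
lemma mul_le_of_abs {a b t c : ℝ} (ha : |a| ≤ b) (ht : |t| ≤ c) : a * t ≤ b * c := by
  have h1 := abs_nonneg a
  have h2 := abs_nonneg t
  calc a * t ≤ |a * t| := le_abs_self _
    _ = |a| * |t| := abs_mul _ _
    _ ≤ b * c := mul_le_mul ha ht h2 (h1.trans ha)

/-- Low–high interaction, the low input frequency being at most of unit size. -/
lemma case_Ia {J p s r : ℝ} (P : Par J p s r) {c x u y x₁ u₁ y₁ x₂ u₂ y₂ h : ℝ} (hc : 0 ≤ c)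
    (hx : 0 ≤ x) (hu : 0 ≤ u) (hy : 0 ≤ y) (hx₁ : 0 ≤ x₁) (hy₁ : 0 ≤ y₁)
    (hx₂ : 0 ≤ x₂) (hu₂ : 0 ≤ u₂) (hy₂ : 0 ≤ y₂)
    (hxx : |x - x₁| ≤ c) (hx₂c : x₂ ≤ c) (hh : -u₂ + 2 * J * x₁ - c ≤ h) (hh' : h ≤ 2 * J * x₁ + c)
    (H : h ≤ y + c ∨ h ≤ y₁ + c ∨ h ≤ y₂ + c)
    (R : y ≤ h + c ∨ y ≤ y₁ + c ∨ y ≤ y₂ + c)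
    (R₁ : y₁ ≤ h + c ∨ y₁ ≤ y + c ∨ y₁ ≤ y₂ + c) :
    Alt J p s r (40 * (J * J * c)) (x - u - y + om J p s r x y) u y x₁ u₁ y₁ x₂ u₂ y₂ := by
  have hJ := P.hJ; have hp := P.p_pos; have hs1 := P.h1; have hs := P.s_le
  have hpJ := P.hp; have hp4 := P.p_le; have hr2 := P.r_le; have hr := P.r_ge; have hJr := P.Jr
  have hJc : 2 * c ≤ J * c := mul_le_mul_of_nonneg_right hJ hc
  have hJJc : 2 * (J * c) ≤ J * J * c := by nlinarith [mul_le_mul_of_nonneg_right hJ (mul_nonneg (by linarith : 0 ≤ J) hc)]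
  have hpc : p * c ≤ c := by nlinarith
  have hpc0 : 0 ≤ p * c := by positivity
  have e3 : 2 * J * p * x₁ = x₁ := by rw [hpJ]; ring
  have W1 := out1 (J := J) (p := p) (s := s) (r := r) (x := x) (u := u) (y := y)
  have hsx : s * (x - x₁) ≤ J * c := mul_le_of_abs (by rw [abs_le]; constructor <;> linarith) hxx
  obtain ⟨hxx1, hxx2⟩ := abs_le.1 hxx
  have hsx2 : -s * x₂ ≤ J * c := mul_le_mul (by linarith) hx₂c hx₂ (by linarith)
  have hpy : 0 ≤ p * y := by positivity
  have hpu : 0 ≤ p * u₂ := by positivity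
  have hJx : 0 ≤ J * x₁ := by positivity
  by_cases c1 : h - 3 * c ≤ y₂
  · apply Alt.t5
    have g1 := om_small P hc hx₂ hx₂c hy₂
    have g2 : p * y₂ ≤ r * y₂ := mul_le_mul_of_nonneg_right hr hy₂
    have g3 : 0 ≤ p * (y₂ - (-u₂ + 2 * J * x₁ - 4 * c)) := mul_nonneg hp.le (by linarith)
    linarith
  push Not at c1
  by_cases c2 : y₁ ≤ 2 * J * x₁ + 5 * c
  · apply Alt.t4
    have g1 := om_low P (c := 5 * c) (by linarith) c2
    have g2 : p * y₁ ≤ (1 - p) * y₁ := mul_le_mul_of_nonneg_right (by linarith) hy₁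
    have g3 : x₁ - p * u₂ - 2 * c ≤ p * y + (1 - p) * y₁ := by
      rcases H with H | H | H
      · have g3 : 0 ≤ p * (y - (-u₂ + 2 * J * x₁ - 2 * c)) := mul_nonneg hp.le (by linarith)
        have : 0 ≤ (1 - p) * y₁ := mul_nonneg (by linarith) hy₁
        linarith
      · have g3 : 0 ≤ p * (y₁ - (-u₂ + 2 * J * x₁ - 2 * c)) := mul_nonneg hp.le (by linarith)
        linarith
      · linarith
    linarith
  push Not at c2
  -- Now `y` and `y₁` are comparable and the two weights almost cancel.
  have hyy : |y - y₁| ≤ c := by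
    rw [abs_le]; constructor
    · rcases R₁ with R | R | R <;> linarith
    · rcases R with R | R | R <;> linarith
  obtain ⟨hyy1, hyy2⟩ := abs_le.1 hyy
  apply Alt.t4
  have i1 : (1 - p) * (y - y₁) ≤ J * c :=
    mul_le_of_abs (by rw [abs_le]; constructor <;> linarith) hyy
  have i2 : (s + 1) * (y - y₁) ≤ J * c :=
    mul_le_of_abs (by rw [abs_le]; constructor <;> linarith) hyy
  have i3 : r * (y - y₁) ≤ J * c :=
    mul_le_of_abs (by rw [abs_le]; constructor <;> linarith) hyy
  have i4 : -r * (x - x₁) ≤ J * c :=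
    mul_le_of_abs (by rw [abs_le]; constructor <;> linarith) hxx
  have W3 := out2 (J := J) (p := p) (s := s) (r := r) (x := x) (u := u) (y := y)
  have g2 := om_high2 P hc (x := x₁) (y := y₁) (by linarith)
  have g3 := om_high3 P hc hx₁ (y := y₁) (by linarith)
  have i5 : 0 ≤ (-s) * (J * (x₁ + c - x)) :=
    mul_nonneg (by linarith) (mul_nonneg (by linarith) (by linarith))
  have i6 : 0 ≤ (2 * J - 1) * (c - (x - x₁)) := mul_nonneg (by linarith) (by linarith)
  have i7 : 2 * x₁ ≤ J * x₁ := mul_le_mul_of_nonneg_right hJ hx₁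
  rcases le_max_iff.1 W3 with W3 | W3
  · have j1 : ((1 - 2 * J) * s) * (x - x₁) ≤ (2 * J * J) * c :=
      mul_le_of_abs (by rw [abs_le]; constructor <;> nlinarith) hxx
    linarith
  · linarith

set_option maxHeartbeats 2000000 in
/-- Low–high interaction with both input frequencies at least of unit size. -/
lemma case_Ib {J p s r : ℝ} (P : Par J p s r) {c x u y x₁ u₁ y₁ x₂ u₂ y₂ h : ℝ} (hc : 0 ≤ c)
    (hx : 0 ≤ x) (hu : 0 ≤ u) (huc : u ≤ c) (hy : 0 ≤ y) (hx₁ : 0 ≤ x₁) (hu₁ : u₁ = 0)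
    (hy₁ : 0 ≤ y₁) (hx₂ : 0 ≤ x₂) (hu₂ : u₂ = 0) (hy₂ : 0 ≤ y₂)
    (hxx : |x - x₁| ≤ c) (hx₂₁ : x₂ ≤ x₁) (hh : x₂ + 2 * J * x₁ - c ≤ h)
    (hh' : h ≤ x₂ + 2 * J * x₁ + c)
    (H : h ≤ y + c ∨ h ≤ y₁ + c ∨ h ≤ y₂ + c)
    (R₁ : y₁ ≤ h + c ∨ y₁ ≤ y + c ∨ y₁ ≤ y₂ + c) :
    Alt J p s r (40 * (J * J * c)) (x - u - y + om J p s r x y) u y x₁ u₁ y₁ x₂ u₂ y₂ := by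
  have hJ := P.hJ; have hp := P.p_pos; have hs1 := P.h1; have hs := P.s_le
  have hpJ := P.hp; have hp4 := P.p_le; have hr2 := P.r_le; have hr := P.r_ge; have hJr := P.Jr
  have hJc : 2 * c ≤ J * c := mul_le_mul_of_nonneg_right hJ hc
  have hJJc : 2 * (J * c) ≤ J * J * c := by nlinarith [mul_le_mul_of_nonneg_right hJ (mul_nonneg (by linarith : 0 ≤ J) hc)]
  have hpc : p * c ≤ c := by nlinarith
  have hpc0 : 0 ≤ p * c := by positivity
  have e3 : 2 * J * p * x₁ = x₁ := by rw [hpJ]; ring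
  have e4 : 2 * J * r * x₁ = (2 * s + 2 * J) * x₁ := by rw [hJr]
  have W1 := out1 (J := J) (p := p) (s := s) (r := r) (x := x) (u := u) (y := y)
  have hsx : s * (x - x₁) ≤ J * c := mul_le_of_abs (by rw [abs_le]; constructor <;> linarith) hxx
  obtain ⟨hxx1, hxx2⟩ := abs_le.1 hxx
  have hpy : 0 ≤ p * y := by positivity
  have hpu : p * u ≤ c := by nlinarith
  have hJx : 0 ≤ J * x₁ := by positivity
  subst hu₁ hu₂
  have hJx2 : J * x₂ ≤ J * x₁ := mul_le_mul_of_nonneg_left hx₂₁ (by linarith)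
  have hJx20 : 0 ≤ J * x₂ := by positivity
  have hJx22 : 2 * x₂ ≤ J * x₂ := mul_le_mul_of_nonneg_right hJ hx₂
  have q1 : 0 ≤ (s + J - 1 / 2) * x₁ := mul_nonneg (by linarith) hx₁
  have q2 : 0 ≤ (s + J - 1 / 2) * x₂ := mul_nonneg (by linarith) hx₂
  by_cases c1 : h - 4 * c ≤ y
  · -- Largest modulation on the output.
    have W2 : x - u - y + om J p s r x y ≤ s * (x₁ + x₂) + 12 * (J * J * c) := by
      have W3 := out2 (J := J) (p := p) (s := s) (r := r) (x := x) (u := u) (y := y)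
      rcases le_max_iff.1 W3 with W3 | W3
      · have j1 : ((1 - 2 * J) * s) * (x - x₁) ≤ (2 * J * J) * c :=
          mul_le_of_abs (by rw [abs_le]; constructor <;> nlinarith) hxx
        have j2 : 0 ≤ (-s) * (y - (x₂ + 2 * J * x₁ - 5 * c)) := mul_nonneg (by linarith) (by linarith)
        have j3 : (-s) * c ≤ J * c := mul_le_mul_of_nonneg_right (by linarith) hc
        linarith
      · have j1 : (1 - r) * (x - x₁) ≤ J * c :=
          mul_le_of_abs (by rw [abs_le]; constructor <;> linarith) hxx
        have j2 : 0 ≤ (1 - r) * (y - (x₂ + 2 * J * x₁ - 5 * c)) :=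
          mul_nonneg (by linarith) (by linarith)
        have j3 : (1 - r) * c ≤ J * c := mul_le_mul_of_nonneg_right (by linarith) hc
        have j4 : 0 ≤ (r - 1 - s) * (x₁ - x₂) := mul_nonneg (by linarith [P.s_r]) (by linarith)
        linarith
    by_cases c2 : y₁ ≤ 2 * J * x₁ + c
    · by_cases c3 : y₂ ≤ 2 * J * x₂ + c
      · apply Alt.t1
        have g1 := om_low P hc c2
        have g2 := om_low P hc c3
        have g3 : 0 ≤ (1 / 4 - p) * y₁ := mul_nonneg (by linarith) hy₁
        have g4 : 0 ≤ (1 / 4 - p) * y₂ := mul_nonneg (by linarith) hy₂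
        linarith
      · apply Alt.t5
        have g2 := om_high P hc hx₂ (y := y₂) (by linarith)
        linarith
    · apply Alt.t4
      have g2 := om_high P hc hx₁ (y := y₁) (by linarith)
      linarith
  push Not at c1
  by_cases c2 : 2 * J * x₁ - 7 * c ≤ y₁ ∧ 2 * J * x₂ - 7 * c ≤ y₂
  · apply Alt.t6
    have g1 := om_high P (c := 7 * c) (by linarith) hx₁ c2.1
    have g2 := om_high P (c := 7 * c) (by linarith) hx₂ c2.2
    have W3 := out3 P (x := x) (u := u) (y := y) hx hy
    have j1 : (s + J) * (x - x₁) ≤ J * c :=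
      mul_le_of_abs (by rw [abs_le]; constructor <;> linarith) hxx
    have j2 : 0 ≤ p * (x₂ + 2 * J * x₁ + c - y) := mul_nonneg hp.le (by linarith)
    have j3 : 0 ≤ (1 / 4 - p) * x₁ := mul_nonneg (by linarith) hx₁
    have j4 : 0 ≤ (1 / 4 - p) * x₂ := mul_nonneg (by linarith) hx₂
    linarith
  by_cases c3 : h - 4 * c ≤ y₂
  · apply Alt.t3
    have c4 : y₁ ≤ 2 * J * x₁ + 7 * c := by
      by_contra c4
      exact c2 ⟨by linarith, by linarith⟩
    have g1 := om_low P (c := 7 * c) (by linarith) c4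
    have g2 := om_high3 P (c := 5 * c) (by linarith) hx₂ (y := y₂) (by linarith)
    have g3 : 0 ≤ (1 / 4 - p) * y₁ := mul_nonneg (by linarith) hy₁
    have g4 : 0 ≤ r * (y₂ - (x₂ + 2 * J * x₁ - 5 * c)) := mul_nonneg (by linarith) (by linarith)
    have g5 : r * c ≤ c := by nlinarith
    have g6 : 0 ≤ (r - p) * (2 * J * x₁) := mul_nonneg (by linarith) (by linarith)
    linarith
  · push Not at c3
    have c5 : h - c ≤ y₁ := by rcases H with H | H | H <;> linarith
    have c6 : y₁ ≤ h + c := by rcases R₁ with H | H | H <;> linarith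
    have c4 : y₂ ≤ 2 * J * x₂ + 7 * c := by
      by_contra c4
      exact c2 ⟨by linarith, by linarith⟩
    apply Alt.t2
    have g1 := om_low P (c := 7 * c) (by linarith) c4
    have g2 := om_high2 P (c := 2 * c) (by linarith) (x := x₁) (y := y₁) (by linarith)
    have g3 : 0 ≤ (1 / 4 - p) * y₂ := mul_nonneg (by linarith) hy₂
    have g4 : 0 ≤ (-s - 1) * ((x₂ + 2 * J * x₁ + 2 * c) - y₁) :=
      mul_nonneg (by linarith) (by linarith)
    have g5 : (-s - 1) * c ≤ J * c := mul_le_mul_of_nonneg_right (by linarith) hc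
    have g6 : 0 ≤ (2 * J - 2) * (x₁ - x₂) := mul_nonneg (by linarith) (by linarith)
    linarith

/-- High–high to low interaction, largest modulation on the output. -/
lemma case_II_out {J p s r : ℝ} (P : Par J p s r) {c x u y x₁ u₁ y₁ x₂ u₂ y₂ h : ℝ} (hc : 0 ≤ c)
    (hx : 0 ≤ x) (hu : 0 ≤ u) (hy : 0 ≤ y) (hux : u = 0 ∨ x ≤ c) (hx₁ : 0 ≤ x₁)
    (hy₁ : 0 ≤ y₁) (hx₂ : 0 ≤ x₂) (hu₂ : 0 ≤ u₂) (hy₂ : 0 ≤ y₂)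
    (hxx : |x₂ - x₁| ≤ c) (hxx₁ : x ≤ x₁ + c) (hh : x - u + 2 * J * x₁ - c ≤ h)
    (c1 : h - 4 * c ≤ y) :
    Alt J p s r (40 * (J * J * c)) (x - u - y + om J p s r x y) u y x₁ u₁ y₁ x₂ u₂ y₂ := by
  have hJ := P.hJ; have hp := P.p_pos; have hs1 := P.h1; have hs := P.s_le
  have hpJ := P.hp; have hp4 := P.p_le; have hr2 := P.r_le; have hr := P.r_ge; have hJr := P.Jr
  have hJc : 2 * c ≤ J * c := mul_le_mul_of_nonneg_right hJ hc
  have hJJc : 2 * (J * c) ≤ J * J * c := by nlinarith [mul_le_mul_of_nonneg_right hJ (mul_nonneg (by linarith : 0 ≤ J) hc)]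
  have hpc : p * c ≤ c := by nlinarith
  have e3 : 2 * J * p * x₁ = x₁ := by rw [hpJ]; ring
  have e4 : 2 * J * r * x₁ = (2 * s + 2 * J) * x₁ := by rw [hJr]
  obtain ⟨hxx1, hxx2⟩ := abs_le.1 hxx
  have hsx : s * (x₁ - x₂) ≤ J * c := mul_le_of_abs (by rw [abs_le]; constructor <;> linarith)
    (by rw [abs_sub_comm]; exact hxx)
  have hJsx : (2 * s + 2 * J) * (x₁ - x₂) ≤ J * J * c := by
    have := mul_le_of_abs (a := 2 * s + 2 * J) (b := J * J) (t := x₁ - x₂) (c := c)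
      (by rw [abs_le]; constructor <;> nlinarith) (by rw [abs_sub_comm]; exact hxx)
    linarith
  have hJx : 2 * x₁ ≤ J * x₁ := mul_le_mul_of_nonneg_right hJ hx₁
  have q1 : 0 ≤ (s + J - 1 / 2) * x₁ := mul_nonneg (by linarith) hx₁
  have hpu : 0 ≤ p * u₂ := by positivity
  have hru : 0 ≤ (r - p) * u := mul_nonneg (by linarith) hu
  have hpu' : 0 ≤ p * u := by positivity
  have W2 : x - u - y + om J p s r x y ≤ 2 * s * x₁ - r * u + 16 * (J * J * c) := by
    have W3 : -u + (1 - r) * x + (r - 1) * y ≤ 2 * s * x₁ - r * u + 5 * (J * c) := by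
      have j2 : 0 ≤ (1 - r) * (y - (x - u + 2 * J * x₁ - 5 * c)) :=
          mul_nonneg (by linarith) (by linarith)
      have j3 : (1 - r) * c ≤ J * c := mul_le_mul_of_nonneg_right (by linarith) hc
      linarith
    have W4 := out2 (J := J) (p := p) (s := s) (r := r) (x := x) (u := u) (y := y)
    rcases le_max_iff.1 W4 with W4 | W4
    · -- the first branch of the maximum is dominated by the second once `y` exceeds `(2J+1)x`
      have key : (2 * J + 1) * x - 9 * (J * c) ≤ y := by
        rcases hux with rfl | hxc
        · have : J * x ≤ J * (x₁ + c) := mul_le_mul_of_nonneg_left hxx₁ (by linarith)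
          linarith
        · have : J * x ≤ J * c := mul_le_mul_of_nonneg_left hxc (by linarith)
          linarith
      have j1 : 0 ≤ (r - 1 - s) * (y - ((2 * J + 1) * x - 9 * (J * c))) :=
        mul_nonneg (by linarith [P.s_r]) (by linarith)
      have e5 : 2 * J * r * x = (2 * s + 2 * J) * x := by rw [hJr]
      have j2 : (r - 1 - s) * (J * c) ≤ J * (J * c) :=
        mul_le_mul_of_nonneg_right (by linarith) (by linarith)
      linarith
    · linarith
  by_cases c2 : y₁ ≤ 2 * J * x₁ + c
  · by_cases c3 : y₂ ≤ 2 * J * x₂ + c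
    · apply Alt.t1
      have g1 := om_low P hc c2
      have g2 := om_low P hc c3
      have g3 : 0 ≤ (1 / 4 - p) * y₁ := mul_nonneg (by linarith) hy₁
      have g4 : 0 ≤ (1 / 4 - p) * y₂ := mul_nonneg (by linarith) hy₂
      linarith
    · apply Alt.t5
      have g2 := om_high P hc hx₂ (y := y₂) (by linarith)
      linarith
  · apply Alt.t4
    have g2 := om_high P hc hx₁ (y := y₁) (by linarith)
    linarith

/-- High–high to low interaction, largest modulation on the first input. Only two bounds on the
output weight `W` enter, so that the lemma also covers the `L¹_τ` part of the norm. -/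
lemma case_II_in {J p s r : ℝ} (P : Par J p s r) {c W x u y x₁ u₁ y₁ x₂ u₂ y₂ h : ℝ} (hc : 0 ≤ c)
    (hx : 0 ≤ x) (hu : 0 ≤ u) (hy : 0 ≤ y) (hux : u = 0 ∨ x ≤ c) (hx₁ : 0 ≤ x₁)
    (hu₁ : u₁ ≤ c) (hy₁ : 0 ≤ y₁) (hx₂ : 0 ≤ x₂) (hu₂ : 0 ≤ u₂) (hy₂ : 0 ≤ y₂)
    (hxx : |x₂ - x₁| ≤ c) (hxx₁ : x ≤ x₁ + c) (hh : x - u + 2 * J * x₁ - c ≤ h)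
    (hh' : h ≤ x - u + 2 * J * x₁ + c)
    (hW : W ≤ (1 + s) * x - u - p * y)
    (hW' : W + (1 / 2 + p / 4) * y ≤ (s + J) * x - u + p / 2 * y)
    (c1 : y < h - 4 * c) (c0 : h - c ≤ y₁)
    (R₁ : y₁ ≤ h + c ∨ y₁ ≤ y + c ∨ y₁ ≤ y₂ + c)
    (R₂ : y₂ ≤ h + c ∨ y₂ ≤ y + c ∨ y₂ ≤ y₁ + c) :
    Alt J p s r (40 * (J * J * c)) W u y x₁ u₁ y₁ x₂ u₂ y₂ := by
  have hJ := P.hJ; have hp := P.p_pos; have hs1 := P.h1; have hs := P.s_le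
  have hpJ := P.hp; have hp4 := P.p_le; have hr2 := P.r_le; have hr := P.r_ge; have hJr := P.Jr
  have hJc : 2 * c ≤ J * c := mul_le_mul_of_nonneg_right hJ hc
  have hJJc : 2 * (J * c) ≤ J * J * c := by nlinarith [mul_le_mul_of_nonneg_right hJ (mul_nonneg (by linarith : 0 ≤ J) hc)]
  have hpc : p * c ≤ c := by nlinarith
  have hpc0 : 0 ≤ p * c := by positivity
  have e3 : 2 * J * p * x₁ = x₁ := by rw [hpJ]; ring
  obtain ⟨hxx1, hxx2⟩ := abs_le.1 hxx
  have hsx : s * (x₁ - x₂) ≤ J * c := mul_le_of_abs (by rw [abs_le]; constructor <;> linarith)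
    (by rw [abs_sub_comm]; exact hxx)
  have hJx12 : J * (x₁ - x₂) ≤ J * c := mul_le_mul_of_nonneg_left (by linarith) (by linarith)
  have hJx21 : J * (x₂ - x₁) ≤ J * c := mul_le_mul_of_nonneg_left (by linarith) (by linarith)
  have hpu : 0 ≤ p * u₂ := by positivity
  have hpu1 : p * u₁ ≤ p * c := mul_le_mul_of_nonneg_left hu₁ hp.le
  have q1 : 0 ≤ (s + J - 1 / 2) * x₁ := mul_nonneg (by linarith) hx₁
  have q2 : 0 ≤ (s + J - 1 / 2) * x₂ := mul_nonneg (by linarith) hx₂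
  have q3 : 0 ≤ (s + J) * (x₁ + c - x) := mul_nonneg (by linarith) (by linarith)
  have q4 : 0 ≤ (1 / 4 - p) * x₁ := mul_nonneg (by linarith) hx₁
  have q5 : (s + J) * c ≤ J * c := mul_le_mul_of_nonneg_right (by linarith) hc
  have hsx0 : (s + 1) * x ≤ 0 := mul_nonpos_of_nonpos_of_nonneg (by linarith) hx
  by_cases c2 : 2 * J * x₁ - 7 * c ≤ y₁ ∧ 2 * J * x₂ - 7 * c ≤ y₂
  · apply Alt.t6
    have g1 := om_high P (c := 7 * c) (by linarith) hx₁ c2.1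
    have g2 := om_high P (c := 7 * c) (by linarith) hx₂ c2.2
    have j2 : 0 ≤ p * (x - u + 2 * J * x₁ + c - y) := mul_nonneg hp.le (by linarith)
    have j5 : 0 ≤ p * (x₁ + c - x) := mul_nonneg hp.le (by linarith)
    have j6 : 0 ≤ p * u := by positivity
    linarith
  rcases hux with rfl | hxc
  · -- frequency of the output at least of unit size
    have c4 : y₂ ≤ 2 * J * x₁ + 7 * J * c := by
      by_contra c4
      exact c2 ⟨by linarith, by linarith⟩
    have c5 : y₁ ≤ h + 9 * (J * c) := by rcases R₁ with H | H | H <;> linarith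
    apply Alt.t2
    have g1 := om_low P (c := 10 * (J * c)) (by linarith) (x := x₂) (y := y₂) (by linarith)
    have g2 := om_high2 P (c := 2 * c) (by linarith) (x := x₁) (y := y₁) (by linarith)
    have g3 : 0 ≤ (1 / 4 - p) * y₂ := mul_nonneg (by linarith) hy₂
    have g4 : 0 ≤ (-s - 1) * ((x + 2 * J * x₁ + 10 * (J * c)) - y₁) :=
      mul_nonneg (by linarith) (by linarith)
    have g5 : (-s - 1) * (J * c) ≤ J * (J * c) :=
      mul_le_mul_of_nonneg_right (by linarith) (by linarith)
    linarith
  · have i1 : y₁ ≤ 2 * J * x₁ + 10 * (J * c) := by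
      by_contra i1
      have : y₂ < 2 * J * x₂ - 7 * c := by
        by_contra i2
        exact c2 ⟨by linarith, by linarith⟩
      rcases R₁ with H | H | H <;> linarith
    have i2 : y₂ ≤ 2 * J * x₂ + 13 * (J * c) := by
      by_contra i1
      rcases R₂ with H | H | H <;> linarith
    have g1 := om_low P (c := 10 * (J * c)) (by linarith) i1
    have g2 := om_low P (c := 13 * (J * c)) (by linarith) i2
    have g3 : 0 ≤ (1 / 4 - p) * y₂ := mul_nonneg (by linarith) hy₂
    have g4 : 0 ≤ (1 - p) * (y₁ - (x - u + 2 * J * x₁ - 2 * c)) :=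
      mul_nonneg (by linarith) (by linarith)
    have g5 : 0 ≤ (1 - p) * x := mul_nonneg (by linarith) hx
    have g6 : 0 ≤ p * u := by positivity
    apply Alt.t2
    linarith

/-- Low–high interaction, `L¹_τ` part of the norm at very large output modulation. -/
lemma case_Y_I {J p s r : ℝ} (P : Par J p s r) {c x u y x₁ x₂ u₂ : ℝ} (hc : 0 ≤ c)
    (hx : 0 ≤ x) (hu : 0 ≤ u) (hx₁ : 0 ≤ x₁) (hx₂ : 0 ≤ x₂) (hu₂ : 0 ≤ u₂)
    (hxx : |x - x₁| ≤ c) (hx₂₁ : x₂ ≤ x₁ + c) (hy : (2 * J + 1) * x ≤ y) :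
    (1 + s) * x - u - y ≤ 40 * (J * J * c) + (s * x₁ + s * x₂ + (p * u₂ - 3 / 4 * x₂)) := by
  have hJ := P.hJ; have hp := P.p_pos; have hs1 := P.h1; have hs := P.s_le
  have hJc : 2 * c ≤ J * c := mul_le_mul_of_nonneg_right hJ hc
  have hJJc : 2 * (J * c) ≤ J * J * c := by nlinarith [mul_le_mul_of_nonneg_right hJ (mul_nonneg (by linarith : 0 ≤ J) hc)]
  obtain ⟨hxx1, hxx2⟩ := abs_le.1 hxx
  have hsx : s * (x - x₁) ≤ J * c := mul_le_of_abs (by rw [abs_le]; constructor <;> linarith) hxx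
  have hpu : 0 ≤ p * u₂ := by positivity
  have i1 : 0 ≤ (3 / 4 - s) * (x + 2 * c - x₂) := mul_nonneg (by linarith) (by linarith)
  have i2 : (-s) * c ≤ J * c := mul_le_mul_of_nonneg_right (by linarith) hc
  have i3 : 0 ≤ (s + J - 1 / 2) * x := mul_nonneg (by linarith) hx
  have i4 : 2 * x ≤ J * x := mul_le_mul_of_nonneg_right hJ hx
  linarith

/-- High–high to low interaction, `L¹_τ` part of the norm with the largest modulation on the
output. -/
lemma case_Y_II {J p s r : ℝ} (P : Par J p s r) {c x u y x₁ x₂ h : ℝ} (hc : 0 ≤ c)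
    (hx : 0 ≤ x) (hu : 0 ≤ u) (hux : u = 0 ∨ x ≤ c) (hx₁ : 0 ≤ x₁) (hx₂ : 0 ≤ x₂) (hy : 0 ≤ y)
    (hxx : |x₂ - x₁| ≤ c) (hh : x - u + 2 * J * x₁ - c ≤ h)
    (c1 : h - 4 * c ≤ y) :
    (1 + s) * x - u - y ≤ 40 * (J * J * c) + (s * x₁ + s * x₂ + (p * u - 3 / 4 * x)) := by
  have hJ := P.hJ; have hp := P.p_pos; have hs1 := P.h1; have hs := P.s_le; have hp4 := P.p_le
  have hpJ := P.hp
  have hJc : 2 * c ≤ J * c := mul_le_mul_of_nonneg_right hJ hc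
  have hJJc : 2 * (J * c) ≤ J * J * c := by nlinarith [mul_le_mul_of_nonneg_right hJ (mul_nonneg (by linarith : 0 ≤ J) hc)]
  have e3 : 2 * J * p * x₁ = x₁ := by rw [hpJ]; ring
  have hsx : s * (x₁ - x₂) ≤ J * c := mul_le_of_abs (by rw [abs_le]; constructor <;> linarith)
    (by rw [abs_sub_comm]; exact hxx)
  have q1 : 0 ≤ (s + J - 1 / 2) * x₁ := mul_nonneg (by linarith) hx₁
  have q2 : 0 ≤ (-s - 1) * x := mul_nonneg (by linarith) hx
  rcases hux with rfl | hxc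
  · linarith
  · have i1 : 0 ≤ (1 - p) * (y - (x - u + 2 * J * x₁ - 5 * c)) :=
      mul_nonneg (by linarith) (by linarith)
    have i2 : 0 ≤ p * y := by positivity
    have i3 : 0 ≤ p * (c - x) := mul_nonneg hp.le (by linarith)
    have i4 : 0 ≤ p * u := by positivity
    have i5 : p * c ≤ c := by nlinarith
    linarith

/-! ### Assembling the cases -/

/-- Logarithmic description of a frequency `k ≠ 0`: `l = log |k|`, `x = log ⟨k⟩` and
`u = -log (min 1 |k|)`. -/
structure Fr (l x u : ℝ) : Prop where
  hx : 0 ≤ x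
  hu : 0 ≤ u
  lo : l ≤ x - u
  hi : x - u ≤ l + 1
  sp : (0 ≤ l ∧ u = 0) ∨ (l < 0 ∧ x ≤ 1)

/-- Logarithmic form of the constraints on two interacting waves: `h` is the logarithm of the
resonance function, whose size is the smallest frequency times the `2j`-th power of the largest. -/
structure WaveTriple (J c₀ l x u y l₁ x₁ u₁ y₁ l₂ x₂ u₂ y₂ h : ℝ) : Prop where
  hc : 0 ≤ c₀
  f : Fr l x u
  f₁ : Fr l₁ x₁ u₁
  f₂ : Fr l₂ x₂ u₂
  hy : 0 ≤ y
  hy₁ : 0 ≤ y₁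
  hy₂ : 0 ≤ y₂
  l21 : l₂ ≤ l₁
  x21 : x₂ ≤ x₁
  tr : l ≤ l₁ + 1
  tr₁ : l₁ ≤ l + 1 ∨ l₁ ≤ l₂ + 1
  hI : l₂ ≤ l → |h - (l₂ + 2 * J * l₁)| ≤ c₀
  hII : l ≤ l₂ → |h - (l + 2 * J * l₁)| ≤ c₀
  H : h ≤ y + 2 ∨ h ≤ y₁ + 2 ∨ h ≤ y₂ + 2
  R : y ≤ h + 2 ∨ y ≤ y₁ + 2 ∨ y ≤ y₂ + 2
  R₁ : y₁ ≤ h + 2 ∨ y₁ ≤ y + 2 ∨ y₁ ≤ y₂ + 2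
  R₂ : y₂ ≤ h + 2 ∨ y₂ ≤ y + 2 ∨ y₂ ≤ y₁ + 2

lemma or3_mono {A B C D c c' : ℝ} (hc : c ≤ c') (h : A ≤ B + c ∨ A ≤ C + c ∨ A ≤ D + c) :
    A ≤ B + c' ∨ A ≤ C + c' ∨ A ≤ D + c' := by
  rcases h with h | h | h
  · left; linarith
  · right; left; linarith
  · right; right; linarith

section
variable {J p s r c₀ l x u y l₁ x₁ u₁ y₁ l₂ x₂ u₂ y₂ h W : ℝ}

/-- Both inputs at frequency at most one. -/
lemma core_low (P : Par J p s r) (I : WaveTriple J c₀ l x u y l₁ x₁ u₁ y₁ l₂ x₂ u₂ y₂ h)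
    (hl : l₁ ≤ 0) (hW : W ≤ (1 + s) * x - u - p * y) {C : ℝ} (hC : 10 * J ≤ C) :
    Alt J p s r C W u y x₁ u₁ y₁ x₂ u₂ y₂ := by
  have hJ := P.hJ; have hp := P.p_pos; have hs1 := P.h1; have hs := P.s_le
  have hr := P.r_ge
  have f1 : x₁ ≤ 1 := by
    rcases I.f₁.sp with ⟨a, b⟩ | ⟨a, b⟩
    · have := I.f₁.hi; linarith
    · exact b
  have f2 := I.x21
  have := I.f.hx; have := I.f.hu; have := I.f₁.hx; have := I.f₂.hx; have := I.f₂.hu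
  have a1 : (1 + s) * x ≤ 0 := mul_nonpos_of_nonpos_of_nonneg (by linarith) I.f.hx
  have a2 : 0 ≤ p * y := mul_nonneg hp.le I.hy
  have a3 : 0 ≤ p * u₂ := mul_nonneg hp.le I.f₂.hu
  have a4 : 0 ≤ (-s) * (1 - x₂) := mul_nonneg (by linarith) (by linarith)
  have a5 := om_small P zero_le_one I.f₁.hx f1 I.hy₁
  have a6 : 0 ≤ r * y₁ := mul_nonneg (by linarith) I.hy₁
  apply Alt.t4
  linarith

/-- Comparability of frequencies in the low–high regime. -/
lemma core_I (I : WaveTriple J c₀ l x u y l₁ x₁ u₁ y₁ l₂ x₂ u₂ y₂ h)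
    (hl : 0 ≤ l₁) (h2 : l₂ ≤ l) : u₁ = 0 ∧ u ≤ 2 ∧ |x - x₁| ≤ 2 ∧ x₁ ≤ l₁ + 1 ∧ l₁ ≤ x₁ := by
  have a := I.f₁.hi; have b := I.f₁.lo; have c := I.f.hi; have d := I.f.lo
  have := I.tr; have := I.f.hx
  have e1 : l₁ ≤ l + 1 := by rcases I.tr₁ with h | h <;> linarith
  have e2 : u₁ = 0 := by
    rcases I.f₁.sp with h | h
    · exact h.2
    · linarith [h.1]
  subst e2
  rcases I.f.sp with ⟨h, rfl⟩ | ⟨h, h'⟩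
  · refine ⟨rfl, by linarith, abs_le.2 ⟨by linarith, by linarith⟩, by linarith, by linarith⟩
  · refine ⟨rfl, by linarith, abs_le.2 ⟨by linarith, by linarith⟩, by linarith, by linarith⟩

/-- Comparability of frequencies in the high–high regime. -/
lemma core_II (I : WaveTriple J c₀ l x u y l₁ x₁ u₁ y₁ l₂ x₂ u₂ y₂ h)
    (hl : 0 ≤ l₁) (h2 : l ≤ l₂) : u₁ = 0 ∧ u₂ ≤ 2 ∧ |x₂ - x₁| ≤ 2 ∧ x₁ ≤ l₁ + 1 ∧ l₁ ≤ x₁ ∧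
      l₁ ≤ l₂ + 1 ∧ x ≤ x₁ + 2 ∧ (u = 0 ∨ x ≤ 2) := by
  have a := I.f₁.hi; have b := I.f₁.lo; have c := I.f₂.hi; have d := I.f₂.lo
  have a' := I.f.hi; have b' := I.f.lo
  have := I.tr; have := I.f₂.hx; have := I.l21; have := I.x21
  have e1 : l₁ ≤ l₂ + 1 := by rcases I.tr₁ with h | h <;> linarith
  have e2 : u₁ = 0 := by
    rcases I.f₁.sp with h | h
    · exact h.2
    · linarith [h.1]
  subst e2
  have e3 : x ≤ x₁ + 2 ∧ (u = 0 ∨ x ≤ 2) := by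
    rcases I.f.sp with ⟨h, rfl⟩ | ⟨h, h'⟩
    · exact ⟨by linarith, Or.inl rfl⟩
    · exact ⟨by linarith, Or.inr (by linarith)⟩
  rcases I.f₂.sp with ⟨h, rfl⟩ | ⟨h, h'⟩
  · refine ⟨rfl, by linarith, abs_le.2 ⟨by linarith, by linarith⟩, by linarith, by linarith, e1, e3⟩
  · refine ⟨rfl, by linarith, abs_le.2 ⟨by linarith, by linarith⟩, by linarith, by linarith, e1, e3⟩

/-- High–high regime with the largest modulation on one of the inputs. -/
lemma core_II_in (P : Par J p s r) (I : WaveTriple J c₀ l x u y l₁ x₁ u₁ y₁ l₂ x₂ u₂ y₂ h)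
    (hl : 0 ≤ l₁) (h2 : l ≤ l₂)
    (hW : W ≤ (1 + s) * x - u - p * y)
    (hW' : W + (1 / 2 + p / 4) * y ≤ (s + J) * x - u + p / 2 * y)
    {c : ℝ} (hc : c = c₀ + 10 * J + 20) (hy : y < h - 4 * c) :
    Alt J p s r (40 * (J * J * c)) W u y x₁ u₁ y₁ x₂ u₂ y₂ := by
  obtain ⟨b1, b2, b3, b4, b5, b6, b7, b8⟩ := core_II I hl h2
  have hJ := P.hJ; have hc0 := I.hc
  obtain ⟨d1, d2⟩ := abs_le.1 (I.hII h2)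
  have a := I.f.lo; have a' := I.f.hi
  have k1 : J * x₁ ≤ J * (l₁ + 1) := mul_le_mul_of_nonneg_left b4 (by linarith)
  have k2 : J * l₁ ≤ J * x₁ := mul_le_mul_of_nonneg_left b5 (by linarith)
  obtain ⟨g1, g2⟩ := abs_le.1 b3
  have k3 : J * x₂ ≤ J * (x₁ + 2) := mul_le_mul_of_nonneg_left (by linarith) (by linarith)
  have k4 : J * x₁ ≤ J * (x₂ + 2) := mul_le_mul_of_nonneg_left (by linarith) (by linarith)
  have hux : u = 0 ∨ x ≤ c := b8.imp_right fun h => by linarith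
  have h2c : 2 ≤ c := by linarith
  have R₁ := or3_mono h2c I.R₁
  have R₂ := or3_mono h2c I.R₂
  rcases I.H with H | H | H
  · linarith
  · exact case_II_in P (by linarith) I.f.hx I.f.hu I.hy hux I.f₁.hx (by linarith) I.hy₁ I.f₂.hx
      I.f₂.hu I.hy₂ (by linarith) (by linarith) (by linarith) (by linarith) hW hW' hy (by linarith)
      R₁ R₂
  · exact (case_II_in P (by linarith) I.f.hx I.f.hu I.hy hux I.f₂.hx (by linarith) I.hy₂ I.f₁.hx
      I.f₁.hu I.hy₁ (by rw [abs_sub_comm]; linarith) (by linarith) (by linarith) (by linarith) hW hW'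
      hy (by linarith) R₂ R₁).symm

/-- Every interaction is covered by one of the alternatives (first input of higher frequency). -/
lemma core_X (P : Par J p s r) (I : WaveTriple J c₀ l x u y l₁ x₁ u₁ y₁ l₂ x₂ u₂ y₂ h)
    {c : ℝ} (hc : c = c₀ + 10 * J + 20) :
    Alt J p s r (40 * (J * J * c)) (x - u - y + om J p s r x y) u y x₁ u₁ y₁ x₂ u₂ y₂ := by
  have hJ := P.hJ; have hc0 := I.hc
  have h2c : 2 ≤ c := by linarith
  have hC : 10 * J ≤ 40 * (J * J * c) := by
    have : J * 2 ≤ J * (J * c) := by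
      apply mul_le_mul_of_nonneg_left _ (by linarith)
      nlinarith
    linarith
  rcases le_total l₁ 0 with hl | hl
  · exact core_low P I hl out1 hC
  have H := or3_mono h2c I.H
  have R := or3_mono h2c I.R
  have R₁ := or3_mono h2c I.R₁
  rcases le_total l₂ l with h2 | h2
  · obtain ⟨b1, b2, b3, b4, b5⟩ := core_I I hl h2
    obtain ⟨d1, d2⟩ := abs_le.1 (I.hI h2)
    have k1 : J * x₁ ≤ J * (l₁ + 1) := mul_le_mul_of_nonneg_left b4 (by linarith)
    have k2 : J * l₁ ≤ J * x₁ := mul_le_mul_of_nonneg_left b5 (by linarith)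
    have a := I.f₂.lo; have a' := I.f₂.hi
    have hu2 := I.f₂.hu; have hx2 := I.f₂.hx
    rcases I.f₂.sp with ⟨h', h''⟩ | ⟨h', h''⟩
    · exact case_Ib P (by linarith) I.f.hx I.f.hu (by linarith) I.hy I.f₁.hx b1 I.hy₁ I.f₂.hx h''
        I.hy₂ (by linarith) I.x21 (by linarith) (by linarith) H R₁
    · exact case_Ia P (by linarith) I.f.hx I.f.hu I.hy I.f₁.hx I.hy₁ I.f₂.hx I.f₂.hu
        I.hy₂ (by linarith) (by linarith) (by linarith) (by linarith) H R R₁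
  · rcases le_or_gt (h - 4 * c) y with hy | hy
    · obtain ⟨b1, b2, b3, b4, b5, b6, b7, b8⟩ := core_II I hl h2
      obtain ⟨d1, d2⟩ := abs_le.1 (I.hII h2)
      have a := I.f.lo; have a' := I.f.hi
      have k1 : J * x₁ ≤ J * (l₁ + 1) := mul_le_mul_of_nonneg_left b4 (by linarith)
      exact case_II_out P (by linarith) I.f.hx I.f.hu I.hy (b8.imp_right fun h => by linarith)
        I.f₁.hx I.hy₁ I.f₂.hx I.f₂.hu I.hy₂ (by linarith) (by linarith) (by linarith) hy
    · exact core_II_in P I hl h2 out1 (out3 P I.f.hx I.hy) hc hy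

/-- The analogue of `core_X` for the `L¹_τ` part of the norm, in the region of very large output
modulation; the weight gains a factor `⟨σ⟩^{1/2+}` to be spent on the `τ`-integration. -/
lemma core_Y (P : Par J p s r) (I : WaveTriple J c₀ l x u y l₁ x₁ u₁ y₁ l₂ x₂ u₂ y₂ h)
    {c : ℝ} (hc : c = c₀ + 10 * J + 20) (hyx : (2 * J + 1) * x ≤ y) :
    Alt J p s r (40 * (J * J * c)) ((1 + s) * x - u - y + (1 / 2 + p / 4) * y)
        u y x₁ u₁ y₁ x₂ u₂ y₂ ∨
      (1 + s) * x - u - y ≤ 40 * (J * J * c) + (s * x₁ + s * x₂ + (p * u₂ - 3 / 4 * x₂)) ∨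
      (1 + s) * x - u - y ≤ 40 * (J * J * c) + (s * x₁ + s * x₂ + (p * u - 3 / 4 * x)) := by
  have hJ := P.hJ; have hc0 := I.hc; have hp4 := P.p_le; have hp := P.p_pos
  have h2c : 2 ≤ c := by linarith
  have hC : 10 * J ≤ 40 * (J * J * c) := by
    have : J * 2 ≤ J * (J * c) := by
      apply mul_le_mul_of_nonneg_left _ (by linarith)
      nlinarith
    linarith
  have hpy : 0 ≤ (1 / 2 - 5 / 4 * p) * y := mul_nonneg (by linarith) I.hy
  have hpy' : 0 ≤ p / 2 * y := mul_nonneg (by linarith) I.hy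
  have hW : (1 + s) * x - u - y + (1 / 2 + p / 4) * y ≤ (1 + s) * x - u - p * y := by linarith
  have hW' : (1 + s) * x - u - y + (1 / 2 + p / 4) * y + (1 / 2 + p / 4) * y
      ≤ (s + J) * x - u + p / 2 * y := by
    have : 0 ≤ (J - 1) * x := mul_nonneg (by linarith) I.f.hx
    linarith
  rcases le_total l₁ 0 with hl | hl
  · exact Or.inl (core_low P I hl hW hC)
  rcases le_total l₂ l with h2 | h2
  · obtain ⟨b1, b2, b3, b4, b5⟩ := core_I I hl h2
    right; left
    exact case_Y_I P (by linarith) I.f.hx I.f.hu I.f₁.hx I.f₂.hx I.f₂.hu (by linarith)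
      (by linarith [I.x21]) hyx
  · rcases le_or_gt (h - 4 * c) y with hy | hy
    · obtain ⟨b1, b2, b3, b4, b5, b6, b7, b8⟩ := core_II I hl h2
      obtain ⟨d1, d2⟩ := abs_le.1 (I.hII h2)
      have a := I.f.lo; have a' := I.f.hi
      have k1 : J * x₁ ≤ J * (l₁ + 1) := mul_le_mul_of_nonneg_left b4 (by linarith)
      right; right
      exact case_Y_II P (by linarith) I.f.hx I.f.hu (b8.imp_right fun h => by linarith)
        I.f₁.hx I.f₂.hx I.hy (by linarith) (by linarith) hy
    · exact Or.inl (core_II_in P I hl h2 hW hW' hc hy)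
end

/-! ### The resonance function and brackets -/

/-- Size of the resonance function, in the sign-normalised situation. -/
lemma res_aux (j : ℕ) (hj : 1 ≤ j) {b d : ℝ} (hd : 0 ≤ d) (hdb : d ≤ b) :
    d * (b + d) ^ (2 * j) ≤ 4 ^ j * ((b + d) ^ (2 * j + 1) - b ^ (2 * j + 1) - d ^ (2 * j + 1)) ∧
    (b + d) ^ (2 * j + 1) - b ^ (2 * j + 1) - d ^ (2 * j + 1)
      ≤ (2 * j + 1) * (d * (b + d) ^ (2 * j)) := by
  have hb : 0 ≤ b := hd.trans hdb
  constructor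
  · have h1 : b ^ (2 * j) + d ^ (2 * j) ≤ (b + d) ^ (2 * j) := pow_add_pow_le hb hd (by omega)
    have h2 : (b + d) * (b ^ (2 * j) + d ^ (2 * j)) ≤ (b + d) * (b + d) ^ (2 * j) :=
      mul_le_mul_of_nonneg_left h1 (by linarith)
    have h3 : d * b ^ (2 * j) ≤ (b + d) ^ (2 * j + 1) - b ^ (2 * j + 1) - d ^ (2 * j + 1) := by
      have : 0 ≤ b * d ^ (2 * j) := by positivity
      simp only [pow_succ] at h2 ⊢
      nlinarith
    have h4 : (b + d) ^ (2 * j) ≤ 4 ^ j * b ^ (2 * j) := by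
      have : (b + d) ^ (2 * j) ≤ (2 * b) ^ (2 * j) := pow_le_pow_left₀ (by linarith) (by linarith) _
      rw [mul_pow, pow_mul 2 2 j] at this
      norm_num at this
      exact this
    calc d * (b + d) ^ (2 * j) ≤ d * (4 ^ j * b ^ (2 * j)) := mul_le_mul_of_nonneg_left h4 hd
      _ = 4 ^ j * (d * b ^ (2 * j)) := by ring
      _ ≤ _ := mul_le_mul_of_nonneg_left h3 (by positivity)
  · have h1 := abs_pow_sub_pow_le (b + d) b (2 * j + 1)
    have h2 := le_abs_self ((b + d) ^ (2 * j + 1) - b ^ (2 * j + 1))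
    have h3 : 0 ≤ d ^ (2 * j + 1) := by positivity
    rw [show b + d - b = d by ring, abs_of_nonneg hd, abs_of_nonneg hb,
      abs_of_nonneg (by linarith : 0 ≤ b + d), max_eq_left (by linarith : b ≤ b + d)] at h1
    simp only [Nat.add_sub_cancel] at h1
    push_cast at h1
    linarith

/-- The resonance function `a^n + b^n + c^n`, `a + b + c = 0`, has the size of the smallest
frequency times the `2j`-th power of the largest one. -/
lemma res_bounds (j : ℕ) (hj : 1 ≤ j) {a b c : ℝ} (h : a + b + c = 0) (hcb : |c| ≤ |b|)
    (hba : |b| ≤ |a|) :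
    |c| * |a| ^ (2 * j) ≤ 4 ^ j * |a ^ (2 * j + 1) + b ^ (2 * j + 1) + c ^ (2 * j + 1)| ∧
    |a ^ (2 * j + 1) + b ^ (2 * j + 1) + c ^ (2 * j + 1)|
      ≤ (2 * j + 1) * (|c| * |a| ^ (2 * j)) := by
  have hodd : Odd (2 * j + 1) := ⟨j, rfl⟩
  wlog ha : 0 ≤ a generalizing a b c
  · have := this (a := -a) (b := -b) (c := -c) (by linarith) (by simpa using hcb) (by simpa using hba)
      (by linarith)
    rw [hodd.neg_pow, hodd.neg_pow, hodd.neg_pow, abs_neg, abs_neg] at this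
    rw [show -a ^ (2 * j + 1) + -b ^ (2 * j + 1) + -c ^ (2 * j + 1)
      = -(a ^ (2 * j + 1) + b ^ (2 * j + 1) + c ^ (2 * j + 1)) by ring, abs_neg] at this
    exact this
  rw [abs_of_nonneg ha] at hba ⊢
  have hc : c ≤ 0 := by
    by_contra hc
    have := neg_abs_le b
    linarith
  have hb : b ≤ 0 := by
    by_contra hb
    push Not at hb
    rw [abs_of_pos hb, abs_of_nonpos hc] at hcb
    rw [abs_of_pos hb] at hba
    linarith
  rw [abs_of_nonpos hc, abs_of_nonpos hb] at hcb
  rw [abs_of_nonpos hc]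
  obtain ⟨h1, h2⟩ := res_aux j hj (b := -b) (d := -c) (by linarith) hcb
  rw [show -b + -c = a by linarith, hodd.neg_pow, hodd.neg_pow,
    show a ^ (2 * j + 1) - -b ^ (2 * j + 1) - -c ^ (2 * j + 1)
      = a ^ (2 * j + 1) + b ^ (2 * j + 1) + c ^ (2 * j + 1) by ring] at h1 h2
  have h3 : 0 ≤ a ^ (2 * j + 1) + b ^ (2 * j + 1) + c ^ (2 * j + 1) := by
    by_contra h3
    have : (4:ℝ) ^ j * (a ^ (2 * j + 1) + b ^ (2 * j + 1) + c ^ (2 * j + 1)) < 0 :=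
      mul_neg_of_pos_of_neg (by positivity) (by linarith)
    have : 0 ≤ -c * a ^ (2 * j) := mul_nonneg (by linarith) (by positivity)
    linarith
  rw [abs_of_nonneg h3]
  exact ⟨h1, h2⟩

/-- Logarithmic form of `res_bounds`. -/
lemma res_log (j : ℕ) (hj : 1 ≤ j) {a b c : ℝ} (h : a + b + c = 0) (hcb : |c| ≤ |b|)
    (hba : |b| ≤ |a|) (hc : c ≠ 0) :
    a ^ (2 * j + 1) + b ^ (2 * j + 1) + c ^ (2 * j + 1) ≠ 0 ∧
    |Real.log |a ^ (2 * j + 1) + b ^ (2 * j + 1) + c ^ (2 * j + 1)|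
      - (Real.log |c| + 2 * j * Real.log |a|)| ≤ 2 * j + 1 := by
  obtain ⟨h1, h2⟩ := res_bounds j hj h hcb hba
  have hc' : 0 < |c| := abs_pos.2 hc
  have ha' : 0 < |a| := by linarith
  have hpos : 0 < |c| * |a| ^ (2 * j) := by positivity
  have hH : 0 < |a ^ (2 * j + 1) + b ^ (2 * j + 1) + c ^ (2 * j + 1)| := by
    by_contra hn
    have : (4:ℝ) ^ j * |a ^ (2 * j + 1) + b ^ (2 * j + 1) + c ^ (2 * j + 1)| ≤ 0 :=
      mul_nonpos_of_nonneg_of_nonpos (by positivity) (by linarith)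
    linarith
  refine ⟨abs_pos.1 hH, ?_⟩
  have e : Real.log (|c| * |a| ^ (2 * j)) = Real.log |c| + 2 * j * Real.log |a| := by
    rw [Real.log_mul hc'.ne' (by positivity), Real.log_pow]; push_cast; ring
  have l1 := Real.log_le_log hpos h1
  have l2 := Real.log_le_log hH h2
  rw [e, Real.log_mul (by positivity) hH.ne', Real.log_pow] at l1
  rw [Real.log_mul (by positivity) hpos.ne', e] at l2
  have l3 : Real.log 4 ≤ 2 := by
    have : Real.log 4 = 2 * Real.log 2 := by
      rw [show (4:ℝ) = 2 ^ 2 by norm_num, Real.log_pow]; norm_num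
    have := Real.log_two_lt_d9
    linarith
  have l4 : (j:ℝ) * Real.log 4 ≤ j * 2 := mul_le_mul_of_nonneg_left l3 (by positivity)
  have l5 := Real.log_le_sub_one_of_pos (show (0:ℝ) < 2 * j + 1 by positivity)
  rw [abs_le]
  constructor <;> linarith

lemma jap_pos (x : ℝ) : 0 < jap x := by unfold jap; positivity

lemma one_le_jap (x : ℝ) : 1 ≤ jap x := by
  unfold jap; rw [Real.one_le_sqrt]; nlinarith [sq_nonneg x]

lemma abs_le_jap (x : ℝ) : |x| ≤ jap x := by
  unfold jap; apply Real.le_sqrt_of_sq_le; rw [sq_abs]; linarith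

lemma jap_le (x : ℝ) : jap x ≤ 1 + |x| := by
  unfold jap; rw [Real.sqrt_le_left (by positivity)]
  nlinarith [abs_nonneg x, sq_abs x]

lemma jap_mono {x y : ℝ} (h : |x| ≤ |y|) : jap x ≤ jap y := by
  unfold jap; exact Real.sqrt_le_sqrt (by nlinarith [sq_abs x, sq_abs y, abs_nonneg x])

lemma jap_le_of {x y z w : ℝ} (h : |x| ≤ |y| + |z| + |w|) : jap x ≤ jap y + jap z + |w| := by
  unfold jap
  have hy := Real.sq_sqrt (show 0 ≤ 1 + y ^ 2 by positivity)
  have hz := Real.sq_sqrt (show 0 ≤ 1 + z ^ 2 by positivity)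
  have h1 := abs_le_jap y
  have h2 := abs_le_jap z
  have h3 := one_le_jap y
  unfold jap at h1 h2 h3
  have h4 := Real.sqrt_nonneg (1 + z ^ 2)
  rw [Real.sqrt_le_left (by positivity)]
  have : x ^ 2 ≤ (|y| + |z| + |w|) ^ 2 := by
    rw [← sq_abs x]; exact pow_le_pow_left₀ (abs_nonneg _) h 2
  have a1 : |y| * |z| ≤ √(1 + y ^ 2) * √(1 + z ^ 2) := mul_le_mul h1 h2 (abs_nonneg _) (by linarith)
  have a2 : |y| * |w| ≤ √(1 + y ^ 2) * |w| := mul_le_mul_of_nonneg_right h1 (abs_nonneg _)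
  have a3 : |z| * |w| ≤ √(1 + z ^ 2) * |w| := mul_le_mul_of_nonneg_right h2 (abs_nonneg _)
  nlinarith [sq_abs y, sq_abs z, sq_abs w]

/-- Logarithm of `min 1 |k|`, up to sign. -/
def lowlog (k : ℝ) : ℝ := -Real.log (min 1 |k|)

/-- The logarithms attached to a nonzero frequency satisfy the relations of `Fr`. -/
lemma fr_of (k : ℝ) (hk : k ≠ 0) : Fr (Real.log |k|) (Real.log (jap k)) (lowlog k) := by
  have hk' : 0 < |k| := abs_pos.2 hk
  have h1 := Real.log_le_log hk' (abs_le_jap k)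
  have h0 := Real.log_nonneg (one_le_jap k)
  have hj := Real.log_le_log (jap_pos k) (jap_le k)
  have hl2 := Real.log_two_lt_d9
  unfold lowlog
  rcases le_total 1 |k| with h | h
  · rw [min_eq_left h]
    have h3 : Real.log (1 + |k|) ≤ Real.log (2 * |k|) := Real.log_le_log (by linarith) (by linarith)
    rw [Real.log_mul (by norm_num) hk'.ne'] at h3
    refine ⟨h0, by simp, by simpa using h1, ?_, Or.inl ⟨Real.log_nonneg h, by simp⟩⟩
    simp only [Real.log_one]; linarith
  · rw [min_eq_right h]
    have h3 : Real.log (1 + |k|) ≤ Real.log 2 := Real.log_le_log (by linarith) (by linarith)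
    have h4 := Real.log_nonpos hk'.le h
    refine ⟨h0, by linarith, by linarith, by linarith, ?_⟩
    rcases h.lt_or_eq with h | h
    · exact Or.inr ⟨Real.log_neg hk' h, by linarith⟩
    · rw [h]; simp

lemma log_or3 {A B C D : ℝ} (hA : 0 < A) (hB : 0 < B) (hC : 0 < C) (hD : 0 < D)
    (h : A ≤ B + C + D) : Real.log A ≤ Real.log B + 2 ∨ Real.log A ≤ Real.log C + 2 ∨
      Real.log A ≤ Real.log D + 2 := by
  have key : ∀ X, 0 < X → A ≤ 3 * X → Real.log A ≤ Real.log X + 2 := by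
    intro X hX h
    have := Real.log_le_log hA h
    rw [Real.log_mul (by norm_num) hX.ne'] at this
    have := Real.log_le_sub_one_of_pos (show (0:ℝ) < 3 by norm_num)
    linarith
  by_cases hb : A ≤ 3 * B
  · exact Or.inl (key B hB hb)
  by_cases hc : A ≤ 3 * C
  · exact Or.inr (Or.inl (key C hC hc))
  exact Or.inr (Or.inr (key D hD (by linarith)))

lemma log_add_one {A B : ℝ} (hA : 0 < A) (hB : 0 < B) (h : A ≤ 2 * B) :
    Real.log A ≤ Real.log B + 1 := by
  have := Real.log_le_log hA h
  rw [Real.log_mul (by norm_num) hB.ne'] at this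
  have := Real.log_two_lt_d9
  linarith

/-- Two interacting waves satisfy the constraints listed in `WaveTriple`. -/
lemma wave_triple (j : ℕ) (hj : 1 ≤ j) {k₁ k₂ σ₁ σ₂ σ : ℝ} (h1 : k₁ ≠ 0) (h2 : k₂ ≠ 0)
    (h : k₁ + k₂ ≠ 0) (h21 : |k₂| ≤ |k₁|)
    (hσ : σ = σ₁ + σ₂ + (k₁ ^ (2 * j + 1) + k₂ ^ (2 * j + 1) - (k₁ + k₂) ^ (2 * j + 1))) :
    WaveTriple j (4 * j + 1) (Real.log |k₁ + k₂|) (Real.log (jap (k₁ + k₂))) (lowlog (k₁ + k₂))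
      (Real.log (jap σ)) (Real.log |k₁|) (Real.log (jap k₁)) (lowlog k₁) (Real.log (jap σ₁))
      (Real.log |k₂|) (Real.log (jap k₂)) (lowlog k₂) (Real.log (jap σ₂))
      (Real.log |(-(k₁ + k₂)) ^ (2 * j + 1) + k₁ ^ (2 * j + 1) + k₂ ^ (2 * j + 1)|) := by
  have hodd : Odd (2 * j + 1) := ⟨j, rfl⟩
  have p1 := abs_pos.2 h1
  have p2 := abs_pos.2 h2
  have p := abs_pos.2 h
  have t1 := abs_add_le k₁ k₂
  have t2 : |k₁| ≤ |k₁ + k₂| + |k₂| := by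
    have := abs_sub (k₁ + k₂) k₂; rwa [add_sub_cancel_right] at this
  have tr : Real.log |k₁ + k₂| ≤ Real.log |k₁| + 1 := log_add_one p p1 (by linarith)
  set G := (-(k₁ + k₂)) ^ (2 * j + 1) + k₁ ^ (2 * j + 1) + k₂ ^ (2 * j + 1) with hG
  have hσ' : σ = σ₁ + σ₂ + G := by rw [hσ, hG, hodd.neg_pow]; ring
  have hI : |k₂| ≤ |k₁ + k₂| → G ≠ 0 ∧
      |Real.log |G| - (Real.log |k₂| + 2 * j * Real.log |k₁|)| ≤ 4 * j + 1 := by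
    intro hle
    rcases le_total |k₁| |k₁ + k₂| with hm | hm
    · obtain ⟨a, b⟩ := res_log j hj (a := -(k₁ + k₂)) (b := k₁) (c := k₂) (by ring) h21
        (by rwa [abs_neg]) h2
      refine ⟨a, ?_⟩
      rw [← hG, abs_neg] at b
      have l1 := Real.log_le_log p1 hm
      have l2 : (j:ℝ) * Real.log |k₁| ≤ j * Real.log |k₁ + k₂| :=
        mul_le_mul_of_nonneg_left l1 (by positivity)
      have l3 : (j:ℝ) * Real.log |k₁ + k₂| ≤ j * (Real.log |k₁| + 1) :=
        mul_le_mul_of_nonneg_left tr (by positivity)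
      rw [abs_le] at b ⊢
      constructor <;> linarith
    · obtain ⟨a, b⟩ := res_log j hj (a := k₁) (b := -(k₁ + k₂)) (c := k₂) (by ring)
        (by rwa [abs_neg]) (by rwa [abs_neg]) h2
      rw [show k₁ ^ (2 * j + 1) + (-(k₁ + k₂)) ^ (2 * j + 1) + k₂ ^ (2 * j + 1) = G by
        rw [hG]; ring] at a b
      exact ⟨a, b.trans (by have : (0:ℝ) ≤ j := by positivity
                            linarith)⟩
  have hII : |k₁ + k₂| ≤ |k₂| → G ≠ 0 ∧
      |Real.log |G| - (Real.log |k₁ + k₂| + 2 * j * Real.log |k₁|)| ≤ 4 * j + 1 := by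
    intro hle
    obtain ⟨a, b⟩ := res_log j hj (a := k₁) (b := k₂) (c := -(k₁ + k₂)) (by ring)
      (by rwa [abs_neg]) h21 (neg_ne_zero.2 h)
    rw [show k₁ ^ (2 * j + 1) + k₂ ^ (2 * j + 1) + (-(k₁ + k₂)) ^ (2 * j + 1) = G by
      rw [hG]; ring] at a b
    rw [abs_neg] at b
    exact ⟨a, b.trans (by have : (0:ℝ) ≤ j := by positivity
                          linarith)⟩
  have hG0 : G ≠ 0 := by
    rcases le_total |k₂| |k₁ + k₂| with h | h
    · exact (hI h).1
    · exact (hII h).1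
  have pG := abs_pos.2 hG0
  have q := jap_pos σ
  have q1 := jap_pos σ₁
  have q2 := jap_pos σ₂
  have s1 : |σ| ≤ |σ₁| + |σ₂| + |G| := by rw [hσ']; exact abs_add_three _ _ _
  have s2 : |σ₁| ≤ |σ| + |σ₂| + |G| := by
    rw [show σ₁ = σ + -σ₂ + -G by rw [hσ']; ring]
    refine (abs_add_three _ _ _).trans ?_
    rw [abs_neg, abs_neg]
  have s3 : |σ₂| ≤ |σ| + |σ₁| + |G| := by
    have e : σ₂ = σ + -σ₁ + -G := by rw [hσ']; ring
    have := abs_add_three σ (-σ₁) (-G)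
    rw [← e, abs_neg, abs_neg] at this
    exact this
  have s4 : |G| ≤ |σ| + |σ₁| + |σ₂| := by
    have e : G = σ + -σ₁ + -σ₂ := by rw [hσ']; ring
    have := abs_add_three σ (-σ₁) (-σ₂)
    rw [← e, abs_neg, abs_neg] at this
    exact this
  exact {
    hc := by positivity
    f := fr_of _ h
    f₁ := fr_of _ h1
    f₂ := fr_of _ h2
    hy := Real.log_nonneg (one_le_jap _)
    hy₁ := Real.log_nonneg (one_le_jap _)
    hy₂ := Real.log_nonneg (one_le_jap _)
    l21 := Real.log_le_log p2 h21
    x21 := Real.log_le_log (jap_pos _) (jap_mono h21)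
    tr := tr
    tr₁ := by
      rcases le_total |k₂| |k₁ + k₂| with h | h
      · exact Or.inl (log_add_one p1 p (by linarith))
      · exact Or.inr (log_add_one p1 p2 (by linarith))
    hI := fun hle => (hI ((Real.log_le_log_iff p2 p).1 hle)).2
    hII := fun hle => (hII ((Real.log_le_log_iff p p2).1 hle)).2
    H := log_or3 pG q q1 q2 (s4.trans (by
      have := abs_le_jap σ; have := abs_le_jap σ₁; have := abs_le_jap σ₂; linarith))
    R := log_or3 q pG q1 q2 (by have := jap_le_of s1; linarith)
    R₁ := log_or3 q1 pG q q2 (by have := jap_le_of s2; linarith)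
    R₂ := log_or3 q2 pG q q1 (by have := jap_le_of s3; linarith) }

/-! ### Alternatives for actual frequencies and dominating expressions -/

lemma par_of (j : ℕ) (hj : 2 ≤ j) (s : ℝ) (h1 : -(j : ℝ) + 1 / 2 ≤ s) (h2 : s ≤ -(j : ℝ) / 2) :
    Par j (1 / (2 * j)) s (s / j + 1) := by
  have hj' : (2:ℝ) ≤ j := by exact_mod_cast hj
  have : (j:ℝ) ≠ 0 := by positivity
  refine ⟨hj', by field_simp, by field_simp, h1, h2⟩

section
variable {J p s r C C' W u y x₁ u₁ y₁ x₂ u₂ y₂ : ℝ}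

/-- The bound `|k| ≤ ⟨k⟩ min(1,|k|)`, in logarithmic variables. -/
lemma abs_le_exp {k : ℝ} (hk : k ≠ 0) : |k| ≤ Real.exp (Real.log (jap k) - lowlog k) := by
  rw [← Real.exp_log (abs_pos.2 hk)]
  rw [Real.exp_log (abs_pos.2 hk)]
  exact (Real.log_le_iff_le_exp (abs_pos.2 hk)).1 (fr_of k hk).lo

/-- All interactions are covered by the alternatives, without ordering of the inputs. -/
lemma alt_X (j : ℕ) (P : Par j p s r) {k₁ k₂ σ₁ σ₂ σ : ℝ} (h1 : k₁ ≠ 0) (h2 : k₂ ≠ 0)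
    (h : k₁ + k₂ ≠ 0)
    (hσ : σ = σ₁ + σ₂ + (k₁ ^ (2 * j + 1) + k₂ ^ (2 * j + 1) - (k₁ + k₂) ^ (2 * j + 1))) :
    Alt j p s r (40 * (j * j * (14 * j + 21)))
      (Real.log (jap (k₁ + k₂)) - lowlog (k₁ + k₂) - Real.log (jap σ)
        + om j p s r (Real.log (jap (k₁ + k₂))) (Real.log (jap σ)))
      (lowlog (k₁ + k₂)) (Real.log (jap σ))
      (Real.log (jap k₁)) (lowlog k₁) (Real.log (jap σ₁))
      (Real.log (jap k₂)) (lowlog k₂) (Real.log (jap σ₂)) := by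
  have hj : 1 ≤ j := by have := P.hJ; have : 2 ≤ j := by exact_mod_cast this
                        omega
  rcases le_total |k₂| |k₁| with hk | hk
  · exact core_X P (wave_triple j hj h1 h2 h hk hσ) (by ring)
  · have := core_X P (wave_triple j hj (σ₁ := σ₂) (σ₂ := σ₁) (σ := σ) h2 h1
      (by rwa [add_comm]) hk (by rw [hσ, add_comm k₂ k₁]; ring)) (c := 14 * j + 21) (by ring)
    rw [add_comm k₂ k₁] at this
    exact this.symm

/-- Alternatives for the `L¹_τ` part of the norm at modulations above `⟨k⟩^{2j+1}`: either one of the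
alternatives `Alt` holds with the gain `⟨σ⟩^{1/2+p/4}` needed for Cauchy–Schwarz in `τ`, or the `Y^s`
weights of the inputs suffice, up to a square summable function of one of the three frequencies. -/
lemma alt_Y (j : ℕ) (P : Par j p s r) {k₁ k₂ σ₁ σ₂ σ : ℝ} (h1 : k₁ ≠ 0) (h2 : k₂ ≠ 0)
    (h : k₁ + k₂ ≠ 0)
    (hσ : σ = σ₁ + σ₂ + (k₁ ^ (2 * j + 1) + k₂ ^ (2 * j + 1) - (k₁ + k₂) ^ (2 * j + 1)))
    (hy : (2 * j + 1) * Real.log (jap (k₁ + k₂)) ≤ Real.log (jap σ)) :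
    Alt j p s r (40 * (j * j * (14 * j + 21)))
      ((1 + s) * Real.log (jap (k₁ + k₂)) - lowlog (k₁ + k₂) - Real.log (jap σ)
        + (1 / 2 + p / 4) * Real.log (jap σ))
      (lowlog (k₁ + k₂)) (Real.log (jap σ))
      (Real.log (jap k₁)) (lowlog k₁) (Real.log (jap σ₁))
      (Real.log (jap k₂)) (lowlog k₂) (Real.log (jap σ₂)) ∨
    (1 + s) * Real.log (jap (k₁ + k₂)) - lowlog (k₁ + k₂) - Real.log (jap σ)
      ≤ 40 * (j * j * (14 * j + 21)) + (s * Real.log (jap k₁) + s * Real.log (jap k₂)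
        + (p * lowlog k₁ - 3 / 4 * Real.log (jap k₁))) ∨
    (1 + s) * Real.log (jap (k₁ + k₂)) - lowlog (k₁ + k₂) - Real.log (jap σ)
      ≤ 40 * (j * j * (14 * j + 21)) + (s * Real.log (jap k₁) + s * Real.log (jap k₂)
        + (p * lowlog k₂ - 3 / 4 * Real.log (jap k₂))) ∨
    (1 + s) * Real.log (jap (k₁ + k₂)) - lowlog (k₁ + k₂) - Real.log (jap σ)
      ≤ 40 * (j * j * (14 * j + 21)) + (s * Real.log (jap k₁) + s * Real.log (jap k₂)
        + (p * lowlog (k₁ + k₂) - 3 / 4 * Real.log (jap (k₁ + k₂)))) := by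
  have hj : 1 ≤ j := by have := P.hJ; have : 2 ≤ j := by exact_mod_cast this
                        omega
  rcases le_total |k₂| |k₁| with hk | hk
  · rcases core_Y P (wave_triple j hj h1 h2 h hk hσ) (c := 14 * j + 21) (by ring) hy with h | h | h
    · exact Or.inl h
    · exact Or.inr (Or.inr (Or.inl h))
    · exact Or.inr (Or.inr (Or.inr h))
  · have := core_Y P (wave_triple j hj (σ₁ := σ₂) (σ₂ := σ₁) (σ := σ) h2 h1
      (by rwa [add_comm]) hk (by rw [hσ, add_comm k₂ k₁]; ring)) (c := 14 * j + 21) (by ring)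
      (by rwa [add_comm k₂ k₁])
    rw [add_comm k₂ k₁] at this
    rcases this with h | h | h
    · exact Or.inl h.symm
    · exact Or.inr (Or.inl (by linarith))
    · exact Or.inr (Or.inr (Or.inr (by linarith)))

/-- The real exponential, valued in `[0,∞]`. -/
def E (t : ℝ) : ℝ≥0∞ := ENNReal.ofReal (Real.exp t)

lemma E_add (a b : ℝ) : E (a + b) = E a * E b := by
  unfold E; rw [Real.exp_add, ENNReal.ofReal_mul (Real.exp_nonneg _)]

lemma E_mono {a b : ℝ} (h : a ≤ b) : E a ≤ E b :=
  ENNReal.ofReal_le_ofReal (Real.exp_le_exp.2 h)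

lemma E_sq (a : ℝ) : E a ^ 2 = E (2 * a) := by rw [sq, ← E_add]; ring_nf

lemma E_zero : E 0 = 1 := by simp [E]

lemma E_ne_top (a : ℝ) : E a ≠ ∞ := ENNReal.ofReal_ne_top

lemma E_ne_zero (a : ℝ) : E a ≠ 0 := by
  unfold E; rw [Ne, ENNReal.ofReal_eq_zero, not_le]; exact Real.exp_pos _

lemma measurable_E : Measurable E := by unfold E; fun_prop

/-- Square summable function of the frequency, in logarithmic variables. -/
def Th (p u x : ℝ) : ℝ≥0∞ := E (p * u - 3 / 4 * x)

/-- The sum of the dominating kernels, acting on `a₁ = Wf₁`, `b₁ = ⟨k₁⟩^s f₁`, etc. -/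
def Dom (p u y u₁ y₁ x₁ u₂ y₂ x₂ : ℝ) (a₁ b₁ a₂ b₂ : ℝ≥0∞) : ℝ≥0∞ :=
  E (-(3 / 4 * y₁) - 3 / 4 * y₂ - p * u) * (a₁ * a₂)
  + E (-(p * y) - 3 / 4 * y₂ - p * u₁) * (a₁ * a₂)
  + E (-(p * y) - 3 / 4 * y₁ - p * u₂) * (a₁ * a₂)
  + (Th p u₁ x₁ + Th p u₂ x₂) * (a₁ * b₂)
  + (Th p u₁ x₁ + Th p u₂ x₂) * (b₁ * a₂)
  + E (-((1 / 2 + p / 4) * y)) * (Th p u₁ x₁ + Th p u₂ x₂) * (a₁ * a₂)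

/-- Each alternative bounds the weighted product of the inputs by one of the terms of `Dom`. -/
lemma Alt.dom (h : Alt J p s r C W u y x₁ u₁ y₁ x₂ u₂ y₂) (f₁ f₂ : ℝ≥0∞) :
    E W * (f₁ * f₂) ≤ E C * Dom p u y u₁ y₁ x₁ u₂ y₂ x₂ (E (om J p s r x₁ y₁) * f₁)
      (E (s * x₁) * f₁) (E (om J p s r x₂ y₂) * f₂) (E (s * x₂) * f₂) := by
  have key : ∀ V : ℝ, W ≤ C + V → ∀ D : ℝ≥0∞, E V * (f₁ * f₂) ≤ D →
      E W * (f₁ * f₂) ≤ E C * D := by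
    intro V hV D hD
    calc E W * (f₁ * f₂) ≤ (E C * E V) * (f₁ * f₂) := by
          rw [← E_add]; gcongr; exact E_mono hV
      _ = E C * (E V * (f₁ * f₂)) := by ring
      _ ≤ _ := by gcongr
  unfold Dom Th
  rcases h with h | h | h | h | h | h | h | h | h
  · apply key _ h
    rw [show om J p s r x₁ y₁ + om J p s r x₂ y₂ - 3 / 4 * y₁ - 3 / 4 * y₂ - p * u
      = om J p s r x₁ y₁ + om J p s r x₂ y₂ + (-(3 / 4 * y₁) - 3 / 4 * y₂ - p * u) by ring]
    simp only [E_add]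
    refine le_trans (le_of_eq ?_) (le_add_right <| le_add_right <| le_add_right <|
      le_add_right <| le_add_right le_rfl)
    ring
  · apply key _ h
    rw [show om J p s r x₁ y₁ + om J p s r x₂ y₂ - p * y - 3 / 4 * y₂ - p * u₁
      = om J p s r x₁ y₁ + om J p s r x₂ y₂ + (-(p * y) - 3 / 4 * y₂ - p * u₁) by ring]
    simp only [E_add]
    refine le_trans (le_of_eq ?_) (le_add_right <| le_add_right <| le_add_right <|
      le_add_right <| le_add_left le_rfl)
    ring
  · apply key _ h
    rw [show om J p s r x₁ y₁ + om J p s r x₂ y₂ - p * y - 3 / 4 * y₁ - p * u₂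
      = om J p s r x₁ y₁ + om J p s r x₂ y₂ + (-(p * y) - 3 / 4 * y₁ - p * u₂) by ring]
    simp only [E_add]
    refine le_trans (le_of_eq ?_) (le_add_right <| le_add_right <| le_add_right <|
      le_add_left le_rfl)
    ring
  · apply key _ h
    simp only [E_add]
    refine le_trans (le_trans (le_of_eq ?_) (mul_le_mul_left (le_add_right (c := E (p * u₂ - 3 / 4 * x₂)) le_rfl) _))
      (le_add_right <| le_add_right <| le_add_left le_rfl)
    ring
  · apply key _ h
    simp only [E_add]
    refine le_trans (le_trans (le_of_eq ?_) (mul_le_mul_left (le_add_left (b := E (p * u₁ - 3 / 4 * x₁)) le_rfl) _))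
      (le_add_right <| le_add_right <| le_add_left le_rfl)
    ring
  · apply key _ h
    simp only [E_add]
    refine le_trans (le_trans (le_of_eq ?_) (mul_le_mul_left (le_add_right (c := E (p * u₂ - 3 / 4 * x₂)) le_rfl) _))
      (le_add_right <| le_add_left le_rfl)
    ring
  · apply key _ h
    simp only [E_add]
    refine le_trans (le_trans (le_of_eq ?_) (mul_le_mul_left (le_add_left (b := E (p * u₁ - 3 / 4 * x₁)) le_rfl) _))
      (le_add_right <| le_add_left le_rfl)
    ring
  · apply key _ h
    rw [sub_eq_add_neg (om J p s r x₁ y₁ + om J p s r x₂ y₂)]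
    generalize (1 / 2 + p / 4) * y = q
    simp only [E_add]
    rw [mul_add (E (-q)), add_mul (E (-q) * _)]
    refine le_trans (le_of_eq ?_) (le_add_left (le_add_right le_rfl))
    ring
  · apply key _ h
    rw [sub_eq_add_neg (om J p s r x₁ y₁ + om J p s r x₂ y₂)]
    generalize (1 / 2 + p / 4) * y = q
    simp only [E_add]
    rw [mul_add (E (-q)), add_mul (E (-q) * _)]
    refine le_trans (le_of_eq ?_) (le_add_left (le_add_left le_rfl))
    ring
end

/-! ### Bilinear operators on groups -/

/-- Cauchy–Schwarz for `[0,∞]`-valued functions. -/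
lemma cs_lintegral {α : Type*} [MeasurableSpace α] (ν : Measure α) {f g : α → ℝ≥0∞}
    (hf : AEMeasurable f ν) (hg : AEMeasurable g ν) :
    (∫⁻ a, f a * g a ∂ν) ^ 2 ≤ (∫⁻ a, f a ^ 2 ∂ν) * ∫⁻ a, g a ^ 2 ∂ν := by
  have h := ENNReal.lintegral_mul_le_Lp_mul_Lq ν (p := 2) (q := 2)
    ⟨by norm_num, by norm_num, by norm_num⟩ hf hg
  have h2 := pow_le_pow_left₀ (zero_le) h 2
  simp only [Pi.mul_apply] at h2
  refine h2.trans (le_of_eq ?_)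
  rw [mul_pow, ← ENNReal.rpow_natCast, ← ENNReal.rpow_natCast, ← ENNReal.rpow_mul,
    ← ENNReal.rpow_mul]
  norm_num

/-- Cauchy–Schwarz with a weight: `(∫ f g)² ≤ (∫ f² g) (∫ g)`. -/
lemma cs_weight {α : Type*} [MeasurableSpace α] (ν : Measure α) {f g : α → ℝ≥0∞}
    (hf : AEMeasurable f ν) (hg : AEMeasurable g ν) :
    (∫⁻ a, f a * g a ∂ν) ^ 2 ≤ (∫⁻ a, f a ^ 2 * g a ∂ν) * ∫⁻ a, g a ∂ν := by
  have e : ∀ a, g a = g a ^ (1 / 2 : ℝ) * g a ^ (1 / 2 : ℝ) := by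
    intro a
    rw [← ENNReal.rpow_add_of_nonneg _ _ (by norm_num) (by norm_num)]; norm_num
  have h := cs_lintegral ν (hf.mul (hg.pow_const (1 / 2 : ℝ))) (hg.pow_const (1 / 2 : ℝ))
  calc (∫⁻ a, f a * g a ∂ν) ^ 2
      = (∫⁻ a, (f a * g a ^ (1 / 2 : ℝ)) * g a ^ (1 / 2 : ℝ) ∂ν) ^ 2 := by
        congr 1; apply lintegral_congr; intro a; rw [mul_assoc, ← e a]
    _ ≤ _ := h
    _ = _ := by
      congr 1
      · apply lintegral_congr; intro a
        simp only [Pi.mul_apply]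
        rw [mul_pow, sq (g a ^ (1 / 2 : ℝ)), ← e a]
      · apply lintegral_congr; intro a; rw [sq, ← e a]

/-- Makes `ℤ × ℝ` a group with measurable subtraction. -/
instance prodMeasurableSub {A B : Type*} [AddCommGroup A] [MeasurableSpace A] [MeasurableSub₂ A]
    [AddCommGroup B] [MeasurableSpace B] [MeasurableSub₂ B] : MeasurableSub₂ (A × B) where
  measurable_sub := by
    show Measurable fun q : (A × B) × (A × B) => (q.1.1 - q.2.1, q.1.2 - q.2.2)
    fun_prop

/-- The invariances of a measure on a commutative group that enter the convolution estimates. -/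
structure TI {G : Type*} [AddCommGroup G] [MeasurableSpace G] (ν : Measure G) : Prop where
  right : ∀ (F : G → ℝ≥0∞), Measurable F → ∀ w, ∫⁻ z, F (z - w) ∂ν = ∫⁻ z, F z ∂ν
  left : ∀ (F : G → ℝ≥0∞), Measurable F → ∀ w, ∫⁻ z, F (w - z) ∂ν = ∫⁻ z, F z ∂ν

section
variable {G : Type*} [AddCommGroup G] [MeasurableSpace G] [MeasurableSub₂ G] {ν : Measure G}
  [SFinite ν]

/-- Bilinear operator with kernel `K`. -/
def bil (ν : Measure G) (K : G → G → ℝ≥0∞) (f g : G → ℝ≥0∞) (z : G) : ℝ≥0∞ :=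
  ∫⁻ w, K z w * (f w * g (z - w)) ∂ν

/-- Squared `L²` norm. -/
def N2 {α : Type*} [MeasurableSpace α] (ν : Measure α) (f : α → ℝ≥0∞) : ℝ≥0∞ :=
  ∫⁻ z, f z ^ 2 ∂ν

lemma measurable_bil {K : G → G → ℝ≥0∞} (hK : Measurable (Function.uncurry K)) {f g : G → ℝ≥0∞}
    (hf : Measurable f) (hg : Measurable g) : Measurable (bil ν K f g) := by
  unfold bil
  apply Measurable.lintegral_prod_right' (f := fun q : G × G => K q.1 q.2 * (f q.2 * g (q.1 - q.2)))
  fun_prop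

/-- Exchange of the two inputs. -/
lemma bil_symm (hν : TI ν) {K : G → G → ℝ≥0∞} (hK : Measurable (Function.uncurry K))
    {f g : G → ℝ≥0∞} (hf : Measurable f) (hg : Measurable g) (z : G) :
    bil ν K f g z = bil ν (fun z w => K z (z - w)) g f z := by
  unfold bil
  rw [← hν.left (fun w => K z w * (f w * g (z - w))) (by fun_prop) z]
  apply lintegral_congr; intro w
  rw [sub_sub_cancel, mul_comm (f _)]

/-- The integral of a convolution is the product of the integrals. -/
lemma conv_N2 (hν : TI ν) {f g : G → ℝ≥0∞} (hf : Measurable f) (hg : Measurable g) :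
    ∫⁻ z, ∫⁻ w, f w * g (z - w) ∂ν ∂ν = (∫⁻ z, f z ∂ν) * ∫⁻ z, g z ∂ν := by
  rw [lintegral_lintegral_swap (by fun_prop)]
  have : ∀ w, ∫⁻ z, f w * g (z - w) ∂ν = f w * ∫⁻ z, g z ∂ν := by
    intro w
    rw [lintegral_const_mul _ (by fun_prop), hν.right g hg]
  simp_rw [this]
  rw [lintegral_mul_const _ hf]

/-- Kernel square integrable in the input variable. -/
lemma bil_out (hν : TI ν) {K : G → G → ℝ≥0∞} (hK : Measurable (Function.uncurry K))
    {f g : G → ℝ≥0∞} (hf : Measurable f) (hg : Measurable g) {A : ℝ≥0∞}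
    (hA : ∀ z, ∫⁻ w, K z w ^ 2 ∂ν ≤ A) :
    N2 ν (bil ν K f g) ≤ A * (N2 ν f * N2 ν g) := by
  unfold N2
  calc ∫⁻ z, bil ν K f g z ^ 2 ∂ν ≤ ∫⁻ z, A * ∫⁻ w, f w ^ 2 * g (z - w) ^ 2 ∂ν ∂ν := by
        apply lintegral_mono; intro z
        have h := cs_lintegral ν (f := fun w => K z w) (g := fun w => f w * g (z - w))
          (by fun_prop) (by fun_prop)
        refine h.trans ?_
        simp only [mul_pow]
        gcongr
        exact hA z
    _ = A * ∫⁻ z, ∫⁻ w, f w ^ 2 * g (z - w) ^ 2 ∂ν ∂ν := by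
        rw [lintegral_const_mul]
        apply Measurable.lintegral_prod_right' (f := fun q : G × G => f q.2 ^ 2 * g (q.1 - q.2) ^ 2)
        fun_prop
    _ = _ := by
        rw [conv_N2 hν (f := fun w => f w ^ 2) (g := fun w => g w ^ 2) (by fun_prop) (by fun_prop)]

/-- Kernel square integrable in the output variable at fixed first input. -/
lemma bil_in (hν : TI ν) {K : G → G → ℝ≥0∞} (hK : Measurable (Function.uncurry K))
    {f g : G → ℝ≥0∞} (hf : Measurable f) (hg : Measurable g) {A : ℝ≥0∞}
    (hA : ∀ w, ∫⁻ z, K z w ^ 2 ∂ν ≤ A) :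
    N2 ν (bil ν K f g) ≤ A * (N2 ν f * N2 ν g) := by
  unfold N2
  calc ∫⁻ z, bil ν K f g z ^ 2 ∂ν
      ≤ ∫⁻ z, (∫⁻ w, K z w ^ 2 * f w ^ 2 ∂ν) * ∫⁻ w, g w ^ 2 ∂ν ∂ν := by
        apply lintegral_mono; intro z
        have h := cs_lintegral ν (f := fun w => K z w * f w) (g := fun w => g (z - w))
          (by fun_prop) (by fun_prop)
        rw [hν.left (fun w => g w ^ 2) (by fun_prop) z] at h
        simp only [mul_pow] at h
        refine le_trans (le_of_eq ?_) h
        show (∫⁻ w, K z w * (f w * g (z - w)) ∂ν) ^ 2 = _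
        congr 1
        apply lintegral_congr; intro w; ring
    _ = (∫⁻ z, ∫⁻ w, K z w ^ 2 * f w ^ 2 ∂ν ∂ν) * ∫⁻ w, g w ^ 2 ∂ν := by
        rw [lintegral_mul_const]
        apply Measurable.lintegral_prod_right' (f := fun q : G × G => K q.1 q.2 ^ 2 * f q.2 ^ 2)
        fun_prop
    _ ≤ (∫⁻ w, A * f w ^ 2 ∂ν) * ∫⁻ w, g w ^ 2 ∂ν := by
        refine mul_le_mul_left ?_ _
        rw [lintegral_lintegral_swap (by fun_prop)]
        apply lintegral_mono; intro w
        simp only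
        rw [lintegral_mul_const _ (by fun_prop)]
        gcongr
        exact hA w
    _ = _ := by rw [lintegral_const_mul _ (by fun_prop), mul_assoc]

/-- Kernel square integrable in the output variable at fixed second input. -/
lemma bil_in' (hν : TI ν) {K : G → G → ℝ≥0∞} (hK : Measurable (Function.uncurry K))
    {f g : G → ℝ≥0∞} (hf : Measurable f) (hg : Measurable g) {A : ℝ≥0∞}
    (hA : ∀ w, ∫⁻ z, K z (z - w) ^ 2 ∂ν ≤ A) :
    N2 ν (bil ν K f g) ≤ A * (N2 ν f * N2 ν g) := by
  have := bil_in hν (K := fun z w => K z (z - w)) (by fun_prop) hg hf hA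
  rw [mul_comm (N2 ν f)]
  refine le_trans (le_of_eq ?_) this
  congr 1; funext z
  exact bil_symm hν hK hf hg z

/-- Kernel depending on the output variable only, and square integrable. -/
lemma bil_ker_out (hν : TI ν) {κ : G → ℝ≥0∞} (hκ : Measurable κ)
    {f g : G → ℝ≥0∞} (hf : Measurable f) (hg : Measurable g) {A : ℝ≥0∞}
    (hA : N2 ν κ ≤ A) :
    N2 ν (bil ν (fun z _ => κ z) f g) ≤ A * (N2 ν f * N2 ν g) := by
  calc N2 ν (bil ν (fun z _ => κ z) f g) ≤ ∫⁻ z, κ z ^ 2 * (N2 ν f * N2 ν g) ∂ν := by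
        unfold N2 bil
        apply lintegral_mono; intro z
        simp only
        rw [lintegral_const_mul _ (by fun_prop), mul_pow]
        gcongr
        have h := cs_lintegral ν (f := fun w => f w) (g := fun w => g (z - w))
          (by fun_prop) (by fun_prop)
        rwa [hν.left (fun w => g w ^ 2) (by fun_prop) z] at h
    _ = N2 ν κ * (N2 ν f * N2 ν g) := by
        rw [lintegral_mul_const _ (by fun_prop)]; rfl
    _ ≤ _ := by gcongr

/-- Young's inequality `L² * L¹ ⊂ L²`. -/
lemma young (hν : TI ν) {f g : G → ℝ≥0∞} (hf : Measurable f) (hg : Measurable g) :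
    N2 ν (fun z => ∫⁻ w, f w * g (z - w) ∂ν) ≤ N2 ν f * (∫⁻ z, g z ∂ν) ^ 2 := by
  unfold N2
  calc ∫⁻ z, (∫⁻ w, f w * g (z - w) ∂ν) ^ 2 ∂ν
      ≤ ∫⁻ z, (∫⁻ w, f w ^ 2 * g (z - w) ∂ν) * ∫⁻ w, g w ∂ν ∂ν := by
        apply lintegral_mono; intro z
        have h := cs_weight ν (f := fun w => f w) (g := fun w => g (z - w))
          (by fun_prop) (by fun_prop)
        rwa [hν.left (fun w => g w) (by fun_prop) z] at h
    _ = _ := by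
        rw [lintegral_mul_const, conv_N2 hν (f := fun w => f w ^ 2) (by fun_prop) hg]
        · ring
        · apply Measurable.lintegral_prod_right' (f := fun q : G × G => f q.2 ^ 2 * g (q.1 - q.2))
          fun_prop
end

/-- Mixed estimate: an `L²` factor against an `L²_k L¹_τ` factor, the kernel depending on the
frequencies only. -/
lemma bil_mixed {A₁ A₂ : Type*} [AddCommGroup A₁] [MeasurableSpace A₁] [MeasurableSub₂ A₁]
    [AddCommGroup A₂] [MeasurableSpace A₂] [MeasurableSub₂ A₂]
    {ν₁ : Measure A₁} {ν₂ : Measure A₂} [SFinite ν₁] [SFinite ν₂] (h₁ : TI ν₁) (h₂ : TI ν₂)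
    {κ : A₁ → A₁ → ℝ≥0∞} (hκ : Measurable (Function.uncurry κ)) {f g : A₁ × A₂ → ℝ≥0∞}
    (hf : Measurable f) (hg : Measurable g) {A : ℝ≥0∞} (hA : ∀ m, ∫⁻ w, κ m w ^ 2 ∂ν₁ ≤ A) :
    N2 (ν₁.prod ν₂) (bil (ν₁.prod ν₂) (fun z w => κ z.1 w.1) f g) ≤
      A * (N2 (ν₁.prod ν₂) f * N2 ν₁ (fun m => ∫⁻ t, g (m, t) ∂ν₂)) := by
  have hI : Measurable (fun q : (A₁ × A₂) × A₁ =>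
      ∫⁻ t, f (q.2, t) * g (q.1.1 - q.2, q.1.2 - t) ∂ν₂) := by
    apply Measurable.lintegral_prod_right'
      (f := fun r : ((A₁ × A₂) × A₁) × A₂ => f (r.1.2, r.2) * g (r.1.1.1 - r.1.2, r.1.1.2 - r.2))
    fun_prop
  have hG : Measurable (fun m => ∫⁻ t, g (m, t) ∂ν₂) :=
    Measurable.lintegral_prod_right' (f := g) hg
  have hF : Measurable (fun m => ∫⁻ t, f (m, t) ^ 2 ∂ν₂) :=
    Measurable.lintegral_prod_right' (f := fun q => f q ^ 2) (by fun_prop)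
  have step : ∀ z : A₁ × A₂, bil (ν₁.prod ν₂) (fun z w => κ z.1 w.1) f g z ^ 2 ≤
      A * ∫⁻ m, (∫⁻ t, f (m, t) * g (z.1 - m, z.2 - t) ∂ν₂) ^ 2 ∂ν₁ := by
    intro z
    have hκz : Measurable (κ z.1) := hκ.comp measurable_prodMk_left
    have hg' : Measurable fun w : A₁ × A₂ => g (z - w) :=
      hg.comp (measurable_const.sub measurable_id)
    have hm : Measurable fun w : A₁ × A₂ => κ z.1 w.1 * (f w * g (z - w)) :=
      (hκz.comp measurable_fst).mul (hf.mul hg')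
    have hm' : ∀ m, Measurable fun t : A₂ => f (m, t) * g (z.1 - m, z.2 - t) := fun m =>
      (hf.mul hg').comp (measurable_prodMk_left (x := m))
    have e : bil (ν₁.prod ν₂) (fun z w => κ z.1 w.1) f g z
        = ∫⁻ m, κ z.1 m * ∫⁻ t, f (m, t) * g (z.1 - m, z.2 - t) ∂ν₂ ∂ν₁ := by
      unfold bil
      rw [lintegral_prod _ hm.aemeasurable]
      apply lintegral_congr; intro m
      rw [← lintegral_const_mul _ (hm' m)]
      rfl
    rw [e]
    refine (cs_lintegral ν₁ hκz.aemeasurable ?_).trans ?_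
    · exact (hI.comp (by fun_prop : Measurable fun m : A₁ => (z, m))).aemeasurable
    · gcongr
      exact hA z.1
  calc N2 (ν₁.prod ν₂) (bil (ν₁.prod ν₂) (fun z w => κ z.1 w.1) f g)
      ≤ ∫⁻ z, A * ∫⁻ m, (∫⁻ t, f (m, t) * g (z.1 - m, z.2 - t) ∂ν₂) ^ 2 ∂ν₁ ∂(ν₁.prod ν₂) := by
        unfold N2; exact lintegral_mono step
    _ = A * ∫⁻ m, ∫⁻ z, (∫⁻ t, f (m, t) * g (z.1 - m, z.2 - t) ∂ν₂) ^ 2 ∂(ν₁.prod ν₂) ∂ν₁ := by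
        rw [lintegral_const_mul, lintegral_lintegral_swap]
        · exact (hI.pow_const 2).aemeasurable
        · exact (hI.pow_const 2).lintegral_prod_right'
    _ = A * ∫⁻ m, ∫⁻ m', N2 ν₂ (fun τ => ∫⁻ t, f (m, t) * g (m' - m, τ - t) ∂ν₂) ∂ν₁ ∂ν₁ := by
        congr 1
        apply lintegral_congr; intro m
        rw [lintegral_prod]
        · rfl
        · exact ((hI.comp (by fun_prop : Measurable fun z : A₁ × A₂ => (z, m))).pow_const 2).aemeasurable
    _ ≤ A * ∫⁻ m, ∫⁻ m', (∫⁻ t, f (m, t) ^ 2 ∂ν₂) * (∫⁻ t, g (m' - m, t) ∂ν₂) ^ 2 ∂ν₁ ∂ν₁ := by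
        gcongr with m m'
        exact young h₂ (f := fun t => f (m, t)) (g := fun t => g (m' - m, t)) (by fun_prop) (by fun_prop)
    _ = A * ∫⁻ m, (∫⁻ t, f (m, t) ^ 2 ∂ν₂) * N2 ν₁ (fun m => ∫⁻ t, g (m, t) ∂ν₂) ∂ν₁ := by
        congr 1
        apply lintegral_congr; intro m
        rw [lintegral_const_mul]
        · rw [h₁.right (fun m' => (∫⁻ t, g (m', t) ∂ν₂) ^ 2) (hG.pow_const 2)]; rfl
        · exact (hG.comp (by fun_prop : Measurable fun m' : A₁ => m' - m)).pow_const 2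
    _ = _ := by
        rw [lintegral_mul_const _ hF]
        congr 2
        unfold N2
        rw [lintegral_prod _ (by fun_prop)]

/-! ### The interaction polynomial and the lattice measure -/

/-- The even polynomial `(d + y)ⁿ + (d - y)ⁿ`, `n = 2j + 1`. -/
def qq (j : ℕ) (d y : ℝ) : ℝ := (d + y) ^ (2 * j + 1) + (d - y) ^ (2 * j + 1)

lemma qq_neg (j : ℕ) (d y : ℝ) : qq j d (-y) = qq j d y := by
  unfold qq; rw [sub_neg_eq_add, ← sub_eq_add_neg, add_comm]

lemma qq_neg' (j : ℕ) (d y : ℝ) : qq j (-d) y = -qq j d y := by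
  unfold qq
  rw [show -d + y = -(d - y) by ring, show -d - y = -(d + y) by ring,
    Odd.neg_pow ⟨j, rfl⟩, Odd.neg_pow ⟨j, rfl⟩]
  ring

/-- Lower bound entering, by induction on `j`, the proof of `qq_sub`. -/
lemma qq_ge (j : ℕ) {d y : ℝ} (hd : 0 ≤ d) (hy : 0 ≤ y) : 2 * d * y ^ (2 * j) ≤ qq j d y := by
  induction j with
  | zero => unfold qq; simp; linarith
  | succ j ih =>
    have e : qq (j + 1) d y = (d ^ 2 + y ^ 2) * qq j d y
        + 2 * d * y * ((d + y) ^ (2 * j + 1) - (d - y) ^ (2 * j + 1)) := by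
      unfold qq; ring
    have m : (d - y) ^ (2 * j + 1) ≤ (d + y) ^ (2 * j + 1) :=
      (Odd.strictMono_pow (R := ℝ) ⟨j, rfl⟩).monotone (by linarith)
    have h0 : 0 ≤ 2 * d * y ^ (2 * j) := by positivity
    have h1 : 0 ≤ 2 * d * y * ((d + y) ^ (2 * j + 1) - (d - y) ^ (2 * j + 1)) :=
      mul_nonneg (by positivity) (by linarith)
    have h2 : y ^ 2 * (2 * d * y ^ (2 * j)) ≤ (d ^ 2 + y ^ 2) * qq j d y := by
      apply mul_le_mul _ ih h0 (by positivity)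
      nlinarith [sq_nonneg d]
    rw [e]
    calc 2 * d * y ^ (2 * (j + 1)) = y ^ 2 * (2 * d * y ^ (2 * j)) := by ring
      _ ≤ _ := by linarith

/-- Quantitative monotonicity of `qq j d` on the positive half-line. -/
lemma qq_sub (j : ℕ) {d y y' : ℝ} (hd : 0 ≤ d) (hy' : 0 ≤ y') (h : y' ≤ y) :
    2 * d * (y ^ (2 * j) - y' ^ (2 * j)) ≤ qq j d y - qq j d y' := by
  induction j with
  | zero => unfold qq; simp
  | succ j ih =>
    have hy : 0 ≤ y := hy'.trans h
    have e : ∀ z, qq (j + 1) d z = (d ^ 2 + z ^ 2) * qq j d z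
        + 2 * d * (z * ((d + z) ^ (2 * j + 1) - (d - z) ^ (2 * j + 1))) := by
      intro z; unfold qq; ring
    have mono := (Odd.strictMono_pow (R := ℝ) (n := 2 * j + 1) ⟨j, rfl⟩).monotone
    have m1 : (d + y') ^ (2 * j + 1) ≤ (d + y) ^ (2 * j + 1) := mono (by linarith)
    have m2 : (d - y) ^ (2 * j + 1) ≤ (d - y') ^ (2 * j + 1) := mono (by linarith)
    have m3 : (d - y') ^ (2 * j + 1) ≤ (d + y') ^ (2 * j + 1) := mono (by linarith)
    have h1 : 2 * d * (y' * ((d + y') ^ (2 * j + 1) - (d - y') ^ (2 * j + 1)))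
        ≤ 2 * d * (y * ((d + y) ^ (2 * j + 1) - (d - y) ^ (2 * j + 1))) := by
      apply mul_le_mul_of_nonneg_left _ (by positivity)
      apply mul_le_mul h (by linarith) (by linarith) hy
    have hdiff : 0 ≤ y ^ (2 * j) - y' ^ (2 * j) := by
      have := pow_le_pow_left₀ hy' h (2 * j); linarith
    have h2 : y' ^ 2 * (2 * d * (y ^ (2 * j) - y' ^ (2 * j)))
        ≤ (d ^ 2 + y' ^ 2) * (qq j d y - qq j d y') := by
      apply mul_le_mul _ ih (by positivity) (by positivity)
      nlinarith [sq_nonneg d]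
    have hsq : 0 ≤ y ^ 2 - y' ^ 2 := by nlinarith
    have h3 := mul_le_mul_of_nonneg_left (qq_ge j hd hy) hsq
    rw [e, e]
    have e2 : 2 * d * (y ^ (2 * (j + 1)) - y' ^ (2 * (j + 1))) =
      y' ^ 2 * (2 * d * (y ^ (2 * j) - y' ^ (2 * j))) + (y ^ 2 - y' ^ 2) * (2 * d * y ^ (2 * j)) := by
      ring
    rw [e2]
    linarith

/-- The gap estimate `qq_gap` on the positive half-line, for `d ≥ 0`. -/
lemma qq_gap_pos (j : ℕ) (hj : 1 ≤ j) {d y y' : ℝ} (hd : 0 ≤ d) (hy : 0 ≤ y) (hy' : 0 ≤ y') :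
    2 * d * |y - y'| ^ (2 * j) ≤ |qq j d y - qq j d y'| := by
  wlog h : y' ≤ y generalizing y y'
  · rw [abs_sub_comm, abs_sub_comm (qq j d y)]
    exact this hy' hy (by linarith)
  have h1 := qq_sub j hd hy' h
  have h2 := pow_add_pow_le (sub_nonneg.2 h) hy' (n := 2 * j) (by omega)
  rw [sub_add_cancel] at h2
  rw [abs_of_nonneg (sub_nonneg.2 h)]
  refine le_trans ?_ (h1.trans (le_abs_self _))
  apply mul_le_mul_of_nonneg_left _ (by positivity)
  linarith

/-- On each side of its axis of symmetry, the resonance polynomial separates points. -/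
lemma qq_gap (j : ℕ) (hj : 1 ≤ j) {d y y' : ℝ} (h : 0 ≤ y ∧ 0 ≤ y' ∨ y ≤ 0 ∧ y' ≤ 0) :
    2 * |d| * |y - y'| ^ (2 * j) ≤ |qq j d y - qq j d y'| := by
  have key : ∀ d : ℝ, 0 ≤ d → 2 * |d| * |y - y'| ^ (2 * j) ≤ |qq j d y - qq j d y'| := by
    intro d hd
    rw [abs_of_nonneg hd]
    rcases h with ⟨h1, h2⟩ | ⟨h1, h2⟩
    · exact qq_gap_pos j hj hd h1 h2
    · have := qq_gap_pos j hj hd (neg_nonneg.2 h1) (neg_nonneg.2 h2)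
      rw [qq_neg, qq_neg, show -y - -y' = -(y - y') by ring, abs_neg] at this
      exact this
  rcases le_total 0 d with hd | hd
  · exact key d hd
  · have := key (-d) (by linarith)
    rw [qq_neg', qq_neg', abs_neg, show -qq j d y - -qq j d y' = -(qq j d y - qq j d y') by ring,
      abs_neg] at this
    exact this

/-- Normalized counting measure on the rescaled lattice of frequencies `m/λ`. -/
def nuZ (lam : ℝ) : Measure ℤ := ENNReal.ofReal (1 / lam) • Measure.count

instance (lam : ℝ) : SFinite (nuZ lam) := by unfold nuZ; infer_instance

lemma lint_nuZ (lam : ℝ) (F : ℤ → ℝ≥0∞) :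
    ∫⁻ m, F m ∂(nuZ lam) = ENNReal.ofReal (1 / lam) * ∑' m, F m := by
  unfold nuZ; rw [lintegral_smul_measure, lintegral_count]; rfl

lemma TI_nuZ (lam : ℝ) : TI (nuZ lam) := by
  constructor
  · intro F _ w
    rw [lint_nuZ, lint_nuZ]
    congr 1
    exact (Equiv.subRight w).tsum_eq F
  · intro F _ w
    rw [lint_nuZ, lint_nuZ]
    congr 1
    exact (Equiv.subLeft w).tsum_eq F

lemma TI_volume : TI (volume : Measure ℝ) :=
  ⟨fun F _ w => lintegral_sub_right_eq_self F w, fun F _ w => lintegral_sub_left_eq_self F w⟩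

lemma TI_prod {A B : Type*} [AddCommGroup A] [MeasurableSpace A] [MeasurableSub₂ A]
    [AddCommGroup B] [MeasurableSpace B] [MeasurableSub₂ B] {μ : Measure A} {ν : Measure B}
    [SFinite μ] [SFinite ν] (h1 : TI μ) (h2 : TI ν) : TI (μ.prod ν) := by
  constructor
  · intro F hF w
    have hm : Measurable fun z : A × B => F (z - w) := by fun_prop
    rw [lintegral_prod _ hm.aemeasurable, lintegral_prod _ hF.aemeasurable]
    rw [← h1.right (fun a => ∫⁻ b, F (a, b) ∂ν) (Measurable.lintegral_prod_right' hF) w.1]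
    apply lintegral_congr; intro a
    exact h2.right (fun b => F (a - w.1, b)) (by fun_prop) w.2
  · intro F hF w
    have hm : Measurable fun z : A × B => F (w - z) := by fun_prop
    rw [lintegral_prod _ hm.aemeasurable, lintegral_prod _ hF.aemeasurable]
    rw [← h1.left (fun a => ∫⁻ b, F (a, b) ∂ν) (Measurable.lintegral_prod_right' hF) w.1]
    apply lintegral_congr; intro a
    exact h2.left (fun b => F (w.1 - a, b)) (by fun_prop) w.2

/-- Telescoping bound for the sum of a function comparable to `t^{-1/2}` near zero and to
`t^{-3/2}` at infinity. -/
lemma tele_sum {l : ℝ} (hl : 0 < l) (N : ℕ) :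
    ∑ i ∈ Finset.range N, l / (√(l * (i + 1)) * (1 + √(l * (i + 1))) ^ 2) ≤ 2 := by
  have key : ∑ i ∈ Finset.range N, l / (√(l * (i + 1)) * (1 + √(l * (i + 1))) ^ 2)
      ≤ 2 * (1 - 1 / (1 + √(l * N))) := by
    induction N with
    | zero => simp
    | succ N ih =>
      rw [Finset.sum_range_succ]
      push_cast
      set a := √(l * N) with ha
      set b := √(l * (N + 1)) with hb
      have ha0 : 0 ≤ a := Real.sqrt_nonneg _
      have hb0 : 0 < b := Real.sqrt_pos.2 (by positivity)
      have hab : a ≤ b := Real.sqrt_le_sqrt (by nlinarith)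
      have hsq : l = (b - a) * (b + a) := by
        have h1 : a ^ 2 = l * N := Real.sq_sqrt (by positivity)
        have h2 : b ^ 2 = l * (N + 1) := Real.sq_sqrt (by positivity)
        linarith [h1, h2]
      have : l / (b * (1 + b) ^ 2) ≤ 2 * (1 / (1 + a) - 1 / (1 + b)) := by
        rw [div_sub_div _ _ (by positivity) (by positivity), ← mul_div_assoc,
          div_le_div_iff₀ (by positivity) (by positivity), hsq]
        have : 0 ≤ b - a := by linarith
        have e : 0 ≤ (b - a) * (1 + b) * (2 * b * (1 + b) - (b + a) * (1 + a)) := by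
          apply mul_nonneg (by positivity)
          nlinarith
        nlinarith [e]
      linarith
  have : 0 ≤ 1 / (1 + √(l * N)) := by positivity
  linarith

/-! ### Lattice sums -/

lemma lowlog_nonneg (k : ℝ) : 0 ≤ lowlog k := by
  unfold lowlog
  rw [neg_nonneg]
  exact Real.log_nonpos (by positivity) (min_le_left _ _)

lemma logjap_nonneg (k : ℝ) : 0 ≤ Real.log (jap k) := Real.log_nonneg (one_le_jap k)

lemma lowlog_neg (k : ℝ) : lowlog (-k) = lowlog k := by unfold lowlog; rw [abs_neg]

lemma jap_neg (k : ℝ) : jap (-k) = jap k := by unfold jap; rw [neg_sq]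

/-- Pointwise majorant of the squared weight, of the form summed in `tele_sum`. -/
lemma theta_pt {p : ℝ} (h0 : 0 ≤ p) (hp : p ≤ 1 / 4) {t : ℝ} (ht : 0 < t) :
    Real.exp (2 * (p * lowlog t - 3 / 4 * Real.log (jap t))) ≤ 4 / (√t * (1 + √t) ^ 2) := by
  have hs : 0 < √t := Real.sqrt_pos.2 ht
  have hst : √t ^ 2 = t := Real.sq_sqrt ht.le
  have hlog : Real.log √t = Real.log t / 2 := Real.log_sqrt ht.le
  have hexp : Real.exp (Real.log t / 2) = √t := by rw [← hlog, Real.exp_log hs]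
  have hj := logjap_nonneg t
  rcases le_total t 1 with h | h
  · have hl : lowlog t = -Real.log t := by
      unfold lowlog; rw [abs_of_pos ht, min_eq_right h]
    have hln : Real.log t ≤ 0 := Real.log_nonpos ht.le h
    have h1 : Real.exp (2 * (p * lowlog t - 3 / 4 * Real.log (jap t))) ≤ 1 / √t := by
      rw [one_div, ← hexp, ← Real.exp_neg, hl]
      apply Real.exp_le_exp.2
      nlinarith
    refine h1.trans ?_
    have : √t ≤ 1 := by rw [Real.sqrt_le_iff]; constructor <;> linarith
    rw [div_le_div_iff₀ hs (by positivity)]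
    nlinarith [mul_nonneg hs.le (sub_nonneg.2 this), mul_nonneg hs.le (mul_nonneg hs.le (sub_nonneg.2 this))]
  · have hl : lowlog t = 0 := by
      unfold lowlog; rw [abs_of_pos ht, min_eq_left h]; simp
    have hjt : Real.log t ≤ Real.log (jap t) :=
      Real.log_le_log ht ((le_abs_self t).trans (abs_le_jap t))
    have h1 : Real.exp (2 * (p * lowlog t - 3 / 4 * Real.log (jap t))) ≤ 1 / √t ^ 3 := by
      rw [one_div, ← hexp, ← Real.exp_nat_mul, ← Real.exp_neg, hl]
      apply Real.exp_le_exp.2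
      push_cast
      linarith
    refine h1.trans ?_
    have : 1 ≤ √t := Real.one_le_sqrt.2 h
    rw [div_le_div_iff₀ (by positivity) (by positivity)]
    nlinarith [mul_nonneg hs.le (sub_nonneg.2 this), mul_nonneg hs.le (mul_nonneg hs.le (sub_nonneg.2 this))]

/-- Uniform square summability of the weight `min(1,|k|)^{-p} ⟨k⟩^{-3/4}`. -/
lemma theta_sum {lam p : ℝ} (hl : 1 ≤ lam) (h0 : 0 ≤ p) (hp : p ≤ 1 / 4) :
    ∫⁻ m, Th p (lowlog (m / lam)) (Real.log (jap (m / lam))) ^ 2 ∂(nuZ lam) ≤ 17 := by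
  have hl0 : 0 < lam := by linarith
  have hd : 0 < 1 / lam := by positivity
  rw [lint_nuZ]
  set F : ℤ → ℝ≥0∞ := fun m => Th p (lowlog (m / lam)) (Real.log (jap (m / lam))) ^ 2 with hF
  have even : ∀ m, F (-m) = F m := by
    intro m; simp only [hF]; push_cast; rw [neg_div, lowlog_neg, jap_neg]
  have F0 : F 0 = 1 := by
    simp [hF, Th, lowlog, jap, E_zero]
  have hpos : ENNReal.ofReal (1 / lam) * ∑' i : ℕ, F ((i : ℤ) + 1) ≤ 8 := by
    rw [← ENNReal.tsum_mul_left]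
    apply ENNReal.tsum_le_of_sum_range_le
    intro N
    have pt : ∀ i : ℕ, ENNReal.ofReal (1 / lam) * F ((i : ℤ) + 1) ≤
          ENNReal.ofReal (4 * ((1 / lam) / (√(1 / lam * (i + 1)) * (1 + √(1 / lam * (i + 1))) ^ 2))) := by
      intro i
      have ht : 0 < 1 / lam * ((i : ℝ) + 1) := by positivity
      have e : (((i : ℤ) + 1 : ℤ) : ℝ) / lam = 1 / lam * ((i : ℝ) + 1) := by
        push_cast; ring
      simp only [hF]
      rw [e]
      unfold Th
      rw [E_sq, E, ← ENNReal.ofReal_mul hd.le]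
      apply ENNReal.ofReal_le_ofReal
      have := mul_le_mul_of_nonneg_left (theta_pt h0 hp ht) hd.le
      refine this.trans (le_of_eq ?_)
      ring
    calc ∑ i ∈ Finset.range N, ENNReal.ofReal (1 / lam) * F ((i : ℤ) + 1)
        ≤ ∑ i ∈ Finset.range N,
          ENNReal.ofReal (4 * ((1 / lam) / (√(1 / lam * (i + 1)) * (1 + √(1 / lam * (i + 1))) ^ 2))) :=
          Finset.sum_le_sum fun i _ => pt i
      _ = ENNReal.ofReal (4 * ∑ i ∈ Finset.range N,
          (1 / lam) / (√(1 / lam * (i + 1)) * (1 + √(1 / lam * (i + 1))) ^ 2)) := by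
          rw [Finset.mul_sum, ENNReal.ofReal_sum_of_nonneg]
          intro i _; positivity
      _ ≤ ENNReal.ofReal 8 := by
          apply ENNReal.ofReal_le_ofReal
          have := tele_sum hd N
          linarith
      _ = 8 := by norm_num
  have hs : ∑' m : ℤ, F m = F 0 + ∑' i : ℕ, F ((i : ℤ) + 1) + ∑' i : ℕ, F ((i : ℤ) + 1) := by
    have h := HasSum.of_nat_of_neg_add_one (f := F) ENNReal.summable.hasSum ENNReal.summable.hasSum
    rw [h.tsum_eq, tsum_eq_zero_add' ENNReal.summable]
    simp only [even]
    push_cast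
    rfl
  rw [hs, F0, mul_add, mul_add, mul_one]
  have : ENNReal.ofReal (1 / lam) ≤ 1 := by
    rw [← ENNReal.ofReal_one]
    apply ENNReal.ofReal_le_ofReal
    rw [div_le_one hl0]; exact hl
  calc _ ≤ (1 + 8 + 8 : ℝ≥0∞) := by gcongr
    _ = 17 := by norm_num

/-- Summability of `⟨k⟩^{-2}` over the lattice, uniform in `λ`. -/
lemma japsq_sum {lam : ℝ} (hl : 1 ≤ lam) :
    ∫⁻ m, E (-(2 * Real.log (jap ((m : ℤ) / lam)))) ∂(nuZ lam) ≤ 17 := by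
  refine le_trans (lintegral_mono fun m => ?_) (theta_sum hl (le_refl 0) (by norm_num))
  unfold Th
  rw [E_sq]
  apply E_mono
  have := logjap_nonneg ((m : ℝ) / lam)
  linarith

/-- One term of the counting estimate: a point at distance `D` from the minimiser. -/
lemma count_pt (j : ℕ) (hj : 1 ≤ j) {p k D t : ℝ} (hp : 2 * j * p = 1) (hk : k ≠ 0)
    (ht : |k| * |D| ^ (2 * j) ≤ 2 * |t|) :
    -(2 * p * (lowlog k + Real.log (jap t))) ≤ Real.log 4 - 2 * Real.log (jap D) := by
  have hj0 : (0 : ℝ) < j := by exact_mod_cast hj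
  have hU := lowlog_nonneg k
  have hS := logjap_nonneg t
  have hJD : Real.log (jap D) = Real.log (1 + D ^ 2) / 2 := by
    unfold jap; rw [Real.log_sqrt (by positivity)]
  have hlow : 1 ≤ Real.exp (lowlog k) * |k| := by
    have hk' := abs_pos.2 hk
    unfold lowlog
    rw [Real.exp_neg, Real.exp_log (by positivity), ← div_eq_inv_mul, le_div_iff₀ (by positivity),
      one_mul]
    exact min_le_right _ _
  have hmain : (1 + D ^ 2) ^ j ≤ 4 ^ j * Real.exp (lowlog k + Real.log (jap t)) := by
    rw [Real.exp_add, Real.exp_log (jap_pos t)]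
    have hE : 1 ≤ Real.exp (lowlog k) := Real.one_le_exp hU
    have h1 : 1 ≤ Real.exp (lowlog k) * jap t := one_le_mul_of_one_le_of_one_le hE (one_le_jap t)
    rcases le_total (D ^ 2) 1 with hD | hD
    · calc (1 + D ^ 2) ^ j ≤ 4 ^ j := pow_le_pow_left₀ (by positivity) (by linarith) j
        _ ≤ _ := le_mul_of_one_le_right (by positivity) h1
    · have h2 : (D ^ 2) ^ j ≤ 2 * (Real.exp (lowlog k) * jap t) := by
        have e : (D ^ 2) ^ j = |D| ^ (2 * j) := by rw [pow_mul, sq_abs]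
        rw [e]
        have hD0 : 0 ≤ |D| ^ (2 * j) := by positivity
        calc |D| ^ (2 * j) ≤ (Real.exp (lowlog k) * |k|) * |D| ^ (2 * j) :=
              le_mul_of_one_le_left hD0 hlow
          _ = Real.exp (lowlog k) * (|k| * |D| ^ (2 * j)) := by ring
          _ ≤ Real.exp (lowlog k) * (2 * |t|) := by gcongr
          _ ≤ Real.exp (lowlog k) * (2 * jap t) := by gcongr; exact abs_le_jap t
          _ = _ := by ring
      have h3 : (2 : ℝ) ≤ 2 ^ j := by
        calc (2 : ℝ) = 2 ^ 1 := by norm_num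
          _ ≤ 2 ^ j := pow_le_pow_right₀ (by norm_num) hj
      calc (1 + D ^ 2) ^ j ≤ (2 * D ^ 2) ^ j := pow_le_pow_left₀ (by positivity) (by linarith) j
        _ = 2 ^ j * (D ^ 2) ^ j := by rw [mul_pow]
        _ ≤ 2 ^ j * (2 * (Real.exp (lowlog k) * jap t)) := by gcongr
        _ ≤ 2 ^ j * (2 ^ j * (Real.exp (lowlog k) * jap t)) := by gcongr
        _ = _ := by rw [← mul_assoc, ← mul_pow]; norm_num
  have hlog := Real.log_le_log (by positivity) hmain
  rw [Real.log_pow, Real.log_mul (by positivity) (by positivity), Real.log_pow, Real.log_exp] at hlog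
  rw [hJD]
  have hp0 : 0 < p := by
    by_contra h
    nlinarith
  have h5 := mul_le_mul_of_nonneg_left hlog (show 0 ≤ 2 * p by positivity)
  have e1 : 2 * p * (j * Real.log (1 + D ^ 2)) = Real.log (1 + D ^ 2) := by
    linear_combination Real.log (1 + D ^ 2) * hp
  have e2 : 2 * p * (j * Real.log 4) = Real.log 4 := by
    linear_combination Real.log 4 * hp
  rw [mul_add, e1, e2] at h5
  linarith

/-! ### Counting estimate and integrals of brackets -/

/-- The interaction polynomial `zⁿ + (k - z)ⁿ` is symmetric about `z = k/2`. -/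
lemma qq_eq (j : ℕ) (k z : ℝ) :
    z ^ (2 * j + 1) + (k - z) ^ (2 * j + 1) = qq j (k / 2) (z - k / 2) := by
  unfold qq; congr 2 <;> ring

/-- The counting estimate on one side (described by `A`) of the axis of symmetry `z = k/2`. There the
polynomial separates points, so every term is controlled by the distance to the lattice point where
the level `a` is best approximated. -/
lemma count_half (j : ℕ) (hj : 1 ≤ j) {lam p : ℝ} (hl : 1 ≤ lam) (hp : 2 * j * p = 1) {m : ℤ}
    (hm : m ≠ 0) (a : ℝ) (A : ℤ → Prop) [DecidablePred A]
    (hA : ∀ m₁ m₂ : ℤ, A m₁ → A m₂ →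
      0 ≤ (m₁ : ℝ) / lam - (m / lam) / 2 ∧ 0 ≤ (m₂ : ℝ) / lam - (m / lam) / 2 ∨
      (m₁ : ℝ) / lam - (m / lam) / 2 ≤ 0 ∧ (m₂ : ℝ) / lam - (m / lam) / 2 ≤ 0) :
    ENNReal.ofReal (1 / lam) * ∑' m₁ : ℤ, (if A m₁ then
      E (-(2 * p * (lowlog (m / lam) + Real.log (jap (a - (((m₁ : ℝ) / lam) ^ (2 * j + 1)
        + ((m : ℝ) / lam - m₁ / lam) ^ (2 * j + 1))))))) else 0) ≤ 68 := by
  have hl0 : 0 < lam := by linarith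
  have hk : (m : ℝ) / lam ≠ 0 := by
    have : (m : ℝ) ≠ 0 := by exact_mod_cast hm
    positivity
  set t : ℤ → ℝ := fun m₁ => a - (((m₁ : ℝ) / lam) ^ (2 * j + 1)
        + ((m : ℝ) / lam - m₁ / lam) ^ (2 * j + 1)) with hT
  rw [← ENNReal.tsum_mul_left, ENNReal.tsum_eq_iSup_sum]
  apply iSup_le
  intro T
  rw [← Finset.mul_sum, ← Finset.sum_filter]
  rcases (T.filter A).eq_empty_or_nonempty with h | h
  · rw [h]; simp
  -- At the point `m₀` where `|t|` is least, `|t i| ≥ |t i - t m₀| / 2` for every other point `i`.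
  obtain ⟨m₀, hm₀, hmin⟩ := Finset.exists_min_image (T.filter A) (fun i => |t i|) h
  have hA0 := (Finset.mem_filter.1 hm₀).2
  have pt : ∀ i ∈ T.filter A, E (-(2 * p * (lowlog (m / lam) + Real.log (jap (t i)))))
      ≤ 4 * E (-(2 * Real.log (jap (((i - m₀ : ℤ) : ℝ) / lam)))) := by
    intro i hi
    have h1 := hmin i hi
    have hAi := (Finset.mem_filter.1 hi).2
    have gap := qq_gap j hj (d := (m / lam) / 2) (hA i m₀ hAi hA0)
    rw [← qq_eq, ← qq_eq] at gap
    have h2 : |(m : ℝ) / lam| * |((i - m₀ : ℤ) : ℝ) / lam| ^ (2 * j) ≤ 2 * |t i| := by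
      have e1 : (i : ℝ) / lam - m / lam / 2 - (m₀ / lam - m / lam / 2)
        = ((i - m₀ : ℤ) : ℝ) / lam := by push_cast; ring
      rw [e1] at gap
      have e2 : 2 * |(m : ℝ) / lam / 2| = |(m : ℝ) / lam| := by
        rw [abs_div _ (2 : ℝ), abs_two]; ring
      rw [e2] at gap
      refine gap.trans ?_
      have e3 : ((i : ℝ) / lam) ^ (2 * j + 1) + ((m : ℝ) / lam - i / lam) ^ (2 * j + 1)
          - (((m₀ : ℝ) / lam) ^ (2 * j + 1) + ((m : ℝ) / lam - m₀ / lam) ^ (2 * j + 1))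
          = t m₀ - t i := by simp only [hT]; ring
      rw [e3]
      have := abs_sub (t m₀) (t i)
      linarith
    have h3 := count_pt j hj hp hk h2
    have e4 : (4 : ℝ≥0∞) = E (Real.log 4) := by
      unfold E; rw [Real.exp_log (by norm_num)]; norm_num
    rw [e4, ← E_add]
    exact E_mono (by linarith)
  calc ENNReal.ofReal (1 / lam) * ∑ i ∈ T.filter A,
        E (-(2 * p * (lowlog (m / lam) + Real.log (jap (t i)))))
      ≤ ENNReal.ofReal (1 / lam) * ∑ i ∈ T.filter A,
        4 * E (-(2 * Real.log (jap (((i - m₀ : ℤ) : ℝ) / lam)))) := by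
        gcongr with i hi
        exact pt i hi
    _ ≤ ENNReal.ofReal (1 / lam) * ∑' i : ℤ,
        4 * E (-(2 * Real.log (jap (((i - m₀ : ℤ) : ℝ) / lam)))) := by
        gcongr
        exact ENNReal.sum_le_tsum _
    _ = 4 * ∫⁻ i, E (-(2 * Real.log (jap ((i : ℤ) / lam)))) ∂(nuZ lam) := by
        rw [ENNReal.tsum_mul_left,
          ← (TI_nuZ lam).right (fun i : ℤ => E (-(2 * Real.log (jap ((i : ℝ) / lam)))))
            Measurable.of_discrete m₀, lint_nuZ]
        ring
    _ ≤ 4 * 17 := by gcongr; exact japsq_sum hl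
    _ = 68 := by norm_num

/-- Counting estimate: at a fixed nonzero frequency the interaction polynomial has uniformly few
values near any given level. -/
lemma count_sum (j : ℕ) (hj : 1 ≤ j) {lam p : ℝ} (hl : 1 ≤ lam) (hp : 2 * j * p = 1) {m : ℤ}
    (hm : m ≠ 0) (a : ℝ) :
    E (-(2 * p * lowlog (m / lam))) * ∫⁻ m₁ : ℤ, E (-(2 * p * Real.log (jap (a -
      (((m₁ : ℝ) / lam) ^ (2 * j + 1) + ((m : ℝ) / lam - m₁ / lam) ^ (2 * j + 1)))))) ∂(nuZ lam)
      ≤ 136 := by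
  classical
  have h1 := count_half j hj hl hp hm a (fun m₁ => 0 ≤ (m₁ : ℝ) / lam - (m / lam) / 2)
    (fun _ _ h h' => Or.inl ⟨h, h'⟩)
  have h2 := count_half j hj hl hp hm a (fun m₁ => (m₁ : ℝ) / lam - (m / lam) / 2 ≤ 0)
    (fun _ _ h h' => Or.inr ⟨h, h'⟩)
  have h3 := add_le_add h1 h2
  rw [← mul_add, ← ENNReal.tsum_add] at h3
  rw [lint_nuZ, mul_left_comm, ← ENNReal.tsum_mul_left]
  refine le_trans ?_ (h3.trans (by norm_num))
  gcongr with m₁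
  rw [← E_add, ← neg_add, ← mul_add]
  rcases le_total 0 ((m₁ : ℝ) / lam - (m / lam) / 2) with h | h
  · rw [if_pos h]; exact le_add_right le_rfl
  · rw [if_pos h]; exact le_add_left le_rfl

/-- Integral of a power of the bracket. -/
def IJ (a : ℝ) : ℝ≥0∞ := ∫⁻ t, E (-(a * Real.log (jap t)))

lemma measurable_jap : Measurable jap := by unfold jap; fun_prop

lemma measurable_Ejap (a : ℝ) : Measurable fun t : ℝ => E (a * Real.log (jap t)) := by
  have := measurable_jap; have := measurable_E; fun_prop

lemma measurable_Ejap' (a : ℝ) : Measurable fun t : ℝ => E (-(a * Real.log (jap t))) := by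
  have := measurable_jap; have := measurable_E; fun_prop

lemma IJ_lt {a : ℝ} (ha : 1 < a) : IJ a < ∞ := by
  have h := integrable_rpow_neg_one_add_norm_sq (E := ℝ) (μ := volume) (r := a) (by simpa using ha)
  have h2 := h.lintegral_lt_top
  refine lt_of_le_of_lt (le_of_eq ?_) h2
  unfold IJ
  apply lintegral_congr; intro t
  unfold E jap
  congr 1
  rw [Real.norm_eq_abs, sq_abs, Real.rpow_def_of_pos (by positivity), Real.log_sqrt (by positivity)]
  congr 1; ring

lemma logjap_add (a t : ℝ) :
    Real.log (jap a) ≤ Real.log 2 + max (Real.log (jap t)) (Real.log (jap (a - t))) := by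
  have h : jap a ≤ jap t + jap (a - t) := by
    have := jap_le_of (x := a) (y := t) (z := a - t) (w := 0) (by
      have := abs_add_le t (a - t)
      rw [add_sub_cancel] at this
      simpa using this)
    simpa using this
  rcases le_total (jap t) (jap (a - t)) with h' | h'
  · have : Real.log (jap a) ≤ Real.log (2 * jap (a - t)) :=
      Real.log_le_log (jap_pos _) (by linarith)
    rw [Real.log_mul (by norm_num) (jap_pos _).ne'] at this
    exact this.trans (by gcongr; exact le_max_right _ _)
  · have : Real.log (jap a) ≤ Real.log (2 * jap t) :=
      Real.log_le_log (jap_pos _) (by linarith)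
    rw [Real.log_mul (by norm_num) (jap_pos _).ne'] at this
    exact this.trans (by gcongr; exact le_max_left _ _)

/-- Convolution of two brackets. -/
lemma conv_jap {q : ℝ} (h0 : 0 ≤ q) (hq : q ≤ 1 / 2) (a : ℝ) :
    ∫⁻ t, E (-(3 / 2 * Real.log (jap t))) * E (-(q * Real.log (jap (a - t))))
      ≤ 4 * IJ (3 / 2) * E (-(q * Real.log (jap a))) := by
  have pt : ∀ t, E (-(3 / 2 * Real.log (jap t))) * E (-(q * Real.log (jap (a - t)))) ≤
      (2 * E (-(q * Real.log (jap a)))) *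
        (E (-(3 / 2 * Real.log (jap t))) + E (-(3 / 2 * Real.log (jap (a - t))))) := by
    intro t
    have e2 : (2 : ℝ≥0∞) = E (Real.log 2) := by
      unfold E; rw [Real.exp_log (by norm_num)]; norm_num
    have hl2 : 0 < Real.log 2 := Real.log_pos (by norm_num)
    have h := logjap_add a t
    have hx := logjap_nonneg t
    have hz := logjap_nonneg (a - t)
    have hq2 : q * Real.log 2 ≤ Real.log 2 := by nlinarith
    rw [e2, mul_add, ← E_add, ← E_add, ← E_add, ← E_add]
    rcases le_total (Real.log (jap t)) (Real.log (jap (a - t))) with h' | h'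
    · refine le_trans (E_mono ?_) (le_add_right le_rfl)
      rw [max_eq_right h'] at h
      have := mul_le_mul_of_nonneg_left h h0
      linarith
    · refine le_trans (E_mono ?_) (le_add_left le_rfl)
      rw [max_eq_left h'] at h
      have := mul_le_mul_of_nonneg_left h h0
      have h6 := mul_le_mul_of_nonneg_left h' (show 0 ≤ 3 / 2 - q by linarith)
      linarith
  have m1 := measurable_Ejap' (3 / 2)
  have m2 : Measurable fun t : ℝ => E (-(3 / 2 * Real.log (jap (a - t)))) :=
    m1.comp (by fun_prop : Measurable fun t : ℝ => a - t)
  calc _ ≤ ∫⁻ t, (2 * E (-(q * Real.log (jap a)))) *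
        (E (-(3 / 2 * Real.log (jap t))) + E (-(3 / 2 * Real.log (jap (a - t))))) :=
        lintegral_mono pt
    _ = (2 * E (-(q * Real.log (jap a)))) * (IJ (3 / 2) + IJ (3 / 2)) := by
        rw [lintegral_const_mul _ (by fun_prop), lintegral_add_left m1]
        congr 2
        exact TI_volume.left (fun t => E (-(3 / 2 * Real.log (jap t)))) m1 a
    _ = _ := by ring

/-! ### The kernels -/

/-- `log ⟨k⟩` at the frequency `k = m/λ`. -/
def lX (lam : ℝ) (m : ℤ) : ℝ := Real.log (jap (m / lam))

/-- `-log min(1,|k|)` at the frequency `k = m/λ`. -/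
def lU (lam : ℝ) (m : ℤ) : ℝ := lowlog (m / lam)

/-- `log ⟨σ⟩`. -/
def lV (j : ℕ) (lam : ℝ) (z : ℤ × ℝ) : ℝ := Real.log (jap (sigL j lam z.1 z.2))

/-- The product measure on `Ż_λ × ℝ`, carried by the index set `ℤ × ℝ`. -/
def nu (lam : ℝ) : Measure (ℤ × ℝ) := (nuZ lam).prod volume

instance (lam : ℝ) : SFinite (nu lam) := by unfold nu; infer_instance

lemma TI_nu (lam : ℝ) : TI (nu lam) := TI_prod (TI_nuZ lam) TI_volume

/-- Indicator of the nonzero frequencies. -/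
def nz (m : ℤ) : ℝ≥0∞ := if m = 0 then 0 else 1

@[fun_prop]
lemma measurable_int {α β : Type*} [MeasurableSpace α] [MeasurableSpace β] (F : ℤ → β) {g : α → ℤ}
    (hg : Measurable g) : Measurable fun a => F (g a) := Measurable.of_discrete.comp hg

lemma measurable_lV (j : ℕ) (lam : ℝ) : Measurable (lV j lam) := by
  unfold lV sigL
  have := measurable_jap
  have h : Measurable fun z : ℤ × ℝ => ((z.1 : ℝ) / lam) ^ (2 * j + 1) :=
    measurable_int (fun m : ℤ => ((m : ℝ) / lam) ^ (2 * j + 1)) measurable_fst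
  fun_prop

lemma lint_nu (lam : ℝ) {F : ℤ × ℝ → ℝ≥0∞} (hF : Measurable F) :
    ∫⁻ z, F z ∂(nu lam) = ∫⁻ m, (∫⁻ t : ℝ, F (m, t)) ∂(nuZ lam) := by
  unfold nu; exact lintegral_prod _ hF.aemeasurable

lemma sq_add_le (a b : ℝ≥0∞) : (a + b) ^ 2 ≤ 4 * (a ^ 2 + b ^ 2) := by
  rcases le_total a b with h | h
  · calc (a + b) ^ 2 ≤ (b + b) ^ 2 := by gcongr
      _ = 4 * b ^ 2 := by ring
      _ ≤ _ := by gcongr; exact le_add_left le_rfl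
  · calc (a + b) ^ 2 ≤ (a + a) ^ 2 := by gcongr
      _ = 4 * a ^ 2 := by ring
      _ ≤ _ := by gcongr; exact le_add_right le_rfl

lemma N2_add {α : Type*} [MeasurableSpace α] (ν : Measure α) {f g : α → ℝ≥0∞}
    (hf : Measurable f) (hg : Measurable g) :
    N2 ν (fun a => f a + g a) ≤ 4 * (N2 ν f + N2 ν g) := by
  unfold N2
  calc _ ≤ ∫⁻ a, 4 * (f a ^ 2 + g a ^ 2) ∂ν := lintegral_mono fun a => sq_add_le _ _
    _ = _ := by rw [lintegral_const_mul _ (by fun_prop), lintegral_add_left (by fun_prop)]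

/-- Kernel carrying both input modulations. -/
def K1 (j : ℕ) (lam p : ℝ) (z w : ℤ × ℝ) : ℝ≥0∞ :=
  nz z.1 * E (-(3 / 4 * lV j lam w) - 3 / 4 * lV j lam (z - w) - p * lU lam z.1)

/-- Kernel carrying the output modulation and that of the second input. -/
def K2 (j : ℕ) (lam p : ℝ) (z w : ℤ × ℝ) : ℝ≥0∞ :=
  nz w.1 * E (-(p * lV j lam z) - 3 / 4 * lV j lam (z - w) - p * lU lam w.1)

/-- Kernel carrying the output modulation and that of the first input. -/
def K3 (j : ℕ) (lam p : ℝ) (z w : ℤ × ℝ) : ℝ≥0∞ :=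
  nz (z - w).1 * E (-(p * lV j lam z) - 3 / 4 * lV j lam w - p * lU lam (z - w).1)

/-- The square summable weight `min(1,|k|)^{-p} ⟨k⟩^{-3/4}`. -/
def th (lam p : ℝ) (m : ℤ) : ℝ≥0∞ := Th p (lU lam m) (lX lam m)

/-- Kernel depending on the input frequencies only. -/
def K4 (lam p : ℝ) (m m₁ : ℤ) : ℝ≥0∞ := th lam p m₁ + th lam p (m - m₁)

/-- Kernel carrying the output modulation and the frequency of the second input. -/
def K6 (j : ℕ) (lam p : ℝ) (z w : ℤ × ℝ) : ℝ≥0∞ :=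
  E (-((1 / 2 + p / 4) * lV j lam z)) * th lam p (z.1 - w.1)

section
variable (j : ℕ) (lam p : ℝ)

lemma measurable_K1 : Measurable (Function.uncurry (K1 j lam p)) := by
  have := measurable_lV j lam; have := measurable_E
  unfold K1 Function.uncurry; fun_prop

lemma measurable_K2 : Measurable (Function.uncurry (K2 j lam p)) := by
  have := measurable_lV j lam; have := measurable_E
  unfold K2 Function.uncurry; fun_prop

lemma measurable_K3 : Measurable (Function.uncurry (K3 j lam p)) := by
  have := measurable_lV j lam; have := measurable_E
  unfold K3 Function.uncurry; fun_prop

lemma measurable_K4 : Measurable (Function.uncurry (K4 lam p)) := by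
  exact Measurable.of_discrete

lemma measurable_K6 : Measurable (Function.uncurry (K6 j lam p)) := by
  have := measurable_lV j lam; have := measurable_E
  unfold K6 Function.uncurry; fun_prop

lemma K3_eq (z w : ℤ × ℝ) : K3 j lam p z (z - w) = K2 j lam p z w := by
  unfold K3 K2; rw [sub_sub_cancel]

/-- Translated form of `conv_jap`. -/
lemma conv_jap' {q : ℝ} (h0 : 0 ≤ q) (hq : q ≤ 1 / 2) (a b : ℝ) :
    ∫⁻ t, E (-(3 / 2 * Real.log (jap (t - a)))) * E (-(q * Real.log (jap (b - t))))
      ≤ 4 * IJ (3 / 2) * E (-(q * Real.log (jap (b - a)))) := by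
  have m1 := measurable_Ejap' (3 / 2)
  have m2 := measurable_Ejap' q
  have m3 : Measurable fun t : ℝ => E (-(q * Real.log (jap (b - a - t)))) :=
    m2.comp (by fun_prop : Measurable fun t : ℝ => b - a - t)
  have h := conv_jap h0 hq (b - a)
  rw [← TI_volume.right (fun t => E (-(3 / 2 * Real.log (jap t))) *
    E (-(q * Real.log (jap (b - a - t))))) (by fun_prop) a] at h
  refine le_trans (le_of_eq ?_) h
  apply lintegral_congr; intro t
  rw [show b - a - (t - a) = b - t by ring]

variable {j lam p}

/-- Integrate in `τ` by `conv_jap'`; what remains is the lattice sum of `count_sum`. -/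
lemma bound_K1 (hj : 1 ≤ j) (hl : 1 ≤ lam) (hp : 2 * j * p = 1) (h0 : 0 ≤ p) (h4 : p ≤ 1 / 4)
    (z : ℤ × ℝ) : ∫⁻ w, K1 j lam p z w ^ 2 ∂(nu lam) ≤ 544 * IJ (3 / 2) := by
  by_cases hz : z.1 = 0
  · simp [K1, nz, hz]
  have := measurable_E; have := measurable_jap
  have mp : ∀ F : ℤ → ℝ, Measurable fun w : ℤ × ℝ => F w.1 := fun F =>
    Measurable.of_discrete.comp measurable_fst
  have m1 := mp fun m => ((m : ℝ) / lam) ^ (2 * j + 1)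
  have m2 := mp fun m => ((z.1 : ℝ) / lam - m / lam) ^ (2 * j + 1)
  calc ∫⁻ w, K1 j lam p z w ^ 2 ∂(nu lam)
      ≤ ∫⁻ w : ℤ × ℝ, E (-(2 * p * lowlog (z.1 / lam))) *
        (E (-(3 / 2 * Real.log (jap (w.2 - ((w.1 : ℝ) / lam) ^ (2 * j + 1))))) *
        E (-(2 * p * Real.log (jap (z.2 - ((z.1 : ℝ) / lam - w.1 / lam) ^ (2 * j + 1) - w.2)))))
          ∂(nu lam) := by
        apply lintegral_mono; intro w
        simp only [K1, nz, if_neg hz, one_mul]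
        rw [E_sq, ← E_add, ← E_add]
        apply E_mono
        have e : lV j lam (z - w)
          = Real.log (jap (z.2 - ((z.1 : ℝ) / lam - w.1 / lam) ^ (2 * j + 1) - w.2)) := by
          unfold lV sigL
          congr 2
          simp only [Prod.fst_sub, Prod.snd_sub]
          push_cast
          rw [sub_div]; ring
        have hV : 0 ≤ lV j lam (z - w) := logjap_nonneg _
        rw [← e]
        simp only [lV, sigL, lU] at hV ⊢
        nlinarith
    _ = E (-(2 * p * lowlog (z.1 / lam))) * ∫⁻ m : ℤ, (∫⁻ t : ℝ,
        E (-(3 / 2 * Real.log (jap (t - ((m : ℝ) / lam) ^ (2 * j + 1))))) *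
        E (-(2 * p * Real.log (jap (z.2 - ((z.1 : ℝ) / lam - m / lam) ^ (2 * j + 1) - t)))))
          ∂(nuZ lam) := by
        rw [lintegral_const_mul _ (by fun_prop), lint_nu _ (by fun_prop)]
    _ ≤ E (-(2 * p * lowlog (z.1 / lam))) * ∫⁻ m : ℤ, 4 * IJ (3 / 2) *
        E (-(2 * p * Real.log (jap (z.2 - (((m : ℝ) / lam) ^ (2 * j + 1) +
          ((z.1 : ℝ) / lam - m / lam) ^ (2 * j + 1)))))) ∂(nuZ lam) := by
        gcongr with m
        refine (conv_jap' (q := 2 * p) (by linarith) (by linarith) _ _).trans (le_of_eq ?_)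
        congr 5
        ring_nf
    _ = 4 * IJ (3 / 2) * (E (-(2 * p * lowlog (z.1 / lam))) * ∫⁻ m : ℤ,
        E (-(2 * p * Real.log (jap (z.2 - (((m : ℝ) / lam) ^ (2 * j + 1) +
          ((z.1 : ℝ) / lam - m / lam) ^ (2 * j + 1)))))) ∂(nuZ lam)) := by
        rw [lintegral_const_mul _ Measurable.of_discrete]
        ring
    _ ≤ 4 * IJ (3 / 2) * 136 := by
        gcongr
        exact count_sum j hj hl hp hz z.2
    _ = _ := by ring

/-- By the same argument as for `K1`, the integration now being over the output at a fixed first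
input. -/
lemma bound_K2 (hj : 1 ≤ j) (hl : 1 ≤ lam) (hp : 2 * j * p = 1) (h0 : 0 ≤ p) (h4 : p ≤ 1 / 4)
    (w : ℤ × ℝ) : ∫⁻ z, K2 j lam p z w ^ 2 ∂(nu lam) ≤ 544 * IJ (3 / 2) := by
  by_cases hz : w.1 = 0
  · simp [K2, nz, hz]
  have := measurable_E; have := measurable_jap
  have mp : ∀ F : ℤ → ℝ, Measurable fun w : ℤ × ℝ => F w.1 := fun F =>
    Measurable.of_discrete.comp measurable_fst
  have m1 := mp fun m => ((m : ℝ) / lam) ^ (2 * j + 1)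
  have m2 := mp fun m => ((w.1 : ℝ) / lam - m / lam) ^ (2 * j + 1)
  -- the exponent is odd, so `(k - k₁)ⁿ = -(k₁ - k)ⁿ`
  have odd : ∀ a b : ℝ, (a - b) ^ (2 * j + 1) = -(b - a) ^ (2 * j + 1) := by
    intro a b; rw [← neg_sub, Odd.neg_pow ⟨j, rfl⟩]
  calc ∫⁻ z, K2 j lam p z w ^ 2 ∂(nu lam)
      ≤ ∫⁻ z : ℤ × ℝ, E (-(2 * p * lowlog (w.1 / lam))) *
        (E (-(3 / 2 * Real.log (jap (z.2 - (w.2 - ((w.1 : ℝ) / lam - z.1 / lam) ^ (2 * j + 1)))))) *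
        E (-(2 * p * Real.log (jap (((z.1 : ℝ) / lam) ^ (2 * j + 1) - z.2)))))
          ∂(nu lam) := by
        apply lintegral_mono; intro z
        simp only [K2, nz, if_neg hz, one_mul]
        rw [E_sq, ← E_add, ← E_add]
        apply E_mono
        have e : lV j lam (z - w) = Real.log (jap
            (z.2 - (w.2 - ((w.1 : ℝ) / lam - z.1 / lam) ^ (2 * j + 1)))) := by
          unfold lV sigL
          congr 2
          simp only [Prod.fst_sub, Prod.snd_sub]
          push_cast
          rw [sub_div, odd]; ring
        have e' : lV j lam z = Real.log (jap (((z.1 : ℝ) / lam) ^ (2 * j + 1) - z.2)) := by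
          unfold lV sigL
          rw [← jap_neg, neg_sub]
        rw [← e, ← e']
        simp only [lU]
        linarith
    _ = E (-(2 * p * lowlog (w.1 / lam))) * ∫⁻ m : ℤ, (∫⁻ t : ℝ,
        E (-(3 / 2 * Real.log (jap (t - (w.2 - ((w.1 : ℝ) / lam - m / lam) ^ (2 * j + 1)))))) *
        E (-(2 * p * Real.log (jap (((m : ℝ) / lam) ^ (2 * j + 1) - t)))))
          ∂(nuZ lam) := by
        rw [lintegral_const_mul _ (by fun_prop), lint_nu _ (by fun_prop)]
    _ ≤ E (-(2 * p * lowlog (w.1 / lam))) * ∫⁻ m : ℤ, 4 * IJ (3 / 2) *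
        E (-(2 * p * Real.log (jap (w.2 - (((m : ℝ) / lam) ^ (2 * j + 1) +
          ((w.1 : ℝ) / lam - m / lam) ^ (2 * j + 1)))))) ∂(nuZ lam) := by
        gcongr with m
        refine (conv_jap' (q := 2 * p) (by linarith) (by linarith) _ _).trans (le_of_eq ?_)
        congr 5
        rw [← jap_neg]
        ring_nf
    _ = 4 * IJ (3 / 2) * (E (-(2 * p * lowlog (w.1 / lam))) * ∫⁻ m : ℤ,
        E (-(2 * p * Real.log (jap (w.2 - (((m : ℝ) / lam) ^ (2 * j + 1) +
          ((w.1 : ℝ) / lam - m / lam) ^ (2 * j + 1)))))) ∂(nuZ lam)) := by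
        rw [lintegral_const_mul _ Measurable.of_discrete]
        ring
    _ ≤ 4 * IJ (3 / 2) * 136 := by
        gcongr
        exact count_sum j hj hl hp hz w.2
    _ = _ := by ring

lemma N2_th (hl : 1 ≤ lam) (h0 : 0 ≤ p) (h4 : p ≤ 1 / 4) : N2 (nuZ lam) (th lam p) ≤ 17 :=
  theta_sum hl h0 h4

/-- Square summability in the input frequency, from `theta_sum`. -/
lemma bound_K4 (hl : 1 ≤ lam) (h0 : 0 ≤ p) (h4 : p ≤ 1 / 4) (m : ℤ) :
    ∫⁻ w, K4 lam p m w ^ 2 ∂(nuZ lam) ≤ 136 := by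
  have h := N2_th hl h0 h4
  refine (N2_add (nuZ lam) (f := th lam p) (g := fun w => th lam p (m - w))
    Measurable.of_discrete Measurable.of_discrete).trans ?_
  have e : N2 (nuZ lam) (fun w => th lam p (m - w)) = N2 (nuZ lam) (th lam p) :=
    (TI_nuZ lam).left (fun w => th lam p w ^ 2) Measurable.of_discrete m
  rw [e]
  calc _ ≤ (4 * (17 + 17) : ℝ≥0∞) := by gcongr
    _ = 136 := by norm_num

/-- The integrations in frequency and modulation separate. -/
lemma bound_K6 (hl : 1 ≤ lam) (h0 : 0 ≤ p) (h4 : p ≤ 1 / 4) (w : ℤ × ℝ) :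
    ∫⁻ z, K6 j lam p z w ^ 2 ∂(nu lam) ≤ 17 * IJ (1 + p / 2) := by
  have mE := measurable_E; have mV := measurable_lV j lam
  have mK : Measurable fun z => K6 j lam p z w ^ 2 := by unfold K6; fun_prop
  rw [lint_nu _ mK]
  have inner : ∀ m : ℤ, ∫⁻ t : ℝ, K6 j lam p (m, t) w ^ 2
      = th lam p (m - w.1) ^ 2 * IJ (1 + p / 2) := by
    intro m
    unfold IJ
    rw [← TI_volume.right _ (measurable_Ejap' (1 + p / 2)) (((m : ℝ) / lam) ^ (2 * j + 1)),
      ← lintegral_const_mul]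
    · apply lintegral_congr; intro t
      unfold K6
      rw [mul_pow, mul_comm, E_sq]
      congr 2
      unfold lV sigL
      ring
    · exact (measurable_Ejap' (1 + p / 2)).comp (measurable_id.sub_const _)
  simp_rw [inner]
  rw [lintegral_mul_const _ Measurable.of_discrete,
    (TI_nuZ lam).right (fun m => th lam p m ^ 2) Measurable.of_discrete w.1]
  gcongr
  exact theta_sum hl h0 h4
end

/-! ### `L²` bound for the sum of the bilinear expressions -/

/-- Squared norm of `L²_k L¹_τ`. -/
def Y2 (lam : ℝ) (b : ℤ × ℝ → ℝ≥0∞) : ℝ≥0∞ := N2 (nuZ lam) fun m => ∫⁻ t, b (m, t)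

/-- The sum of all dominating bilinear expressions. -/
def HH (j : ℕ) (lam p : ℝ) (a₁ b₁ a₂ b₂ : ℤ × ℝ → ℝ≥0∞) (z : ℤ × ℝ) : ℝ≥0∞ :=
  bil (nu lam) (K1 j lam p) a₁ a₂ z + bil (nu lam) (K2 j lam p) a₁ a₂ z
    + bil (nu lam) (K3 j lam p) a₁ a₂ z
    + bil (nu lam) (fun z w => K4 lam p z.1 w.1) a₁ b₂ z
    + bil (nu lam) (fun z w => K4 lam p z.1 w.1) b₁ a₂ z
    + bil (nu lam) (K6 j lam p) a₁ a₂ z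
    + bil (nu lam) (fun z w => K6 j lam p z (z - w)) a₁ a₂ z

lemma N2_add' {α : Type*} [MeasurableSpace α] {ν : Measure α} {f g : α → ℝ≥0∞}
    (hf : Measurable f) (hg : Measurable g) {c d R : ℝ≥0∞} (h1 : N2 ν f ≤ c * R)
    (h2 : N2 ν g ≤ d * R) : N2 ν (fun a => f a + g a) ≤ 4 * (c + d) * R := by
  calc _ ≤ 4 * (N2 ν f + N2 ν g) := N2_add ν hf hg
    _ ≤ 4 * (c * R + d * R) := by gcongr
    _ = _ := by ring

/-- Constant of the `L²` bound for `HH`. -/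
def CH (p : ℝ) : ℝ≥0∞ :=
  let A := 544 * IJ (3 / 2) + 136 + 17 * IJ (1 + p / 2)
  4 * (4 * (4 * (4 * (4 * (4 * (A + A) + A) + A) + A) + A) + A)

lemma CH_ne_top {p : ℝ} (hp : 0 < p) : CH p ≠ ∞ := by
  have h1 := (IJ_lt (show (1 : ℝ) < 3 / 2 by norm_num)).ne
  have h2 := (IJ_lt (show (1 : ℝ) < 1 + p / 2 by linarith)).ne
  have hA : 544 * IJ (3 / 2) + 136 + 17 * IJ (1 + p / 2) ≠ ∞ := by finiteness
  unfold CH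
  simp only
  generalize 544 * IJ (3 / 2) + 136 + 17 * IJ (1 + p / 2) = A at hA ⊢
  finiteness

section
variable {j : ℕ} {lam p : ℝ}

lemma measurable_K4' : Measurable (Function.uncurry fun z w : ℤ × ℝ => K4 lam p z.1 w.1) := by
  exact Measurable.of_discrete.comp
    (f := fun q : (ℤ × ℝ) × (ℤ × ℝ) => (q.1.1, q.2.1)) (g := fun q : ℤ × ℤ => K4 lam p q.1 q.2)
    (by fun_prop)

lemma measurable_K6' : Measurable (Function.uncurry fun z w : ℤ × ℝ => K6 j lam p z (z - w)) :=
  (measurable_K6 j lam p).comp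
    (f := fun q : (ℤ × ℝ) × (ℤ × ℝ) => (q.1, q.1 - q.2)) (by fun_prop)

/-- The `L²` bound for the sum of the dominating bilinear expressions. -/
lemma HH_bound (hj : 1 ≤ j) (hl : 1 ≤ lam) (hp : 2 * j * p = 1) (h0 : 0 ≤ p) (h4 : p ≤ 1 / 4)
    {a₁ b₁ a₂ b₂ : ℤ × ℝ → ℝ≥0∞} (ha₁ : Measurable a₁) (hb₁ : Measurable b₁)
    (ha₂ : Measurable a₂) (hb₂ : Measurable b₂) :
    N2 (nu lam) (HH j lam p a₁ b₁ a₂ b₂) ≤ CH p * ((N2 (nu lam) a₁ + Y2 lam b₁) *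
      (N2 (nu lam) a₂ + Y2 lam b₂)) := by
  have hν := TI_nu lam
  set R := (N2 (nu lam) a₁ + Y2 lam b₁) * (N2 (nu lam) a₂ + Y2 lam b₂) with hR
  have r1 : N2 (nu lam) a₁ * N2 (nu lam) a₂ ≤ R := mul_le_mul' (le_add_right le_rfl) (le_add_right le_rfl)
  have r2 : N2 (nu lam) a₁ * Y2 lam b₂ ≤ R := mul_le_mul' (le_add_right le_rfl) (le_add_left le_rfl)
  have r3 : N2 (nu lam) a₂ * Y2 lam b₁ ≤ R := by
    rw [mul_comm]; exact mul_le_mul' (le_add_left le_rfl) (le_add_right le_rfl)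
  set A := 544 * IJ (3 / 2) + 136 + 17 * IJ (1 + p / 2) with hA
  have A1 : 544 * IJ (3 / 2) ≤ A := le_add_right (le_add_right le_rfl)
  have A2 : 136 ≤ A := le_add_right (le_add_left le_rfl)
  have A3 : 17 * IJ (1 + p / 2) ≤ A := le_add_left le_rfl
  have mK1 := measurable_K1 j lam p; have mK2 := measurable_K2 j lam p
  have mK3 := measurable_K3 j lam p; have mK6 := measurable_K6 j lam p
  have mK4 := measurable_K4' (lam := lam) (p := p)
  have mK6' := measurable_K6' (j := j) (lam := lam) (p := p)
  have t1 := (bil_out hν mK1 ha₁ ha₂ (bound_K1 hj hl hp h0 h4)).trans (mul_le_mul' A1 r1)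
  have t2 := (bil_in hν mK2 ha₁ ha₂ (bound_K2 hj hl hp h0 h4)).trans (mul_le_mul' A1 r1)
  have t3 := (bil_in' hν mK3 ha₁ ha₂ (A := 544 * IJ (3 / 2)) (by
    simp_rw [K3_eq]; exact bound_K2 hj hl hp h0 h4)).trans (mul_le_mul' A1 r1)
  have t4 : N2 (nu lam) (bil (nu lam) (fun z w => K4 lam p z.1 w.1) a₁ b₂) ≤ A * R :=
    (bil_mixed (TI_nuZ lam) TI_volume (measurable_K4 lam p) ha₁ hb₂
      (bound_K4 hl h0 h4)).trans (mul_le_mul' A2 r2)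
  have t5 : N2 (nu lam) (bil (nu lam) (fun z w => K4 lam p z.1 w.1) b₁ a₂) ≤ A * R := by
    have h := (bil_mixed (TI_nuZ lam) TI_volume (κ := fun m w => K4 lam p m (m - w))
      Measurable.of_discrete ha₂ hb₁ (A := 136) (by
        intro m
        rw [(TI_nuZ lam).left (fun w => K4 lam p m w ^ 2) Measurable.of_discrete m]
        exact bound_K4 hl h0 h4 m)).trans (mul_le_mul' A2 r3)
    refine le_trans (le_of_eq ?_) h
    congr 1; funext z
    exact bil_symm hν mK4 hb₁ ha₂ z
  have t6 := (bil_in hν mK6 ha₁ ha₂ (bound_K6 hl h0 h4)).trans (mul_le_mul' A3 r1)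
  have t7 := (bil_in' hν mK6' ha₁ ha₂ (A := 17 * IJ (1 + p / 2)) (by
    simp only [sub_sub_cancel]; exact bound_K6 hl h0 h4)).trans (mul_le_mul' A3 r1)
  have m1 := measurable_bil (ν := nu lam) mK1 ha₁ ha₂
  have m2 := measurable_bil (ν := nu lam) mK2 ha₁ ha₂
  have m3 := measurable_bil (ν := nu lam) mK3 ha₁ ha₂
  have m4 := measurable_bil (ν := nu lam) mK4 ha₁ hb₂
  have m5 := measurable_bil (ν := nu lam) mK4 hb₁ ha₂
  have m6 := measurable_bil (ν := nu lam) mK6 ha₁ ha₂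
  have m7 := measurable_bil (ν := nu lam) mK6' ha₁ ha₂
  exact N2_add' (((((m1.add m2).add m3).add m4).add m5).add m6) m7
    (N2_add' ((((m1.add m2).add m3).add m4).add m5) m6
    (N2_add' (((m1.add m2).add m3).add m4) m5
    (N2_add' ((m1.add m2).add m3) m4 (N2_add' (m1.add m2) m3 (N2_add' m1 m2 t1 t2) t3) t4) t5) t6) t7
end

/-! ### Comparison of weights on the regions -/

section
variable {J p s r c x y : ℝ}

/-- In the region of small modulation the glued weight is the first one. -/
lemma wt1 (P : Par J p s r) (hc : 0 ≤ c) (h : y ≤ 2 * J * x + c) :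
    om J p s r x y ≤ s * x + (1 - p) * y + J * c ∧ s * x + (1 - p) * y ≤ om J p s r x y + J * c := by
  have := P.hJ
  have h1 := om_low P hc h
  have h2 : om J p s r x y ≤ s * x + (1 - p) * y := min_le_left _ _
  have : 0 ≤ J * c := by positivity
  constructor <;> linarith

/-- The second and third weights agree on `y = (2J+1)x`. -/
lemma wt_diff (P : Par J p s r) :
    -r * x + r * y - (((1 - 2 * J) * s - 1) * x + (s + 1) * y)
      = (r - s - 1) * (y - (2 * J + 1) * x) := by
  have := P.Jr
  linear_combination x * this

/-- Between the lines `y = 2Jx` and `y = (2J+1)x` the glued weight is the second one. -/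
lemma wt2 (P : Par J p s r) (hc : 0 ≤ c) (h1 : 2 * J * x - c ≤ y) (h2 : y ≤ (2 * J + 1) * x + c) :
    om J p s r x y ≤ ((1 - 2 * J) * s - 1) * x + (s + 1) * y + J * c ∧
    ((1 - 2 * J) * s - 1) * x + (s + 1) * y ≤ om J p s r x y + J * c := by
  have hJ := P.hJ
  have h3 := om_high2 P hc h1
  have h4 := wt_diff P (x := x) (y := y)
  have h5 : r - s - 1 ≤ J := by have := P.r_le; have := P.h1; linarith
  have h6 : 0 ≤ r - s - 1 := by have := P.s_r; linarith
  have h7 : (r - s - 1) * (y - (2 * J + 1) * x) ≤ J * c :=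
    (mul_le_mul_of_nonneg_left (by linarith) h6).trans (mul_le_mul_of_nonneg_right h5 hc)
  have : 0 ≤ J * c := by positivity
  constructor
  · refine (min_le_right _ _).trans (max_le ?_ ?_) <;> linarith
  · linarith

/-- Above the line `y = (2J+1)x` the glued weight is the third one. -/
lemma wt3 (P : Par J p s r) (hc : 0 ≤ c) (hx : 0 ≤ x) (h1 : (2 * J + 1) * x - c ≤ y) :
    om J p s r x y ≤ -r * x + r * y + J * c ∧ -r * x + r * y ≤ om J p s r x y + J * c := by
  have hJ := P.hJ
  have h3 := om_high3 P hc hx (y := y) (by linarith)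
  have h4 := wt_diff P (x := x) (y := y)
  have h5 : r - s - 1 ≤ J := by have := P.r_le; have := P.h1; linarith
  have h6 : 0 ≤ r - s - 1 := by have := P.s_r; linarith
  have h7 : (r - s - 1) * ((2 * J + 1) * x - y) ≤ J * c :=
    (mul_le_mul_of_nonneg_left (by linarith) h6).trans (mul_le_mul_of_nonneg_right h5 hc)
  have : 0 ≤ J * c := by positivity
  constructor
  · refine (min_le_right _ _).trans (max_le ?_ ?_) <;> linarith
  · linarith
end

lemma ofReal_weight (x y a b : ℝ) : ENNReal.ofReal (jap x ^ a * jap y ^ b)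
    = E (a * Real.log (jap x) + b * Real.log (jap y)) := by
  unfold E
  rw [Real.exp_add, Real.rpow_def_of_pos (jap_pos x), Real.rpow_def_of_pos (jap_pos y),
    mul_comm a, mul_comm b]

lemma jap_le_two {k : ℝ} (hk : 1 ≤ |k|) : jap k ≤ 2 * |k| := by
  have := jap_le k; linarith

lemma logjap_le_one {k : ℝ} (hk : |k| ≤ 1) : Real.log (jap k) ≤ Real.log 2 :=
  Real.log_le_log (jap_pos k) (by have := jap_le k; linarith)

/-- Upper bound for the modulation in logarithmic form. -/
lemma logjap_up (j N : ℕ) {k σ a : ℝ} (ha : 0 ≤ a) (ha' : a ≤ 2 * (2 * j + 1))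
    (h : |σ| ≤ a * jap k ^ N) : Real.log (jap σ) ≤ N * Real.log (jap k) + (4 * j + 2) := by
  have h1 : (1 : ℝ) ≤ jap k ^ N := one_le_pow₀ (one_le_jap k)
  have h2 : jap σ ≤ (1 + a) * jap k ^ N := by
    have := jap_le σ; linarith
  have h3 := Real.log_le_log (jap_pos σ) h2
  have h4 := jap_pos k
  rw [Real.log_mul (by positivity) (by positivity), Real.log_pow] at h3
  have h5 := Real.log_le_sub_one_of_pos (show 0 < 1 + a by linarith)
  linarith

/-- Lower bound for the modulation in logarithmic form. -/
lemma logjap_dn (N : ℕ) {k σ : ℝ} (hk : 1 ≤ |k|) (h : |k| ^ N ≤ |σ|) :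
    N * Real.log (jap k) - N ≤ Real.log (jap σ) := by
  have h1 : jap k ^ N ≤ 2 ^ N * jap σ := by
    calc jap k ^ N ≤ (2 * |k|) ^ N := pow_le_pow_left₀ (jap_pos k).le (jap_le_two hk) N
      _ = 2 ^ N * |k| ^ N := mul_pow _ _ _
      _ ≤ 2 ^ N * jap σ := by gcongr; exact h.trans (abs_le_jap σ)
  have h4 := jap_pos k; have h5 := jap_pos σ
  have h3 := Real.log_le_log (by positivity) h1
  rw [Real.log_mul (by positivity) (by positivity), Real.log_pow, Real.log_pow] at h3
  have h6 := Real.log_le_sub_one_of_pos (show (0 : ℝ) < 2 by norm_num)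
  have : (N : ℝ) * Real.log 2 ≤ N * 1 := by gcongr; linarith
  linarith

section
variable {j : ℕ} {lam : ℝ}

/-- Logarithmic form of the inequalities defining `D₁ ∪ D₅`. -/
lemma reg1 {z : ℤ × ℝ} (h : z ∈ D1 j lam ∪ D5 j lam) :
    lV j lam z ≤ 2 * j * lX lam z.1 + (4 * j + 2) := by
  have := logjap_up j (2 * j) (k := (z.1 : ℝ) / lam) (σ := sigL j lam z.1 z.2)
    (a := 2 * (2 * j + 1)) (by positivity) le_rfl ?_
  · push_cast at this; exact this
  · rcases h with ⟨h1, h2⟩ | ⟨h1, h2, h3⟩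
    · refine h2.trans ?_
      have : |(z.1 : ℝ) / lam| ^ (2 * j) ≤ jap ((z.1 : ℝ) / lam) ^ (2 * j) := by
        gcongr; exact abs_le_jap _
      refine mul_le_mul ?_ this (by positivity) (by positivity)
      have : (0 : ℝ) ≤ 2 * (2 * j + 1) := by positivity
      linarith
    · refine h3.trans ?_
      gcongr
      exact (pow_le_one₀ (abs_nonneg _) h2).trans (one_le_pow₀ (one_le_jap _))

/-- Logarithmic form of the inequalities defining `D₂`. -/
lemma reg2 (hj : 1 ≤ j) {z : ℤ × ℝ} (h : z ∈ D2 j lam) :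
    2 * j * lX lam z.1 - (4 * j + 2) ≤ lV j lam z ∧
    lV j lam z ≤ (2 * j + 1) * lX lam z.1 + (4 * j + 2) := by
  obtain ⟨h1, h2, h3⟩ := h
  constructor
  · have := logjap_dn (2 * j) h1 (σ := sigL j lam z.1 z.2) ?_
    · push_cast at this
      have h0 : (0 : ℝ) ≤ j := by positivity
      unfold lX lV; linarith
    · refine le_trans ?_ h2.le
      have hj1 : (1 : ℝ) ≤ j := by exact_mod_cast hj
      exact le_mul_of_one_le_left (by positivity) (by linarith)
  · have := logjap_up j (2 * j + 1) (k := (z.1 : ℝ) / lam) (σ := sigL j lam z.1 z.2)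
      (a := 2 * (2 * j + 1)) (by positivity) le_rfl (h3.trans (by
        gcongr; exact abs_le_jap _))
    push_cast at this; exact this

/-- Logarithmic form of the inequalities defining `D₃ ∪ D₄`. -/
lemma reg3 {z : ℤ × ℝ} (h : z ∈ D3 j lam ∪ D4 j lam) :
    (2 * j + 1) * lX lam z.1 - (4 * j + 2) ≤ lV j lam z := by
  have h0 : (0 : ℝ) ≤ j := by positivity
  rcases h with ⟨h1, h2⟩ | ⟨h1, h2, h3⟩
  · have := logjap_dn (2 * j + 1) h1 (σ := sigL j lam z.1 z.2) (le_trans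
      (le_mul_of_one_le_left (by positivity) (by linarith)) h2.le)
    push_cast at this
    unfold lX lV; linarith
  · have h4 := logjap_le_one h2
    have h6 := Real.log_le_sub_one_of_pos (show (0 : ℝ) < 2 by norm_num)
    have h5 : 0 ≤ lV j lam z := logjap_nonneg _
    have : (2 * j + 1) * lX lam z.1 ≤ (2 * j + 1) * 1 := by
      gcongr; unfold lX; linarith
    linarith

/-- The regions cover all nonzero frequencies. -/
lemma reg_cover (hl : 1 ≤ lam) {z : ℤ × ℝ} (hz : z.1 ≠ 0) :
    z ∈ D1 j lam ∪ D5 j lam ∨ z ∈ D2 j lam ∨ z ∈ D3 j lam ∪ D4 j lam := by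
  have hl0 : 0 < lam := by linarith
  have hk : 1 / lam ≤ |(z.1 : ℝ) / lam| := by
    rw [abs_div, abs_of_pos hl0]
    gcongr
    have : (1 : ℤ) ≤ |z.1| := Int.one_le_abs hz
    exact_mod_cast this
  simp only [D1, D2, D3, D4, D5, Set.mem_union, Set.mem_setOf_eq]
  rcases le_total 1 |(z.1 : ℝ) / lam| with h | h
  · rcases le_or_gt |sigL j lam z.1 z.2|
      (2 * (2 * (j : ℝ) + 1) * |(z.1 : ℝ) / lam| ^ (2 * j + 1)) with h1 | h1
    · rcases le_or_gt |sigL j lam z.1 z.2|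
        (2 * (2 * (j : ℝ) + 1) / 3 * |(z.1 : ℝ) / lam| ^ (2 * j)) with h2 | h2
      · exact Or.inl (Or.inl ⟨h, h2⟩)
      · exact Or.inr (Or.inl ⟨h, h2, h1⟩)
    · exact Or.inr (Or.inr (Or.inl ⟨h, h1⟩))
  · rcases le_or_gt |sigL j lam z.1 z.2|
      (2 * (2 * (j : ℝ) + 1) * |(z.1 : ℝ) / lam| ^ (2 * j + 1)) with h1 | h1
    · exact Or.inl (Or.inr ⟨hk, h, h1⟩)
    · exact Or.inr (Or.inr (Or.inr ⟨hk, h, h1⟩))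
end

/-! ### Comparison of norms -/

section
variable {j : ℕ} {lam p s r : ℝ}

/-- The weight of the `X^s` norm with its three regimes glued together. -/
def Wt (j : ℕ) (lam p s r : ℝ) (z : ℤ × ℝ) : ℝ≥0∞ := E (om j p s r (lX lam z.1) (lV j lam z))

lemma measurable_Wt : Measurable (Wt j lam p s r) := by
  have := measurable_lV j lam; have := measurable_E
  have h : Measurable fun z : ℤ × ℝ => lX lam z.1 := measurable_int (lX lam) measurable_fst
  unfold Wt om; fun_prop

lemma measurable_sig : Measurable fun z : ℤ × ℝ => |sigL j lam z.1 z.2| := by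
  unfold sigL
  have h : Measurable fun z : ℤ × ℝ => ((z.1 : ℝ) / lam) ^ (2 * j + 1) :=
    measurable_int (fun m : ℤ => ((m : ℝ) / lam) ^ (2 * j + 1)) measurable_fst
  have : Measurable fun z : ℤ × ℝ => z.2 - ((z.1 : ℝ) / lam) ^ (2 * j + 1) := measurable_snd.sub h
  exact this.abs

lemma meas_D : MeasurableSet (D1 j lam) ∧ MeasurableSet (D2 j lam) ∧ MeasurableSet (D3 j lam) ∧
    MeasurableSet (D4 j lam) ∧ MeasurableSet (D5 j lam) := by
  have h0 := measurable_sig (j := j) (lam := lam)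
  have h1 : Measurable fun z : ℤ × ℝ => |(z.1 : ℝ) / lam| :=
    measurable_int (fun m : ℤ => |(m : ℝ) / lam|) measurable_fst
  have c1 : MeasurableSet {z : ℤ × ℝ | 1 ≤ |(z.1 : ℝ) / lam|} := measurableSet_le (by fun_prop) h1
  have c2 : MeasurableSet {z : ℤ × ℝ | |(z.1 : ℝ) / lam| ≤ 1} := measurableSet_le h1 (by fun_prop)
  have c3 : MeasurableSet {z : ℤ × ℝ | 1 / lam ≤ |(z.1 : ℝ) / lam|} :=
    measurableSet_le (by fun_prop) h1
  have l1 : ∀ (a : ℝ) (n : ℕ), MeasurableSet {z : ℤ × ℝ | |sigL j lam z.1 z.2| ≤ a * |(z.1 : ℝ) / lam| ^ n} :=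
    fun a n => measurableSet_le h0 (by fun_prop)
  have l2 : ∀ (a : ℝ) (n : ℕ), MeasurableSet {z : ℤ × ℝ | a * |(z.1 : ℝ) / lam| ^ n < |sigL j lam z.1 z.2|} :=
    fun a n => measurableSet_lt (by fun_prop) h0
  exact ⟨c1.inter (l1 _ _), c1.inter ((l2 _ _).inter (l1 _ _)), c1.inter (l2 _ _),
    c3.inter (c2.inter (l2 _ _)), c3.inter (c2.inter (l1 _ _))⟩

lemma half_sq (a : ℝ≥0∞) : (a ^ (1 / 2 : ℝ)) ^ 2 = a := by
  rw [← ENNReal.rpow_natCast, ← ENNReal.rpow_mul]; norm_num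

lemma L2L_sq {f : ℤ → ℝ → ℝ≥0∞} (hf : Measurable (Function.uncurry f)) :
    L2L lam f ^ 2 = N2 (nu lam) (Function.uncurry f) := by
  unfold L2L N2
  rw [half_sq, lint_nu lam (by fun_prop), lint_nuZ]; rfl

lemma L2L_mono {f g : ℤ → ℝ → ℝ≥0∞} (h : ∀ m t, f m t ≤ g m t) : L2L lam f ≤ L2L lam g := by
  unfold L2L
  gcongr with m t
  exact h m t

lemma L2L_mul {f : ℤ → ℝ → ℝ≥0∞} {c : ℝ≥0∞} (hc : c ≠ ∞) :
    L2L lam (fun m t => c * f m t) = c * L2L lam f := by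
  unfold L2L
  simp_rw [mul_pow]
  have : ∀ m, ∫⁻ t, c ^ 2 * f m t ^ 2 = c ^ 2 * ∫⁻ t, f m t ^ 2 := fun m =>
    lintegral_const_mul' _ _ (by finiteness)
  simp_rw [this]
  rw [ENNReal.tsum_mul_left, mul_left_comm, ENNReal.mul_rpow_of_nonneg _ _ (by norm_num)]
  congr 1
  rw [← ENNReal.rpow_natCast, ← ENNReal.rpow_mul]; norm_num

/-- The three pieces of the `X^s` norm in logarithmic form. -/
lemma Xn_eq (a b : ℝ) (D : Set (ℤ × ℝ)) (f : ℤ → ℝ → ℝ≥0∞) :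
    Xn j lam a b (restr D f) = L2L lam (fun m t => E (a * lX lam m + b * lV j lam (m, t)) *
      D.indicator (Function.uncurry f) (m, t)) := by
  unfold Xn
  congr 1; funext m t
  rw [ofReal_weight]; rfl

/-- On each region the glued weight dominates the weight of that region. -/
lemma piece_le {a b C : ℝ} {D : Set (ℤ × ℝ)} (f : ℤ → ℝ → ℝ≥0∞)
    (h : ∀ z ∈ D, a * lX lam z.1 + b * lV j lam z ≤ om j p s r (lX lam z.1) (lV j lam z) + C) :
    Xn j lam a b (restr D f) ≤ E C * L2L lam (fun m t => Wt j lam p s r (m, t) * f m t) := by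
  rw [Xn_eq, ← L2L_mul (E_ne_top C)]
  apply L2L_mono; intro m t
  by_cases hz : (m, t) ∈ D
  · rw [Set.indicator_of_mem hz]
    have := E_mono (h _ hz)
    rw [add_comm _ C, E_add C] at this
    rw [← mul_assoc]
    exact mul_le_mul_left this _
  · rw [Set.indicator_of_notMem hz]; simp

lemma exps (hj : 2 ≤ j) : (2 * (j : ℝ) - 1) / (2 * j) = 1 - 1 / (2 * j) ∧
    -s / (j : ℝ) - 1 = -(s / j + 1) := by
  have : (j : ℝ) ≠ 0 := by positivity
  constructor
  · field_simp
  · ring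

/-- The `X^s` norm is controlled by the `L²` norm with the glued weight; `le_XSn` is the converse. -/
lemma XSn_le (hj : 2 ≤ j) (P : Par j (1 / (2 * j)) s (s / j + 1)) (f : ℤ → ℝ → ℝ≥0∞) :
    XSn j lam s f ≤ 3 * E (j * (4 * j + 2)) *
      L2L lam (fun m t => Wt j lam (1 / (2 * j)) s (s / j + 1) (m, t) * f m t) := by
  unfold XSn
  have hc : (0 : ℝ) ≤ 4 * j + 2 := by positivity
  rw [(exps (s := s) hj).1, (exps (s := s) hj).2]
  have h1 := piece_le (j := j) (lam := lam) (C := j * (4 * j + 2)) (D := D1 j lam ∪ D5 j lam) f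
    fun z hz => (wt1 P hc (reg1 hz)).2
  have h2 := piece_le (j := j) (lam := lam) (C := j * (4 * j + 2)) (D := D2 j lam) f
    fun z hz => (wt2 P hc (reg2 (by omega) hz).1 (reg2 (by omega) hz).2).2
  have h3 := piece_le (j := j) (lam := lam) (C := j * (4 * j + 2)) (D := D3 j lam ∪ D4 j lam) f
    fun z hz => (wt3 P hc (logjap_nonneg _ : 0 ≤ lX lam z.1) (reg3 hz)).2
  refine (add_le_add (add_le_add h1 h2) h3).trans (le_of_eq (by ring))

lemma piece_sq {f : ℤ → ℝ → ℝ≥0∞} (hf : Measurable (Function.uncurry f)) (a b : ℝ)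
    {D : Set (ℤ × ℝ)} (hD : MeasurableSet D) :
    Measurable (fun z : ℤ × ℝ => (E (a * lX lam z.1 + b * lV j lam z) *
      D.indicator (Function.uncurry f) z) ^ 2) ∧
    ∫⁻ z, (E (a * lX lam z.1 + b * lV j lam z) * D.indicator (Function.uncurry f) z) ^ 2 ∂(nu lam)
      = Xn j lam a b (restr D f) ^ 2 := by
  have := measurable_lV j lam; have := measurable_E
  have h : Measurable fun z : ℤ × ℝ => lX lam z.1 := measurable_int (lX lam) measurable_fst
  have h2 := hf.indicator hD
  have h3 : Measurable (fun z : ℤ × ℝ => E (a * lX lam z.1 + b * lV j lam z) *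
      D.indicator (Function.uncurry f) z) := by fun_prop
  refine ⟨h3.pow_const 2, ?_⟩
  rw [Xn_eq, L2L_sq]
  · rfl
  · exact h3

lemma sq3_le (a b c : ℝ≥0∞) : a ^ 2 + b ^ 2 + c ^ 2 ≤ (a + b + c) ^ 2 := by
  rw [show (a + b + c) ^ 2 = a ^ 2 + b ^ 2 + c ^ 2 + 2 * (a * b + a * c + b * c) by ring]
  exact le_add_right le_rfl

/-- The `X^s` norm controls the `L²` norm with the glued weight. -/
lemma le_XSn (hj : 2 ≤ j) (hl : 1 ≤ lam) (P : Par j (1 / (2 * j)) s (s / j + 1))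
    {f : ℤ → ℝ → ℝ≥0∞} (hf : Measurable (Function.uncurry f)) (hf0 : ∀ t, f 0 t = 0) :
    N2 (nu lam) (fun z => Wt j lam (1 / (2 * j)) s (s / j + 1) z * Function.uncurry f z)
      ≤ E (2 * (j * (4 * j + 2))) * XSn j lam s f ^ 2 := by
  have hc : (0 : ℝ) ≤ 4 * j + 2 := by positivity
  obtain ⟨d1, d2, d3, d4, d5⟩ := meas_D (j := j) (lam := lam)
  obtain ⟨n1, e1⟩ := piece_sq (j := j) (lam := lam) hf s (1 - 1 / (2 * j)) (d1.union d5)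
  obtain ⟨n2, e2⟩ := piece_sq (j := j) (lam := lam) hf ((1 - 2 * j) * s - 1) (s + 1) d2
  obtain ⟨n3, e3⟩ := piece_sq (j := j) (lam := lam) hf (-(s / j + 1)) (s / j + 1) (d3.union d4)
  unfold XSn
  rw [(exps (s := s) hj).1, (exps (s := s) hj).2]
  refine le_trans ?_ (mul_le_mul_right (sq3_le _ _ _) _)
  rw [← e1, ← e2, ← e3, ← lintegral_add_left n1, ← lintegral_add_right _ n3,
    ← lintegral_const_mul' _ _ (E_ne_top _)]
  unfold N2
  apply lintegral_mono; intro z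
  simp only [Pi.add_apply]
  have key : ∀ (a : ℝ) (D : Set (ℤ × ℝ)), z ∈ D →
      om j (1 / (2 * j)) s (s / j + 1) (lX lam z.1) (lV j lam z) ≤ a + j * (4 * j + 2) →
      (Wt j lam (1 / (2 * j)) s (s / j + 1) z * Function.uncurry f z) ^ 2 ≤
        E (2 * (j * (4 * j + 2))) * (E a * D.indicator (Function.uncurry f) z) ^ 2 := by
    intro a D hD h
    rw [Set.indicator_of_mem hD, ← E_sq, ← mul_pow]
    have := E_mono h
    rw [add_comm a, E_add] at this
    rw [← mul_assoc]
    gcongr; exact this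
  by_cases hz : z.1 = 0
  · have : Function.uncurry f z = 0 := by
      rw [show z = (z.1, z.2) from rfl, hz]; exact hf0 _
    simp [this]
  rcases reg_cover (j := j) hl hz with h | h | h
  · refine (key _ _ h (wt1 P hc (reg1 h)).1).trans ?_
    gcongr; exact le_add_right (le_add_right le_rfl)
  · refine (key _ _ h (wt2 P hc (reg2 (by omega) h).1 (reg2 (by omega) h).2).1).trans ?_
    gcongr; exact le_add_right (le_add_left le_rfl)
  · refine (key _ _ h (wt3 P hc (logjap_nonneg _ : 0 ≤ lX lam z.1) (reg3 h)).1).trans ?_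
    gcongr; exact le_add_left le_rfl

/-- The `Y^s` norm is the norm of `L²_k L¹_τ` with weight `⟨k⟩^s`. -/
lemma Yn_sq (f : ℤ → ℝ → ℝ≥0∞) :
    Yn lam s f ^ 2 = Y2 lam (fun z => E (s * lX lam z.1) * Function.uncurry f z) := by
  unfold Yn Y2 N2
  rw [half_sq, lint_nuZ]
  congr 1
  apply tsum_congr; intro m
  simp only [Function.uncurry_apply_pair]
  rw [lintegral_const_mul' _ _ (E_ne_top _), mul_pow, E_sq]
  congr 1
  unfold E lX
  rw [Real.rpow_def_of_pos (jap_pos _)]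
  congr 2; ring
end

/-! ### Pointwise bounds -/

section
variable {j : ℕ} {lam p s r : ℝ}

/-- Convolution on the group `ℤ × ℝ`. -/
def conv0 (lam : ℝ) (F₁ F₂ : ℤ × ℝ → ℝ≥0∞) (z : ℤ × ℝ) : ℝ≥0∞ :=
  ∫⁻ w, F₁ w * F₂ (z - w) ∂(nu lam)

/-- The restriction to nonzero frequencies may be dropped for functions vanishing at `k = 0`. -/
lemma convL_eq {f₁ f₂ : ℤ → ℝ → ℝ≥0∞} (h1 : Measurable (Function.uncurry f₁))
    (h2 : Measurable (Function.uncurry f₂)) (h10 : ∀ t, f₁ 0 t = 0) (h20 : ∀ t, f₂ 0 t = 0)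
    (m : ℤ) (t : ℝ) :
    convL lam f₁ f₂ m t = conv0 lam (Function.uncurry f₁) (Function.uncurry f₂) (m, t) := by
  unfold convL conv0
  rw [lint_nu lam (by fun_prop), lint_nuZ]
  congr 1
  apply tsum_congr; intro m₁
  split_ifs with h
  · rfl
  · symm
    rw [lintegral_eq_zero_iff (by fun_prop)]
    filter_upwards with t'
    show f₁ m₁ t' * f₂ (m - m₁) (t - t') = 0
    by_cases h0 : m₁ = 0
    · rw [h0, h10, zero_mul]
    · have : m - m₁ = 0 := by by_contra h'; exact h ⟨h0, h'⟩
      rw [this, h20, mul_zero]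

/-- The integrand of `HH`. -/
def DD (j : ℕ) (lam p : ℝ) (a₁ b₁ a₂ b₂ : ℤ × ℝ → ℝ≥0∞) (z w : ℤ × ℝ) : ℝ≥0∞ :=
  K1 j lam p z w * (a₁ w * a₂ (z - w)) + K2 j lam p z w * (a₁ w * a₂ (z - w))
    + K3 j lam p z w * (a₁ w * a₂ (z - w))
    + K4 lam p z.1 w.1 * (a₁ w * b₂ (z - w))
    + K4 lam p z.1 w.1 * (b₁ w * a₂ (z - w))
    + K6 j lam p z w * (a₁ w * a₂ (z - w))
    + K6 j lam p z (z - w) * (a₁ w * a₂ (z - w))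

lemma bil_integrand {K : ℤ × ℝ → ℤ × ℝ → ℝ≥0∞} (hK : Measurable (Function.uncurry K))
    {f g : ℤ × ℝ → ℝ≥0∞} (hf : Measurable f) (hg : Measurable g) (z : ℤ × ℝ) :
    Measurable fun w => K z w * (f w * g (z - w)) := by
  have : Measurable fun w => K z w := hK.comp measurable_prodMk_left
  fun_prop

lemma HH_eq {a₁ b₁ a₂ b₂ : ℤ × ℝ → ℝ≥0∞} (ha₁ : Measurable a₁) (hb₁ : Measurable b₁)
    (ha₂ : Measurable a₂) (hb₂ : Measurable b₂) (z : ℤ × ℝ) :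
    ∫⁻ w, DD j lam p a₁ b₁ a₂ b₂ z w ∂(nu lam) = HH j lam p a₁ b₁ a₂ b₂ z := by
  have m2 := bil_integrand (measurable_K2 j lam p) ha₁ ha₂ z
  have m3 := bil_integrand (measurable_K3 j lam p) ha₁ ha₂ z
  have m4 := bil_integrand (measurable_K4' (lam := lam) (p := p)) ha₁ hb₂ z
  have m5 := bil_integrand (measurable_K4' (lam := lam) (p := p)) hb₁ ha₂ z
  have m6 := bil_integrand (measurable_K6 j lam p) ha₁ ha₂ z
  have m7 := bil_integrand (measurable_K6' (j := j) (lam := lam) (p := p)) ha₁ ha₂ z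
  unfold DD HH bil
  rw [lintegral_add_right _ m7, lintegral_add_right _ m6, lintegral_add_right _ m5,
    lintegral_add_right _ m4, lintegral_add_right _ m3, lintegral_add_right _ m2]

lemma measurable_HH {a₁ b₁ a₂ b₂ : ℤ × ℝ → ℝ≥0∞} (ha₁ : Measurable a₁) (hb₁ : Measurable b₁)
    (ha₂ : Measurable a₂) (hb₂ : Measurable b₂) : Measurable (HH j lam p a₁ b₁ a₂ b₂) :=
  (((((((measurable_bil (measurable_K1 j lam p) ha₁ ha₂).add
    (measurable_bil (measurable_K2 j lam p) ha₁ ha₂)).add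
    (measurable_bil (measurable_K3 j lam p) ha₁ ha₂)).add
    (measurable_bil measurable_K4' ha₁ hb₂)).add
    (measurable_bil measurable_K4' hb₁ ha₂)).add
    (measurable_bil (measurable_K6 j lam p) ha₁ ha₂)).add
    (measurable_bil measurable_K6' ha₁ ha₂))

lemma Dom_eq {z w : ℤ × ℝ} (hz : z.1 ≠ 0) (hw : w.1 ≠ 0) (hzw : (z - w).1 ≠ 0)
    (a₁ b₁ a₂ b₂ : ℤ × ℝ → ℝ≥0∞) :
    Dom p (lU lam z.1) (lV j lam z) (lU lam w.1) (lV j lam w) (lX lam w.1) (lU lam (z - w).1)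
      (lV j lam (z - w)) (lX lam (z - w).1) (a₁ w) (b₁ w) (a₂ (z - w)) (b₂ (z - w))
      = DD j lam p a₁ b₁ a₂ b₂ z w := by
  have e1 : z.1 - w.1 = (z - w).1 := rfl
  have e2 : z.1 - (z - w).1 = w.1 := by rw [← e1]; ring
  unfold Dom DD K1 K2 K3 K4 K6
  rw [e2, e1]
  simp only [nz, if_neg hz, if_neg hw, if_neg hzw, one_mul, th]
  ring

/-- The input `f` with the `X^s` weight. -/
def aX (j : ℕ) (lam s : ℝ) (F : ℤ × ℝ → ℝ≥0∞) (z : ℤ × ℝ) : ℝ≥0∞ :=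
  Wt j lam (1 / (2 * j)) s (s / j + 1) z * F z

/-- The input `f` with the `Y^s` weight. -/
def bY (lam s : ℝ) (F : ℤ × ℝ → ℝ≥0∞) (z : ℤ × ℝ) : ℝ≥0∞ := E (s * lX lam z.1) * F z

lemma measurable_aX {F : ℤ × ℝ → ℝ≥0∞} (hF : Measurable F) : Measurable (aX j lam s F) :=
  measurable_Wt.mul hF

lemma measurable_bY {F : ℤ × ℝ → ℝ≥0∞} (hF : Measurable F) : Measurable (bY lam s F) :=
  (measurable_int (fun m => E (s * lX lam m)) measurable_fst).mul hF

/-- The constant of the case analysis. -/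
def cA (j : ℕ) : ℝ := 40 * (j * j * (14 * j + 21))

/-- The frequencies add up, and the modulations satisfy the resonance identity. -/
lemma freq_data (hl : 1 ≤ lam) {z w : ℤ × ℝ} (hz : z.1 ≠ 0) (hw : w.1 ≠ 0) (hzw : (z - w).1 ≠ 0) :
    (w.1 : ℝ) / lam ≠ 0 ∧ ((z - w).1 : ℝ) / lam ≠ 0 ∧ (w.1 : ℝ) / lam + ((z - w).1 : ℝ) / lam
      = (z.1 : ℝ) / lam ∧ (z.1 : ℝ) / lam ≠ 0 ∧
    sigL j lam z.1 z.2 = sigL j lam w.1 w.2 + sigL j lam (z - w).1 (z - w).2 +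
      (((w.1 : ℝ) / lam) ^ (2 * j + 1) + (((z - w).1 : ℝ) / lam) ^ (2 * j + 1)
        - ((w.1 : ℝ) / lam + ((z - w).1 : ℝ) / lam) ^ (2 * j + 1)) := by
  have hl0 : lam ≠ 0 := by linarith
  have e : (w.1 : ℝ) / lam + ((z - w).1 : ℝ) / lam = (z.1 : ℝ) / lam := by
    rw [Prod.fst_sub]; push_cast; field_simp; ring
  have cz : (z.1 : ℝ) ≠ 0 := by exact_mod_cast hz
  have cw : (w.1 : ℝ) ≠ 0 := by exact_mod_cast hw
  have czw : ((z - w).1 : ℝ) ≠ 0 := by exact_mod_cast hzw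
  refine ⟨div_ne_zero cw hl0, div_ne_zero czw hl0, e, div_ne_zero cz hl0, ?_⟩
  rw [e]; unfold sigL; rw [Prod.snd_sub]; ring

/-- Symbol of `Λ^{-1}∂_x`. -/
def fac (j : ℕ) (lam : ℝ) (z : ℤ × ℝ) : ℝ≥0∞ :=
  ENNReal.ofReal (|(z.1 : ℝ) / lam| * (jap (sigL j lam z.1 z.2))⁻¹)

lemma fac_zero {z : ℤ × ℝ} (hz : z.1 = 0) : fac j lam z = 0 := by simp [fac, hz]

lemma fac_le (hl : 1 ≤ lam) {z : ℤ × ℝ} (hz : z.1 ≠ 0) :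
    fac j lam z ≤ E (lX lam z.1 - lU lam z.1 - lV j lam z) := by
  have hk : (z.1 : ℝ) / lam ≠ 0 := div_ne_zero (by exact_mod_cast hz) (by linarith)
  apply ENNReal.ofReal_le_ofReal
  rw [Real.exp_sub, div_eq_mul_inv]
  have h := abs_le_exp hk
  have e : Real.exp (lV j lam z) = jap (sigL j lam z.1 z.2) := Real.exp_log (jap_pos _)
  rw [e]
  exact mul_le_mul_of_nonneg_right h (inv_nonneg.2 (jap_pos _).le)

/-- Pointwise bound of the weighted integrand of the convolution. -/
lemma X_pt (hl : 1 ≤ lam) (P : Par j (1 / (2 * j)) s (s / j + 1)) {F₁ F₂ : ℤ × ℝ → ℝ≥0∞}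
    (h10 : ∀ t, F₁ (0, t) = 0) (h20 : ∀ t, F₂ (0, t) = 0) {z : ℤ × ℝ} (hz : z.1 ≠ 0) (w : ℤ × ℝ) :
    E (lX lam z.1 - lU lam z.1 - lV j lam z
        + om j (1 / (2 * j)) s (s / j + 1) (lX lam z.1) (lV j lam z)) * (F₁ w * F₂ (z - w))
      ≤ E (cA j) * DD j lam (1 / (2 * j)) (aX j lam s F₁) (bY lam s F₁) (aX j lam s F₂)
        (bY lam s F₂) z w := by
  by_cases hw : w.1 = 0
  · rw [show F₁ w = 0 by rw [show w = (w.1, w.2) from rfl, hw]; exact h10 _]; simp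
  by_cases hzw : (z - w).1 = 0
  · rw [show F₂ (z - w) = 0 by rw [show z - w = ((z - w).1, (z - w).2) from rfl, hzw]; exact h20 _]
    simp
  obtain ⟨q1, q2, q3, q4, q5⟩ := freq_data (j := j) hl hz hw hzw
  have h := alt_X j P q1 q2 (by rw [q3]; exact q4) q5
  rw [q3] at h
  have h' := Alt.dom h (F₁ w) (F₂ (z - w))
  rw [← Dom_eq hz hw hzw]
  exact h'

/-- Pointwise bound of the output with the `X^s` weight. -/
lemma X_bound (hl : 1 ≤ lam) (P : Par j (1 / (2 * j)) s (s / j + 1)) {F₁ F₂ : ℤ × ℝ → ℝ≥0∞}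
    (h1 : Measurable F₁) (h2 : Measurable F₂)
    (h10 : ∀ t, F₁ (0, t) = 0) (h20 : ∀ t, F₂ (0, t) = 0) (z : ℤ × ℝ) :
    Wt j lam (1 / (2 * j)) s (s / j + 1) z * (fac j lam z * conv0 lam F₁ F₂ z)
      ≤ E (cA j) * HH j lam (1 / (2 * j)) (aX j lam s F₁) (bY lam s F₁) (aX j lam s F₂)
        (bY lam s F₂) z := by
  by_cases hz : z.1 = 0
  · simp [fac_zero hz]
  rw [← HH_eq (measurable_aX h1) (measurable_bY h1) (measurable_aX h2) (measurable_bY h2),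
    ← lintegral_const_mul' _ _ (E_ne_top _)]
  calc _ ≤ E (lX lam z.1 - lU lam z.1 - lV j lam z
        + om j (1 / (2 * j)) s (s / j + 1) (lX lam z.1) (lV j lam z)) * conv0 lam F₁ F₂ z := by
        rw [E_add, mul_comm (E _) (E _), mul_assoc]
        unfold Wt; gcongr; exact fac_le hl hz
    _ = ∫⁻ w, E (lX lam z.1 - lU lam z.1 - lV j lam z
        + om j (1 / (2 * j)) s (s / j + 1) (lX lam z.1) (lV j lam z)) * (F₁ w * F₂ (z - w))
          ∂(nu lam) := by
        unfold conv0; rw [lintegral_const_mul' _ _ (E_ne_top _)]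
    _ ≤ _ := lintegral_mono fun w => X_pt hl P h10 h20 hz w

/-- The integrand of the part of the `Y^s` estimate controlled by the `Y^s` norms alone. -/
def T1 (lam p s : ℝ) (F₁ F₂ : ℤ × ℝ → ℝ≥0∞) (z w : ℤ × ℝ) : ℝ≥0∞ :=
  (K4 lam p z.1 w.1 + th lam p z.1) * (bY lam s F₁ w * bY lam s F₂ (z - w))

/-- The part of the `Y^s` estimate controlled by the `Y^s` norms alone. -/
def TT (lam p s : ℝ) (F₁ F₂ : ℤ × ℝ → ℝ≥0∞) (z : ℤ × ℝ) : ℝ≥0∞ :=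
  ∫⁻ w, T1 lam p s F₁ F₂ z w ∂(nu lam)

/-- Cut-off of the modulations below `⟨k⟩^{2j+1}`, normalized in `L²_τ`. -/
def cut (j : ℕ) (lam : ℝ) (z : ℤ × ℝ) : ℝ≥0∞ :=
  if lV j lam z < (2 * j + 1) * lX lam z.1 then E (-((j + 1 / 2) * lX lam z.1)) else 0

/-- The function of the modulation, bounded in `L²_τ`, that passes from `L²_τ` to `L¹_τ`. -/
def rho (j : ℕ) (lam p : ℝ) (z : ℤ × ℝ) : ℝ≥0∞ :=
  E (-((1 / 2 + p / 4) * lV j lam z)) + cut j lam z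

lemma measurable_cut : Measurable (cut j lam) := by
  have := measurable_lV j lam; have := measurable_E
  have h : Measurable fun z : ℤ × ℝ => lX lam z.1 := measurable_int (lX lam) measurable_fst
  unfold cut
  exact Measurable.ite (measurableSet_lt (by fun_prop) (by fun_prop)) (by fun_prop) (by fun_prop)

lemma measurable_rho : Measurable (rho j lam p) := by
  have := measurable_lV j lam; have := measurable_E; have := measurable_cut (j := j) (lam := lam)
  unfold rho; fun_prop

/-- Pointwise bound of the integrand with the `Y^s` weight, for modulations above `⟨k⟩^{2j+1}`. -/
lemma Y_pt (hl : 1 ≤ lam) (P : Par j (1 / (2 * j)) s (s / j + 1)) {F₁ F₂ : ℤ × ℝ → ℝ≥0∞}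
    (h10 : ∀ t, F₁ (0, t) = 0) (h20 : ∀ t, F₂ (0, t) = 0) {z : ℤ × ℝ} (hz : z.1 ≠ 0)
    (hy : (2 * j + 1) * lX lam z.1 ≤ lV j lam z) (w : ℤ × ℝ) :
    E ((1 + s) * lX lam z.1 - lU lam z.1 - lV j lam z) * (F₁ w * F₂ (z - w))
      ≤ E (cA j) * (E (-((1 / 2 + 1 / (2 * j) / 4) * lV j lam z)) *
          DD j lam (1 / (2 * j)) (aX j lam s F₁) (bY lam s F₁) (aX j lam s F₂) (bY lam s F₂) z w
        + T1 lam (1 / (2 * j)) s F₁ F₂ z w) := by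
  by_cases hw : w.1 = 0
  · rw [show F₁ w = 0 by rw [show w = (w.1, w.2) from rfl, hw]; exact h10 _]; simp
  by_cases hzw : (z - w).1 = 0
  · rw [show F₂ (z - w) = 0 by rw [show z - w = ((z - w).1, (z - w).2) from rfl, hzw]; exact h20 _]
    simp
  obtain ⟨q1, q2, q3, q4, q5⟩ := freq_data (j := j) hl hz hw hzw
  have h := alt_Y j P q1 q2 (by rw [q3]; exact q4) q5 (by rw [q3]; exact hy)
  rw [q3] at h
  have key : ∀ (V : ℝ) (κ : ℝ≥0∞), E V = κ → κ ≤ K4 lam (1 / (2 * j)) z.1 w.1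
        + th lam (1 / (2 * j)) z.1 →
      (1 + s) * lX lam z.1 - lU lam z.1 - lV j lam z
        ≤ cA j + (s * lX lam w.1 + s * lX lam (z - w).1 + V) →
      E ((1 + s) * lX lam z.1 - lU lam z.1 - lV j lam z) * (F₁ w * F₂ (z - w)) ≤
        E (cA j) * T1 lam (1 / (2 * j)) s F₁ F₂ z w := by
    intro V κ hV hκ hle
    calc _ ≤ E (cA j + (s * lX lam w.1 + s * lX lam (z - w).1 + V)) * (F₁ w * F₂ (z - w)) := by
          gcongr; exact E_mono hle
      _ = E (cA j) * (κ * (bY lam s F₁ w * bY lam s F₂ (z - w))) := by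
          unfold bY; rw [E_add, E_add, E_add, hV]; ring
      _ ≤ _ := by unfold T1; gcongr
  rcases h with h | h | h | h
  · set D := DD j lam (1 / (2 * j)) (aX j lam s F₁) (bY lam s F₁) (aX j lam s F₂) (bY lam s F₂) z w
      with hD
    set η := (1 / 2 + 1 / (2 * (j : ℝ)) / 4) * lV j lam z with hη
    have h' : E ((1 + s) * lX lam z.1 - lU lam z.1 - lV j lam z + η) * (F₁ w * F₂ (z - w))
        ≤ E (cA j) * D := by
      rw [hD, ← Dom_eq hz hw hzw]; exact Alt.dom h (F₁ w) (F₂ (z - w))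
    rw [mul_add]
    refine le_add_right ?_
    rw [E_add] at h'
    have e : E (-η) * E η = 1 := by rw [← E_add]; simp [E_zero]
    calc _ = (E (-η) * E η) *
        (E ((1 + s) * lX lam z.1 - lU lam z.1 - lV j lam z) * (F₁ w * F₂ (z - w))) := by
          rw [e, one_mul]
      _ = E (-η) * (E ((1 + s) * lX lam z.1 - lU lam z.1 - lV j lam z) * E η *
          (F₁ w * F₂ (z - w))) := by ring
      _ ≤ E (-η) * (E (cA j) * D) := by gcongr
      _ = _ := by ring
  · exact (key _ (th lam (1 / (2 * j)) w.1) rfl (by unfold K4; rw [add_assoc]; exact le_add_right le_rfl) h).trans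
      (mul_le_mul_right (le_add_left le_rfl) _)
  · exact (key _ (th lam (1 / (2 * j)) (z - w).1) rfl
      (by unfold K4; exact le_add_right (le_add_left le_rfl)) h).trans
      (mul_le_mul_right (le_add_left le_rfl) _)
  · exact (key _ (th lam (1 / (2 * j)) z.1) rfl (le_add_left le_rfl) h).trans
      (mul_le_mul_right (le_add_left le_rfl) _)
end

/-! ### The `Y^s` part -/

section
variable {j : ℕ} {lam p s r : ℝ}

/-- Pointwise bound of the output in the `Y^s` part of the norm. -/
lemma Y_bound (hl : 1 ≤ lam) (P : Par j (1 / (2 * j)) s (s / j + 1)) {F₁ F₂ : ℤ × ℝ → ℝ≥0∞}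
    (h1 : Measurable F₁) (h2 : Measurable F₂)
    (h10 : ∀ t, F₁ (0, t) = 0) (h20 : ∀ t, F₂ (0, t) = 0) (z : ℤ × ℝ) :
    E (s * lX lam z.1) * (fac j lam z * conv0 lam F₁ F₂ z)
      ≤ E (cA j) * (rho j lam (1 / (2 * j)) z * HH j lam (1 / (2 * j)) (aX j lam s F₁)
        (bY lam s F₁) (aX j lam s F₂) (bY lam s F₂) z + TT lam (1 / (2 * j)) s F₁ F₂ z) := by
  by_cases hz : z.1 = 0
  · simp [fac_zero hz]
  have hx : 0 ≤ lX lam z.1 := logjap_nonneg _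
  have hy0 : 0 ≤ lV j lam z := logjap_nonneg _
  have mH := HH_eq (j := j) (lam := lam) (p := 1 / (2 * j)) (measurable_aX (j := j) (lam := lam) (s := s) h1)
    (measurable_bY (lam := lam) (s := s) h1) (measurable_aX (j := j) (lam := lam) (s := s) h2)
    (measurable_bY (lam := lam) (s := s) h2) z
  rcases le_or_gt ((2 * j + 1) * lX lam z.1) (lV j lam z) with hy | hy
  · calc _ ≤ E ((1 + s) * lX lam z.1 - lU lam z.1 - lV j lam z) * conv0 lam F₁ F₂ z := by
          rw [show (1 + s) * lX lam z.1 - lU lam z.1 - lV j lam z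
            = s * lX lam z.1 + (lX lam z.1 - lU lam z.1 - lV j lam z) by ring, E_add, mul_assoc]
          gcongr; exact fac_le hl hz
      _ = ∫⁻ w, E ((1 + s) * lX lam z.1 - lU lam z.1 - lV j lam z) * (F₁ w * F₂ (z - w))
            ∂(nu lam) := by
          unfold conv0; rw [lintegral_const_mul' _ _ (E_ne_top _)]
      _ ≤ _ := lintegral_mono fun w => Y_pt hl P h10 h20 hz hy w
      _ = E (cA j) * (E (-((1 / 2 + 1 / (2 * j) / 4) * lV j lam z)) * HH j lam (1 / (2 * j))
            (aX j lam s F₁) (bY lam s F₁) (aX j lam s F₂) (bY lam s F₂) z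
            + TT lam (1 / (2 * j)) s F₁ F₂ z) := by
          have mT : Measurable fun w => T1 lam (1 / (2 * j)) s F₁ F₂ z w := by
            have m1 := measurable_bY (lam := lam) (s := s) h1
            have m2 := measurable_bY (lam := lam) (s := s) h2
            have m3 : Measurable fun w : ℤ × ℝ => K4 lam (1 / (2 * j)) z.1 w.1 :=
              measurable_int (K4 lam (1 / (2 * j)) z.1) measurable_fst
            unfold T1; fun_prop
          rw [lintegral_const_mul' _ _ (E_ne_top _), lintegral_add_right _ mT,
            lintegral_const_mul' _ _ (E_ne_top _), mH]
          rfl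
      _ ≤ _ := by gcongr; exact le_add_right le_rfl
  · have hX := X_bound (s := s) hl P h1 h2 h10 h20 z
    set H := HH j lam (1 / (2 * j)) (aX j lam s F₁) (bY lam s F₁) (aX j lam s F₂) (bY lam s F₂) z
    have key : ∀ a : ℝ, E a ≤ rho j lam (1 / (2 * j)) z →
        s * lX lam z.1 ≤ a + om j (1 / (2 * j)) s (s / j + 1) (lX lam z.1) (lV j lam z) →
        E (s * lX lam z.1) * (fac j lam z * conv0 lam F₁ F₂ z)
          ≤ rho j lam (1 / (2 * j)) z * (E (cA j) * H) := by
      intro a ha h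
      calc _ ≤ E (a + om j (1 / (2 * j)) s (s / j + 1) (lX lam z.1) (lV j lam z)) *
            (fac j lam z * conv0 lam F₁ F₂ z) := by gcongr; exact E_mono h
        _ = E a * (Wt j lam (1 / (2 * j)) s (s / j + 1) z *
            (fac j lam z * conv0 lam F₁ F₂ z)) := by rw [E_add, mul_assoc]; rfl
        _ ≤ _ := by gcongr
    have h1' : E (s * lX lam z.1) * (fac j lam z * conv0 lam F₁ F₂ z)
          ≤ rho j lam (1 / (2 * j)) z * (E (cA j) * H) := by
      have p4 := P.p_le
      -- For modulation at most `⟨k⟩^{2j}` the power of `⟨σ⟩` in `rho` suffices; between `⟨k⟩^{2j}` and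
      -- `⟨k⟩^{2j+1}` the cut-off is used, thanks to `s ≥ -j + 1/2`.
      rcases le_total (lV j lam z) (2 * j * lX lam z.1) with h | h
      · apply key (-((1 / 2 + 1 / (2 * j) / 4) * lV j lam z)) (le_add_right le_rfl)
        have := om_low P le_rfl (y := lV j lam z) (x := lX lam z.1) (by linarith)
        nlinarith
      · apply key (-((j + 1 / 2) * lX lam z.1))
        · unfold rho cut; rw [if_pos hy]; exact le_add_left le_rfl
        · have := om_high P le_rfl hx (y := lV j lam z) (by linarith)
          have := P.h1
          nlinarith
    refine h1'.trans ?_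
    rw [mul_left_comm]
    gcongr; exact le_add_right le_rfl

lemma lV_int (a : ℝ) (m : ℤ) : ∫⁻ t : ℝ, E (-(a * lV j lam (m, t))) = IJ a := by
  have h := TI_volume.right (fun t => E (-(a * Real.log (jap t)))) (measurable_Ejap' a)
    (((m : ℝ) / lam) ^ (2 * j + 1))
  unfold IJ lV sigL
  exact h

/-- The set `⟨σ⟩ < ⟨k⟩^{2j+1}` has length at most `2⟨k⟩^{2j+1}` in `τ`. -/
lemma cut_int (m : ℤ) : ∫⁻ t : ℝ, cut j lam (m, t) ^ 2 ≤ 2 := by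
  set k : ℝ := ((m : ℝ) / lam) ^ (2 * j + 1) with hk
  set K : ℝ := jap ((m : ℝ) / lam) ^ (2 * j + 1) with hK
  have hK0 : 0 < K := pow_pos (jap_pos _) _
  calc ∫⁻ t : ℝ, cut j lam (m, t) ^ 2
      ≤ ∫⁻ t : ℝ, (Set.Icc (k - K) (k + K)).indicator (fun _ => ENNReal.ofReal K⁻¹) t := by
        apply lintegral_mono; intro t
        simp only [cut]
        split_ifs with h
        · have h1 : |t - k| ≤ K := by
            have h2 := Real.exp_le_exp.2 h.le
            have e : Real.exp (lV j lam (m, t)) = jap (t - k) := Real.exp_log (jap_pos _)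
            have e2 : Real.exp ((2 * j + 1) * lX lam m) = K := by
              rw [hK, ← Real.exp_log (jap_pos ((m : ℝ) / lam)), ← Real.exp_nat_mul]
              push_cast; rfl
            rw [e, e2] at h2
            exact (abs_le_jap _).trans h2
          have h3 := abs_le.1 h1
          rw [Set.indicator_of_mem (by constructor <;> linarith), E_sq]
          unfold E
          apply ENNReal.ofReal_le_ofReal
          apply le_of_eq
          rw [hK, ← Real.exp_log (jap_pos ((m : ℝ) / lam)), ← Real.exp_nat_mul, ← Real.exp_neg]
          congr 1
          push_cast; unfold lX; ring
        · simp
    _ = ENNReal.ofReal K⁻¹ * ENNReal.ofReal (2 * K) := by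
        rw [lintegral_indicator measurableSet_Icc, setLIntegral_const, Real.volume_Icc]
        congr 2; ring
    _ ≤ 2 := by
        rw [← ENNReal.ofReal_mul (by positivity), show K⁻¹ * (2 * K) = 2 by field_simp]
        simp

lemma rho_int (m : ℤ) : ∫⁻ t : ℝ, rho j lam p (m, t) ^ 2 ≤ 4 * (IJ (1 + p / 2) + 2) := by
  have mc : Measurable fun t : ℝ => cut j lam (m, t) := measurable_cut.comp measurable_prodMk_left
  calc ∫⁻ t : ℝ, rho j lam p (m, t) ^ 2
      ≤ ∫⁻ t : ℝ, 4 * (E (-((1 + p / 2) * lV j lam (m, t))) + cut j lam (m, t) ^ 2) := by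
        apply lintegral_mono; intro t
        refine (sq_add_le _ _).trans (le_of_eq ?_)
        rw [E_sq]; congr 3; ring
    _ = 4 * (IJ (1 + p / 2) + ∫⁻ t : ℝ, cut j lam (m, t) ^ 2) := by
        rw [lintegral_const_mul' _ _ (by norm_num), lintegral_add_right _ (mc.pow_const 2), lV_int]
    _ ≤ _ := by gcongr; exact cut_int m

/-- By Cauchy–Schwarz in `τ`, `ρ` maps `L²` to `L²_k L¹_τ`. -/
lemma Y2_rho {H : ℤ × ℝ → ℝ≥0∞} (hH : Measurable H) :
    Y2 lam (fun z => rho j lam p z * H z) ≤ 4 * (IJ (1 + p / 2) + 2) * N2 (nu lam) H := by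
  have mr := measurable_rho (j := j) (lam := lam) (p := p)
  unfold Y2 N2
  rw [lint_nu lam (by fun_prop)]
  rw [← lintegral_const_mul _ (by fun_prop)]
  apply lintegral_mono; intro m
  have := cs_lintegral volume (f := fun t => rho j lam p (m, t)) (g := fun t => H (m, t))
    (by fun_prop) (by fun_prop)
  exact this.trans (mul_le_mul_left (rho_int m) _)

lemma Y2_mono {f g : ℤ × ℝ → ℝ≥0∞} (h : ∀ z, f z ≤ g z) : Y2 lam f ≤ Y2 lam g := by
  unfold Y2 N2
  apply lintegral_mono; intro m
  simp only
  gcongr with t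
  exact h _

lemma Y2_mul {f : ℤ × ℝ → ℝ≥0∞} {c : ℝ≥0∞} (hc : c ≠ ∞) :
    Y2 lam (fun z => c * f z) = c ^ 2 * Y2 lam f := by
  unfold Y2 N2
  simp_rw [lintegral_const_mul' _ _ hc, mul_pow]
  rw [lintegral_const_mul' _ _ (by finiteness)]

lemma Y2_add {f g : ℤ × ℝ → ℝ≥0∞} (hf : Measurable f) :
    Y2 lam (fun z => f z + g z) ≤ 4 * (Y2 lam f + Y2 lam g) := by
  unfold Y2
  have : (fun m : ℤ => ∫⁻ t : ℝ, (f (m, t) + g (m, t)))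
      = fun m => (∫⁻ t, f (m, t)) + ∫⁻ t, g (m, t) := by
    funext m; exact lintegral_add_left (by fun_prop) _
  rw [this]
  exact N2_add _ Measurable.of_discrete Measurable.of_discrete

lemma measurable_TT {F₁ F₂ : ℤ × ℝ → ℝ≥0∞} (h1 : Measurable F₁) (h2 : Measurable F₂) :
    Measurable (TT lam p s F₁ F₂) := by
  refine measurable_bil (K := fun z w : ℤ × ℝ => K4 lam p z.1 w.1 + th lam p z.1) ?_
    (measurable_bY h1) (measurable_bY h2)
  have h : Measurable fun q : (ℤ × ℝ) × (ℤ × ℝ) => th lam p q.1.1 :=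
    measurable_int (th lam p) (by fun_prop)
  exact measurable_K4'.add h

/-- Integrating in `τ` reduces the remaining part to a convolution in `k`. -/
lemma TT_int {F₁ F₂ : ℤ × ℝ → ℝ≥0∞} (h1 : Measurable F₁) (h2 : Measurable F₂) (m : ℤ) :
    ∫⁻ t : ℝ, TT lam p s F₁ F₂ (m, t) =
      bil (nuZ lam) (K4 lam p) (fun m => ∫⁻ t, bY lam s F₁ (m, t)) (fun m => ∫⁻ t, bY lam s F₂ (m, t)) m
      + bil (nuZ lam) (fun m _ => th lam p m) (fun m => ∫⁻ t, bY lam s F₁ (m, t))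
        (fun m => ∫⁻ t, bY lam s F₂ (m, t)) m := by
  have m1 := measurable_bY (lam := lam) (s := s) h1
  have m2 := measurable_bY (lam := lam) (s := s) h2
  set b₁ := bY lam s F₁; set b₂ := bY lam s F₂
  have mT : Measurable fun q : ℝ × (ℤ × ℝ) => T1 lam p s F₁ F₂ (m, q.1) q.2 := by
    have m3 : Measurable fun q : ℝ × (ℤ × ℝ) => K4 lam p m q.2.1 :=
      measurable_int (K4 lam p m) (by fun_prop)
    show Measurable fun q : ℝ × (ℤ × ℝ) =>
      (K4 lam p m q.2.1 + th lam p m) * (b₁ q.2 * b₂ ((m, q.1) - q.2))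
    fun_prop
  unfold TT
  rw [lintegral_lintegral_swap mT.aemeasurable, lint_nu lam (F := fun w => ∫⁻ t : ℝ, T1 lam p s F₁ F₂ (m, t) w)
    (Measurable.lintegral_prod_left' mT)]
  unfold bil
  rw [← lintegral_add_left Measurable.of_discrete]
  apply lintegral_congr; intro m₁
  rw [← add_mul]
  have e : ∀ t' : ℝ, ∫⁻ t : ℝ, T1 lam p s F₁ F₂ (m, t) (m₁, t')
      = (K4 lam p m m₁ + th lam p m) * (b₁ (m₁, t') * ∫⁻ t, b₂ (m - m₁, t)) := by
    intro t'
    show ∫⁻ t : ℝ, (K4 lam p m m₁ + th lam p m) * (b₁ (m₁, t') * b₂ (m - m₁, t - t')) = _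
    rw [lintegral_const_mul _ (by fun_prop), lintegral_const_mul _ (by fun_prop),
      TI_volume.right (fun t => b₂ (m - m₁, t)) (by fun_prop) t']
  simp_rw [e]
  rw [lintegral_const_mul _ (by fun_prop), lintegral_mul_const _ (by fun_prop)]

/-- The remaining part is bounded by the `Y^s` norms alone, by Cauchy–Schwarz over the lattice. -/
lemma Y2_TT (hl : 1 ≤ lam) (h0 : 0 ≤ p) (h4 : p ≤ 1 / 4) {F₁ F₂ : ℤ × ℝ → ℝ≥0∞}
    (h1 : Measurable F₁) (h2 : Measurable F₂) :
    Y2 lam (TT lam p s F₁ F₂) ≤ 4 * (136 + 17) * (Y2 lam (bY lam s F₁) * Y2 lam (bY lam s F₂)) := by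
  unfold Y2
  simp_rw [TT_int h1 h2]
  exact N2_add' Measurable.of_discrete Measurable.of_discrete
    (bil_out (TI_nuZ lam) (measurable_K4 lam p) Measurable.of_discrete Measurable.of_discrete
      (bound_K4 hl h0 h4))
    (bil_ker_out (TI_nuZ lam) Measurable.of_discrete Measurable.of_discrete Measurable.of_discrete
      (N2_th hl h0 h4))
end

/-! ### Conclusion -/

lemma le_of_sq_le {a b M : ℝ≥0∞} (h : a ^ 2 ≤ M * b ^ 2) : a ≤ M ^ (1 / 2 : ℝ) * b := by
  rw [← half_sq M, ← mul_pow] at h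
  by_contra! h'
  exact absurd h (not_le.2 (ENNReal.pow_right_strictMono two_ne_zero h'))

/-- Constant in the bound of the squared norms. -/
def CM (j : ℕ) (p : ℝ) : ℝ≥0∞ :=
  (3 * E (j * (4 * j + 2))) ^ 2 * (E (cA j) ^ 2 * (CH p * (E (2 * (j * (4 * j + 2))) *
    E (2 * (j * (4 * j + 2)))))) +
  E (cA j) ^ 2 * (4 * (4 * (IJ (1 + p / 2) + 2) * (CH p * (E (2 * (j * (4 * j + 2))) *
    E (2 * (j * (4 * j + 2))))) + 4 * (136 + 17)))

lemma CM_ne_top (j : ℕ) {p : ℝ} (hp : 0 < p) : CM j p ≠ ∞ := by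
  have h1 := CH_ne_top hp
  have h2 := (IJ_lt (show (1 : ℝ) < 1 + p / 2 by linarith)).ne
  have h3 := E_ne_top
  unfold CM
  have := h3 (j * (4 * j + 2))
  have := h3 (cA j)
  have := h3 (2 * (j * (4 * j + 2)))
  finiteness

section
variable {j : ℕ} {lam s : ℝ}

/-- Both norms of the inputs that enter `HH_bound` are controlled by the `Z^s` norm. -/
lemma input_bound (hj : 2 ≤ j) (hl : 1 ≤ lam) (P : Par j (1 / (2 * j)) s (s / j + 1))
    {f : ℤ → ℝ → ℝ≥0∞} (hf : Measurable (Function.uncurry f)) (hf0 : ∀ t, f 0 t = 0) :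
    N2 (nu lam) (aX j lam s (Function.uncurry f)) + Y2 lam (bY lam s (Function.uncurry f))
      ≤ E (2 * (j * (4 * j + 2))) * Zn j lam s f ^ 2 := by
  have h1 : N2 (nu lam) (aX j lam s (Function.uncurry f)) ≤ _ := le_XSn hj hl P hf hf0
  have h2 : Yn lam s f ^ 2 = Y2 lam (bY lam s (Function.uncurry f)) := Yn_sq f
  have h3 : (1 : ℝ≥0∞) ≤ E (2 * (j * (4 * j + 2))) := by
    rw [← E_zero]; exact E_mono (by positivity)
  rw [← h2]
  calc _ ≤ E (2 * (j * (4 * j + 2))) * XSn j lam s f ^ 2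
        + E (2 * (j * (4 * j + 2))) * Yn lam s f ^ 2 := by
        gcongr; exact le_mul_of_one_le_left (by positivity) h3
    _ = E (2 * (j * (4 * j + 2))) * (XSn j lam s f ^ 2 + Yn lam s f ^ 2) := by ring
    _ ≤ _ := by
        gcongr; unfold Zn; rw [add_sq']; exact le_add_right le_rfl

/-- The two parts of the bilinear estimate, for the squares of the norms. -/
lemma squares_bound (hj : 2 ≤ j) (hl : 1 ≤ lam) (P : Par j (1 / (2 * j)) s (s / j + 1))
    {f₁ f₂ : ℤ → ℝ → ℝ≥0∞} (h1 : Measurable (Function.uncurry f₁))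
    (h2 : Measurable (Function.uncurry f₂)) (h10 : ∀ t, f₁ 0 t = 0) (h20 : ∀ t, f₂ 0 t = 0)
    {g : ℤ → ℝ → ℝ≥0∞} (hg : ∀ m t, g m t = fac j lam (m, t) *
      conv0 lam (Function.uncurry f₁) (Function.uncurry f₂) (m, t)) :
    XSn j lam s g ^ 2 ≤ CM j (1 / (2 * j)) * (Zn j lam s f₁ * Zn j lam s f₂) ^ 2 ∧
    Yn lam s g ^ 2 ≤ CM j (1 / (2 * j)) * (Zn j lam s f₁ * Zn j lam s f₂) ^ 2 := by
  set p : ℝ := 1 / (2 * j) with hp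
  have p0 : 0 < p := P.p_pos
  have p4 : p ≤ 1 / 4 := P.p_le
  set F₁ := Function.uncurry f₁
  set F₂ := Function.uncurry f₂
  set e := E (2 * ((j : ℝ) * (4 * j + 2))) with he
  set Z₁ := Zn j lam s f₁
  set Z₂ := Zn j lam s f₂
  set H := HH j lam p (aX j lam s F₁) (bY lam s F₁) (aX j lam s F₂) (bY lam s F₂) with hH
  have mH : Measurable H := measurable_HH (measurable_aX h1) (measurable_bY h1) (measurable_aX h2)
    (measurable_bY h2)
  have i1 := input_bound hj hl P h1 h10
  have i2 := input_bound hj hl P h2 h20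
  have bH : N2 (nu lam) H ≤ CH p * (e * e) * (Z₁ * Z₂) ^ 2 := by
    calc _ ≤ _ := HH_bound (by omega) hl P.hp p0.le p4 (measurable_aX h1) (measurable_bY h1)
          (measurable_aX h2) (measurable_bY h2)
      _ ≤ CH p * ((e * Z₁ ^ 2) * (e * Z₂ ^ 2)) := by gcongr
      _ = _ := by ring
  constructor
  · have hX : XSn j lam s g ≤ 3 * E (j * (4 * j + 2)) *
        L2L lam (fun m t => E (cA j) * H (m, t)) := by
      refine (XSn_le hj P g).trans ?_
      gcongr
      apply L2L_mono; intro m t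
      rw [hg]
      exact X_bound hl P h1 h2 h10 h20 (m, t)
    rw [L2L_mul (E_ne_top _)] at hX
    have hL : L2L lam (fun m t => H (m, t)) ^ 2 = N2 (nu lam) H := L2L_sq mH
    calc _ ≤ _ := pow_le_pow_left' hX 2
      _ = (3 * E (j * (4 * j + 2))) ^ 2 * (E (cA j) ^ 2 * N2 (nu lam) H) := by
          rw [mul_pow, mul_pow _ (L2L _ _), hL]
      _ ≤ (3 * E (j * (4 * j + 2))) ^ 2 * (E (cA j) ^ 2 * (CH p * (e * e) * (Z₁ * Z₂) ^ 2)) := by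
          gcongr
      _ = ((3 * E (j * (4 * j + 2))) ^ 2 * (E (cA j) ^ 2 * (CH p * (e * e)))) * (Z₁ * Z₂) ^ 2 := by
          ring
      _ ≤ _ := by
          unfold CM; gcongr; exact le_add_right le_rfl
  · have bT : Y2 lam (TT lam p s F₁ F₂) ≤ 4 * (136 + 17) * (Z₁ * Z₂) ^ 2 := by
      refine (Y2_TT hl p0.le p4 h1 h2).trans ?_
      have y1 : Y2 lam (bY lam s F₁) ≤ Z₁ ^ 2 := by
        rw [← show Yn lam s f₁ ^ 2 = Y2 lam (bY lam s F₁) from Yn_sq f₁]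
        exact pow_le_pow_left' (le_add_left le_rfl) 2
      have y2 : Y2 lam (bY lam s F₂) ≤ Z₂ ^ 2 := by
        rw [← show Yn lam s f₂ ^ 2 = Y2 lam (bY lam s F₂) from Yn_sq f₂]
        exact pow_le_pow_left' (le_add_left le_rfl) 2
      rw [mul_pow Z₁]
      gcongr
    have mr : Measurable fun z => rho j lam p z * H z := measurable_rho.mul mH
    calc Yn lam s g ^ 2 = _ := Yn_sq g
      _ ≤ Y2 lam (fun z => E (cA j) * (rho j lam p z * H z + TT lam p s F₁ F₂ z)) := by
          apply Y2_mono; intro z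
          show E (s * lX lam z.1) * g z.1 z.2 ≤ _
          rw [hg]
          exact Y_bound hl P h1 h2 h10 h20 z
      _ = E (cA j) ^ 2 * Y2 lam (fun z => rho j lam p z * H z + TT lam p s F₁ F₂ z) :=
          Y2_mul (E_ne_top _)
      _ ≤ E (cA j) ^ 2 * (4 * (4 * (IJ (1 + p / 2) + 2) * (CH p * (e * e) * (Z₁ * Z₂) ^ 2)
            + 4 * (136 + 17) * (Z₁ * Z₂) ^ 2)) := by
          gcongr
          refine (Y2_add mr).trans ?_
          gcongr
          refine (Y2_rho mH).trans ?_
          gcongr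
      _ = (E (cA j) ^ 2 * (4 * (4 * (IJ (1 + p / 2) + 2) * (CH p * (e * e)) + 4 * (136 + 17))))
            * (Z₁ * Z₂) ^ 2 := by ring
      _ ≤ _ := by
          unfold CM; gcongr; exact le_add_left le_rfl
end

/-- **Lemma 3.3 (full bilinear estimate):** with
`g(k,τ) = |k|⟨σ⟩^{−1}(f₁∗f₂)(k,τ)` (the modulus of the space–time Fourier transform of
`Λ^{−1}∂_x(u₁u₂)`), one has `‖g‖_{Z^s} ≤ C‖f₁‖_{Z^s}‖f₂‖_{Z^s}` with `C` independent of `λ`. -/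
theorem stmt_16 (j : ℕ) (hj : 2 ≤ j) (s : ℝ)
    (hs₁ : -(j : ℝ) + 1 / 2 ≤ s) (hs₂ : s ≤ -(j : ℝ) / 2) :
    ∃ C : ℝ, 0 < C ∧ ∀ lam : ℝ, 1 ≤ lam → ∀ f₁ f₂ : ℤ → ℝ → ℝ≥0∞,
      Measurable (Function.uncurry f₁) → Measurable (Function.uncurry f₂) →
      (∀ τ, f₁ 0 τ = 0) → (∀ τ, f₂ 0 τ = 0) →
      Zn j lam s (fun m τ =>
          ENNReal.ofReal (|(m : ℝ) / lam| * (jap (sigL j lam m τ))⁻¹) *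
            convL lam f₁ f₂ m τ) ≤
        ENNReal.ofReal C * Zn j lam s f₁ * Zn j lam s f₂ := by
  have P := par_of j hj s hs₁ hs₂
  set M := 2 * CM j (1 / (2 * j)) ^ (1 / 2 : ℝ) with hM
  have hMt : M ≠ ∞ := by
    have := CM_ne_top j P.p_pos
    exact ENNReal.mul_ne_top (by norm_num) (ENNReal.rpow_ne_top_of_nonneg (by norm_num) this)
  -- Adding one makes the constant positive.
  refine ⟨M.toReal + 1, by positivity, ?_⟩
  intro lam hl f₁ f₂ h1 h2 h10 h20
  obtain ⟨hX, hY⟩ := squares_bound hj hl P h1 h2 h10 h20 (g := fun m τ =>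
    ENNReal.ofReal (|(m : ℝ) / lam| * (jap (sigL j lam m τ))⁻¹) * convL lam f₁ f₂ m τ)
    (by intro m t; rw [convL_eq h1 h2 h10 h20]; rfl)
  have hC : M ≤ ENNReal.ofReal (M.toReal + 1) := by
    rw [← ENNReal.ofReal_toReal hMt, ENNReal.toReal_ofReal ENNReal.toReal_nonneg]
    exact ENNReal.ofReal_le_ofReal (by linarith)
  calc _ ≤ CM j (1 / (2 * j)) ^ (1 / 2 : ℝ) * (Zn j lam s f₁ * Zn j lam s f₂)
        + CM j (1 / (2 * j)) ^ (1 / 2 : ℝ) * (Zn j lam s f₁ * Zn j lam s f₂) :=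
        add_le_add (le_of_sq_le hX) (le_of_sq_le hY)
    _ = M * (Zn j lam s f₁ * Zn j lam s f₂) := by rw [hM]; ring
    _ ≤ _ := by rw [mul_assoc (ENNReal.ofReal _)]; gcongr

end
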